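/- Assume that g : U' → U has no polynomial-like restriction to a neighborhood of its postcritical set P_g, i.e. there are no topological disks V', V ⊂ U with P_g ⊂ V', V' = g⁻¹(V), closure(V') ⊂ V. Let R_g be the closure in the Riemann sphere of the set of repelling periodic points of g : U' → U. Then the compact set R_g contains a nontrivial continuum which has common points with the range U as well as with its boundary ∂U. -/

import Mathlib

open Set Function Metric Topology Filter

noncomputable section

/-- A topological disk: a (nonempty, connected) simply connected planar domain. -/
def IsTopDisk (V : Set ℂ) : Prop :=
  IsOpen V ∧ IsConnected V ∧ SimplyConnectedSpace V

/-- Critical points of `g` lying in `U'`. -/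
def critPts (g : ℂ → ℂ) (U' : Set ℂ) : Set ℂ := {z | z ∈ U' ∧ deriv g z = 0}

/-- The postcritical set of `g : U' → U`. -/
def postCrit (g : ℂ → ℂ) (U' : Set ℂ) : Set ℂ :=
  closure (⋃ n : ℕ, g^[n] '' critPts g U')

/-- `g : U' → U` is a proper map: preimages of compact subsets of `U` are compact. -/
def ProperOn (g : ℂ → ℂ) (U' U : Set ℂ) : Prop :=
  ∀ K : Set ℂ, K ⊆ U → IsCompact K → IsCompact (U' ∩ g ⁻¹' K)

/-- `g : U' → U` has degree `d`: every point of `U` has a preimage, and every point of `U`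
which is not a critical value has exactly `d` preimages in `U'`. -/
def HasDeg (g : ℂ → ℂ) (U' U : Set ℂ) (d : ℕ) : Prop :=
  (∀ w ∈ U, (U' ∩ g ⁻¹' {w}).Nonempty) ∧
  ∀ w ∈ U, w ∉ g '' critPts g U' → (U' ∩ g ⁻¹' {w}).ncard = d

/-- Standing assumptions: `U' ⊆ U` are simply connected domains in `ℂ` with `U' ≠ U`,
`g : U' → U` is a proper holomorphic map of degree `d ≥ 2`, all forward iterates of the
critical points are defined, the postcritical set is a compact subset of `U'`, and if the
postcritical set is a singleton `{c}` then `g⁻¹(c) ≠ {c}`. -/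
structure PLSetting (g : ℂ → ℂ) (U' U : Set ℂ) (d : ℕ) : Prop where
  disk' : IsTopDisk U'
  disk : IsTopDisk U
  subset : U' ⊆ U
  ne : U' ≠ U
  two_le_d : 2 ≤ d
  holo : DifferentiableOn ℂ g U'
  mapsTo : MapsTo g U' U
  proper : ProperOn g U' U
  deg : HasDeg g U' U d
  crit_orbit : ∀ c ∈ critPts g U', ∀ n : ℕ, g^[n] c ∈ U'
  postCrit_compact : IsCompact (postCrit g U')
  postCrit_subset : postCrit g U' ⊆ U'
  postCrit_singleton : ∀ c : ℂ, postCrit g U' = {c} → U' ∩ g ⁻¹' {c} ≠ {c}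

/-- Repelling periodic points of `g : U' → U`. -/
def repellingPts (g : ℂ → ℂ) (U' : Set ℂ) : Set ℂ :=
  {a | ∃ p : ℕ, 1 ≤ p ∧ (∀ n : ℕ, g^[n] a ∈ U') ∧ g^[p] a = a ∧ 1 < ‖deriv (g^[p]) a‖}

/-- `R_g`: the closure in the Riemann sphere (one-point compactification of `ℂ`) of the set
of repelling periodic points of `g : U' → U`. -/
def sphereRepClosure (g : ℂ → ℂ) (U' : Set ℂ) : Set (OnePoint ℂ) :=
  closure ((fun z : ℂ => (z : OnePoint ℂ)) '' repellingPts g U')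

/-!
On disks in `U` which miss the filled postcritical set, the inverse branches of the iterates of
`g` exist and form a normal family. Their limits are constant: a nonconstant one would make the
identity a limit as well, although the branches take values in `U' ≠ U`. Near a limit value which
lies in `U` and off the filled postcritical set, some inverse branch then maps a disk into
itself, and its fixed point is a repelling periodic point. So the pullbacks `g⁻ⁿ(Γ)` of a compact
set `Γ` accumulate, in this region, only at `R_g`.

If no continuum in `R_g` joins `U` to `∂U`, then splitting `R_g` into two compact pieces yields a
continuum `K ⊆ U` without holes, not contained in `U'`, whose interior contains `P_g` and whose
frontier misses `R_g`. For a neighborhood `V` of `K`, the frontier of `g⁻ⁿ(V)` eventually misses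
the frontier of `K`, which is connected by unicoherence of the plane. Since `K` is not contained
in `U'`, this forces `g⁻ⁿ(V) ⊆ K`, and the union of the sets `g⁻ʲ(V j)`, `j < n`, for an
increasing sequence of neighborhoods `V j` of `K` inside `V` is, once filled, the range of a
polynomial-like restriction.
-/

/-! ### Connected sets and frontiers -/

section ConnectedSets

variable {X : Type*} [TopologicalSpace X]

lemma subset_of_isPreconnected_of_disjoint_frontier {S A : Set X} (hS : IsPreconnected S)
    (hd : Disjoint S (frontier A)) (hne : (S ∩ A).Nonempty) : S ⊆ A := by
  have hcover : S ⊆ interior A ∪ (closure A)ᶜ := fun x hx ↦ by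
    by_contra! h
    rw [mem_union, not_or, notMem_compl_iff] at h
    exact disjoint_left.1 hd hx ⟨h.2, h.1⟩
  obtain ⟨x, hxS, hxA⟩ := hne
  have hxi : x ∈ interior A := (hcover hxS).resolve_right fun h ↦ h (subset_closure hxA)
  have hdisj : Disjoint (interior A) (closure A)ᶜ :=
    disjoint_compl_right_iff_subset.2 (interior_subset.trans subset_closure)
  exact (hS.subset_left_of_subset_union isOpen_interior isClosed_closure.isOpen_compl hdisj hcover
    ⟨x, hxS, hxi⟩).trans interior_subset

lemma frontier_connectedComponentIn_subset [LocallyConnectedSpace X] {V : Set X} (hV : IsOpen V)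
    (z : X) : frontier (connectedComponentIn V z) ⊆ Vᶜ := by
  intro w hw hwV
  obtain ⟨x, hxw, hxz⟩ := mem_closure_iff.1 hw.1 _ (hV.connectedComponentIn (x := w))
    (mem_connectedComponentIn hwV)
  rw [hV.connectedComponentIn.frontier_eq] at hw
  apply hw.2
  rw [connectedComponentIn_eq hxz, ← connectedComponentIn_eq hxw]
  exact mem_connectedComponentIn hwV

lemma nonempty_frontier_connectedComponentIn [PreconnectedSpace X] {V : Set X} {z : X}
    (hz : z ∈ V) (hne : V ≠ univ) : (frontier (connectedComponentIn V z)).Nonempty := by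
  refine nonempty_frontier_iff.2 ⟨⟨z, mem_connectedComponentIn hz⟩, fun h ↦ hne ?_⟩
  exact univ_subset_iff.1 (h.symm.subset.trans (connectedComponentIn_subset V z))

lemma diff_nonempty_of_isOpen_of_isCompact [T2Space X] [PreconnectedSpace X] [NoncompactSpace X]
    {N K : Set X} (hN : IsOpen N) (hne : N.Nonempty) (hK : IsCompact K) (hKN : K ⊆ N) :
    (N \ K).Nonempty := by
  by_contra! h
  obtain rfl := (sdiff_eq_empty.1 h).antisymm hKN
  exact hK.ne_univ (IsClopen.eq_univ ⟨hK.isClosed, hN⟩ hne)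

lemma exists_isClopen_separating [CompactSpace X] [T2Space X] {A B : Set X} (hA : IsClosed A)
    (hB : IsClosed B) (hAB : ∀ a ∈ A, ∀ b ∈ B, b ∉ connectedComponent a) :
    ∃ F : Set X, IsClopen F ∧ A ⊆ F ∧ Disjoint B F := by
  have hc : Continuous (ConnectedComponents.mk : X → ConnectedComponents X) :=
    ConnectedComponents.continuous_coe
  have hA' : IsClosed ((ConnectedComponents.mk : X → ConnectedComponents X) '' A) :=
    (hA.isCompact.image hc).isClosed
  have hB' : IsClosed ((ConnectedComponents.mk : X → ConnectedComponents X) '' B) :=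
    (hB.isCompact.image hc).isClosed
  have hsub : (ConnectedComponents.mk : X → ConnectedComponents X) '' A ⊆
      (ConnectedComponents.mk '' B)ᶜ := by
    rintro _ ⟨a, ha, rfl⟩ ⟨b, hb, hba⟩
    exact hAB a ha b hb (ConnectedComponents.coe_eq_coe'.1 hba)
  obtain ⟨C, hC, hAC, hCB⟩ := exists_clopen_of_closed_subset_open hA' hB'.isOpen_compl hsub
  exact ⟨_, hC.preimage hc, fun a ha ↦ hAC ⟨a, ha, rfl⟩,
    disjoint_left.2 fun b hb hbC ↦ hCB hbC ⟨b, hb, rfl⟩⟩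

end ConnectedSets

/-! ### Filling in bounded complementary components -/

section Filling

variable {X : Type*} [TopologicalSpace X] [Bornology X]

/-- The filling of a set: its union with the bounded components of its complement (a point of `K`
has empty component in `Kᶜ`). -/
def filling (K : Set X) : Set X := {z | Bornology.IsBounded (connectedComponentIn Kᶜ z)}

/-- A set is full if it contains the filling of each of its compact subsets; for open sets in the
plane this expresses the absence of holes. -/
def IsFull (V : Set X) : Prop := ∀ K ⊆ V, IsCompact K → filling K ⊆ V

lemma subset_filling (K : Set X) : K ⊆ filling K := fun z hz ↦ by
  have hempty : connectedComponentIn Kᶜ z = ∅ :=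
    connectedComponentIn_eq_empty (notMem_compl_iff.2 hz)
  simp [filling, hempty]

lemma filling_mono {K L : Set X} (h : K ⊆ L) : filling K ⊆ filling L := fun z hz ↦
  Bornology.IsBounded.subset hz (connectedComponentIn_mono z (compl_subset_compl.2 h))

lemma mem_filling_iff_of_mem_connectedComponentIn {K : Set X} {z w : X}
    (hw : w ∈ connectedComponentIn Kᶜ z) : w ∈ filling K ↔ z ∈ filling K := by
  simp only [filling, mem_ofPred_eq, connectedComponentIn_eq hw]

lemma connectedComponentIn_compl_subset_filling {K : Set X} {z : X} (hz : z ∈ filling K) :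
    connectedComponentIn Kᶜ z ⊆ filling K := fun _ hw ↦
  (mem_filling_iff_of_mem_connectedComponentIn hw).2 hz

lemma subset_filling_of_frontier_subset {K B : Set X} (hB : Bornology.IsBounded B)
    (hf : frontier B ⊆ K) : B ⊆ filling K := by
  intro z hz
  by_cases hzK : z ∈ K
  · exact subset_filling K hzK
  refine hB.subset (subset_of_isPreconnected_of_disjoint_frontier
    isPreconnected_connectedComponentIn ?_ ⟨z, mem_connectedComponentIn hzK, hz⟩)
  exact disjoint_left.2 fun x hx hxB ↦ connectedComponentIn_subset _ _ hx (hf hxB)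

lemma isOpen_filling_diff [LocallyConnectedSpace X] {K : Set X} (hK : IsClosed K) :
    IsOpen (filling K \ K) := by
  refine isOpen_iff_mem_nhds.2 fun z ⟨hz, hzK⟩ ↦ mem_of_superset
    (hK.isOpen_compl.connectedComponentIn.mem_nhds (mem_connectedComponentIn hzK)) ?_
  exact subset_sdiff.2 ⟨connectedComponentIn_compl_subset_filling hz,
    subset_compl_iff_disjoint_right.1 (connectedComponentIn_subset _ _)⟩

end Filling

section PlaneFilling

lemma isConnected_compl_closedBall {E : Type*} [NormedAddCommGroup E] [NormedSpace ℝ E]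
    (hE : 1 < Module.rank ℝ E) {R : ℝ} (hR : 0 ≤ R) : IsConnected (closedBall (0 : E) R)ᶜ := by
  have hpolar : (closedBall (0 : E) R)ᶜ =
      (fun p : ℝ × E ↦ p.1 • p.2) '' (Ioi R ×ˢ sphere (0 : E) 1) := by
    ext x
    simp only [mem_compl_iff, mem_closedBall, dist_zero_right, not_le, mem_image, mem_prod,
      mem_Ioi, mem_sphere_iff_norm, sub_zero, Prod.exists]
    constructor
    · intro hx
      have hx0 : ‖x‖ ≠ 0 := (hR.trans_lt hx).ne'
      exact ⟨‖x‖, ‖x‖⁻¹ • x, ⟨hx, by simp [norm_smul, hx0]⟩, by simp [smul_smul, hx0]⟩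
    · rintro ⟨r, u, ⟨hr, hu⟩, rfl⟩
      rw [norm_smul, hu, mul_one]
      exact hr.trans_le (le_abs_self r)
  rw [hpolar]
  exact (isConnected_Ioi.prod (isConnected_sphere hE 0 zero_le_one)).image _ (by fun_prop)

lemma not_isBounded_compl_closedBall {E : Type*} [NormedAddCommGroup E] [NormedSpace ℝ E]
    [Nontrivial E] (R : ℝ) : ¬ Bornology.IsBounded (closedBall (0 : E) R)ᶜ := fun h ↦
  NormedSpace.unbounded_univ ℝ E
    (by simpa only [union_compl_self] using (isBounded_closedBall (x := (0 : E)) (r := R)).union h)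

variable {K : Set ℂ} {z : ℂ}

lemma compl_closedBall_subset_connectedComponentIn {R : ℝ} (hR : 0 ≤ R)
    (hK : K ⊆ closedBall 0 R) (hz : z ∉ filling K) :
    (closedBall 0 R)ᶜ ⊆ connectedComponentIn Kᶜ z := by
  have hcon : IsConnected (closedBall (0 : ℂ) R)ᶜ := isConnected_compl_closedBall (by simp) hR
  obtain ⟨w, hw, hwR⟩ : ∃ w ∈ connectedComponentIn Kᶜ z, w ∉ closedBall 0 R :=
    not_subset.1 fun h ↦ hz (isBounded_closedBall.subset h)
  rw [connectedComponentIn_eq hw]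
  exact hcon.2.subset_connectedComponentIn hwR (compl_subset_compl.2 hK)

lemma connectedComponentIn_compl_eq_compl_filling (hK : Bornology.IsBounded K)
    (hz : z ∉ filling K) : connectedComponentIn Kᶜ z = (filling K)ᶜ := by
  obtain ⟨R, hR, hKR⟩ := hK.subset_closedBall_lt 0 0
  refine Subset.antisymm (fun w hw hwK ↦ hz ?_) fun w hw ↦ ?_
  · exact (mem_filling_iff_of_mem_connectedComponentIn hw).1 hwK
  · obtain ⟨v, hv⟩ := (isConnected_compl_closedBall (E := ℂ) (by simp) hR.le).nonempty
    have hvz := compl_closedBall_subset_connectedComponentIn hR.le hKR hz hv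
    have hvw := compl_closedBall_subset_connectedComponentIn hR.le hKR hw hv
    rw [connectedComponentIn_eq hvz, ← connectedComponentIn_eq hvw]
    exact mem_connectedComponentIn fun h ↦ hw (subset_filling K h)

lemma filling_subset_closedBall {R : ℝ} (hR : 0 ≤ R) (hK : K ⊆ closedBall 0 R) :
    filling K ⊆ closedBall 0 R := fun w hw ↦ by
  by_contra hwR
  have hsub : (closedBall 0 R)ᶜ ⊆ connectedComponentIn Kᶜ w :=
    (isConnected_compl_closedBall (E := ℂ) (by simp) hR).2.subset_connectedComponentIn hwR
      (compl_subset_compl.2 hK)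
  exact not_isBounded_compl_closedBall R 
    ((show Bornology.IsBounded (connectedComponentIn Kᶜ w) from hw).subset hsub)

lemma isBounded_filling (hK : Bornology.IsBounded K) : Bornology.IsBounded (filling K) := by
  obtain ⟨R, hR, hKR⟩ := hK.subset_closedBall_lt 0 0
  exact isBounded_closedBall.subset (filling_subset_closedBall hR.le hKR)

lemma not_isBounded_compl_filling (hK : Bornology.IsBounded K) :
    ¬ Bornology.IsBounded (filling K)ᶜ := by
  obtain ⟨R, hR, hKR⟩ := hK.subset_closedBall_lt 0 0
  exact fun h ↦ not_isBounded_compl_closedBall R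
    (h.subset (compl_subset_compl.2 (filling_subset_closedBall hR.le hKR)))

lemma isConnected_compl_filling (hK : Bornology.IsBounded K) : IsConnected (filling K)ᶜ := by
  obtain ⟨z, hz⟩ : ((filling K)ᶜ).Nonempty :=
    nonempty_iff_ne_empty.2 fun h ↦ not_isBounded_compl_filling hK (h ▸ Bornology.isBounded_empty)
  rw [← connectedComponentIn_compl_eq_compl_filling hK hz]
  exact isConnected_connectedComponentIn_iff.2 fun h ↦ hz (subset_filling K h)

lemma isCompact_filling (hK : IsCompact K) : IsCompact (filling K) := by
  refine isCompact_of_isClosed_isBounded ?_ (isBounded_filling hK.isBounded)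
  obtain ⟨z, hz⟩ := (isConnected_compl_filling hK.isBounded).nonempty
  rw [← isOpen_compl_iff, ← connectedComponentIn_compl_eq_compl_filling hK.isBounded hz]
  exact hK.isClosed.isOpen_compl.connectedComponentIn

lemma filling_filling (hK : Bornology.IsBounded K) : filling (filling K) = filling K := by
  refine Subset.antisymm (fun z hz ↦ ?_) (subset_filling _)
  by_contra hzK
  have hcomp := (isConnected_compl_filling hK).2.connectedComponentIn hzK
  exact not_isBounded_compl_filling hK (hcomp ▸ hz)

lemma filling_empty : filling (∅ : Set ℂ) = ∅ :=
  subset_empty_iff.1 fun z hz ↦ NormedSpace.unbounded_univ ℝ ℂ <| by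
    simpa only [filling, mem_ofPred_eq, compl_empty, isPreconnected_univ.connectedComponentIn
      (mem_univ z)] using hz

lemma isConnected_filling (hK : IsCompact K) (hc : IsConnected K) : IsConnected (filling K) := by
  obtain ⟨x, hx⟩ := hc.nonempty
  refine ⟨⟨x, subset_filling K hx⟩, isPreconnected_of_forall x fun y hy ↦ ?_⟩
  by_cases hyK : y ∈ K
  · exact ⟨K, subset_filling K, hx, hyK, hc.2⟩
  have hne : Kᶜ ≠ univ := compl_ne_univ.2 ⟨x, hx⟩
  obtain ⟨w, hw⟩ := nonempty_frontier_connectedComponentIn hyK hne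
  have hwK : w ∈ K :=
    not_not.1 (frontier_connectedComponentIn_subset hK.isClosed.isOpen_compl y hw)
  refine ⟨K ∪ closure (connectedComponentIn Kᶜ y), union_subset (subset_filling K) ?_, Or.inl hx,
    Or.inr (subset_closure (mem_connectedComponentIn hyK)), ?_⟩
  · exact closure_minimal (connectedComponentIn_compl_subset_filling hy)
      (isCompact_filling hK).isClosed
  · exact hc.2.union w hwK hw.1 isPreconnected_connectedComponentIn.closure

lemma frontier_filling_subset (hK : IsCompact K) : frontier (filling K) ⊆ frontier K := by
  intro z hz
  have hzK : z ∈ K := by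
    by_contra h
    exact hz.2 (interior_maximal sdiff_subset (isOpen_filling_diff hK.isClosed)
      ⟨(isCompact_filling hK).isClosed.frontier_subset hz, h⟩)
  exact ⟨subset_closure hzK, fun h ↦ hz.2 (interior_mono (subset_filling K) h)⟩

lemma mem_interior_image_filling {g : ℂ → ℂ} {W : Set ℂ} (hg : DifferentiableOn ℂ g W)
    (hK : IsCompact K) (hne : K.Nonempty) (hKW : filling K ⊆ W) (hz : z ∈ filling K \ K)
    (hgz : g z ∉ g '' K) : g z ∈ interior (g '' filling K) := by
  -- If `g` is not open on the hole, it is constant there, and the constant is taken on `K`.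
  set C := connectedComponentIn Kᶜ z
  have hCo : IsOpen C := hK.isClosed.isOpen_compl.connectedComponentIn
  have hzC : z ∈ C := mem_connectedComponentIn hz.2
  have hCK : C ⊆ filling K := connectedComponentIn_compl_subset_filling hz.1
  rcases ((hg.mono (hCK.trans hKW)).analyticOnNhd hCo).is_constant_or_isOpen
    isPreconnected_connectedComponentIn with ⟨w, hw⟩ | hopen
  · exfalso
    obtain ⟨p, hp⟩ := nonempty_frontier_connectedComponentIn (V := Kᶜ) hz.2 (compl_ne_univ.2 hne)
    have hpK : p ∈ K :=
      not_not.1 (frontier_connectedComponentIn_subset hK.isClosed.isOpen_compl z hp)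
    have hCcl : closure C ⊆ filling K := closure_minimal hCK (isCompact_filling hK).isClosed
    have hcont : ContinuousOn g (closure C) := hg.continuousOn.mono (hCcl.trans hKW)
    have hgp : g p ∈ closure {w} := closure_mono (by rintro _ ⟨t, ht, rfl⟩; exact hw t ht)
      (hcont.image_closure (mem_image_of_mem g hp.1))
    rw [closure_singleton, mem_singleton_iff] at hgp
    exact hgz ⟨p, hpK, hgp.trans (hw z hzC).symm⟩
  · exact interior_maximal (image_mono hCK) (hopen _ Subset.rfl hCo) (mem_image_of_mem g hzC)

lemma image_filling_subset {g : ℂ → ℂ} {W : Set ℂ} (hg : DifferentiableOn ℂ g W)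
    (hK : IsCompact K) (hKW : filling K ⊆ W) : g '' filling K ⊆ filling (g '' K) := by
  rcases K.eq_empty_or_nonempty with rfl | hne
  · simp [filling_empty]
  have hgc : ContinuousOn g (filling K) := hg.continuousOn.mono hKW
  have hgK : IsCompact (g '' K) := hK.image_of_continuousOn (hgc.mono (subset_filling K))
  have hgF : IsCompact (g '' filling K) := (isCompact_filling hK).image_of_continuousOn hgc
  rintro _ ⟨z, hz, rfl⟩
  by_contra hgz
  refine not_isBounded_compl_filling hgK.isBounded (hgF.isBounded.subset
    (subset_of_isPreconnected_of_disjoint_frontier (isConnected_compl_filling hgK.isBounded).2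
      (disjoint_left.2 ?_) ⟨g z, hgz, mem_image_of_mem g hz⟩))
  rintro x hx hxf
  obtain ⟨y, hy, rfl⟩ := hgF.isClosed.frontier_subset hxf
  have hgy : g y ∉ g '' K := fun h ↦ hx (subset_filling _ h)
  exact hxf.2 (mem_interior_image_filling hg hK hne hKW
    ⟨hy, fun h ↦ hgy (mem_image_of_mem g h)⟩ hgy)

end PlaneFilling

/-! ### Continuous logarithms -/

section Logarithms

variable {α : Type*} [TopologicalSpace α] {f h k : α → ℂ} {S T : Set α} {x y : α}

/-- `f` has a continuous logarithm on `S`. -/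
def HasLogOn (f : α → ℂ) (S : Set α) : Prop :=
  ∃ L : α → ℂ, ContinuousOn L S ∧ ∀ z ∈ S, Complex.exp (L z) = f z

lemma HasLogOn.ne_zero (hf : HasLogOn f S) (hx : x ∈ S) : f x ≠ 0 := by
  obtain ⟨L, -, hL⟩ := hf
  exact hL x hx ▸ Complex.exp_ne_zero _

lemma HasLogOn.exists_apply_eq_log (hf : HasLogOn f S) (hx : x ∈ S) :
    ∃ L : α → ℂ, ContinuousOn L S ∧ (∀ z ∈ S, Complex.exp (L z) = f z) ∧
      L x = Complex.log (f x) := by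
  have hfx := hf.ne_zero hx
  obtain ⟨L, hL, hLf⟩ := hf
  refine ⟨fun z ↦ L z + (Complex.log (f x) - L x), by fun_prop, fun z hz ↦ ?_, by ring⟩
  rw [Complex.exp_add, Complex.exp_sub, Complex.exp_log hfx, hLf z hz, hLf x hx, div_self hfx,
    mul_one]

lemma eqOn_of_exp_eqOn (hS : IsPreconnected S) (hh : ContinuousOn h S) (hk : ContinuousOn k S)
    (he : ∀ z ∈ S, Complex.exp (h z) = Complex.exp (k z)) (hx : x ∈ S) (hxe : h x = k x) :
    EqOn h k S :=
  Complex.isCoveringMap_exp.eqOn_of_comp_eqOn hS hh hk (fun z hz ↦ Subtype.ext (he z hz)) hx hxe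

lemma sub_eq_sub_of_exp_eqOn (hS : IsPreconnected S) (hh : ContinuousOn h S)
    (hk : ContinuousOn k S) (he : ∀ z ∈ S, Complex.exp (h z) = Complex.exp (k z))
    (hx : x ∈ S) (hy : y ∈ S) : h x - k x = h y - k y := by
  have hxy : h x = k x + (h y - k y) :=
    eqOn_of_exp_eqOn (k := fun z ↦ k z + (h y - k y)) hS hh (by fun_prop)
      (fun z hz ↦ by
        rw [Complex.exp_add, Complex.exp_sub, he y hy, div_self (Complex.exp_ne_zero _), mul_one,
          he z hz])
      hy (by ring) hx
  rw [hxy, add_sub_cancel_left]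

end Logarithms

section Unicoherence

lemma hasLogOn_univ {f : ℂ → ℂ} (hf : Continuous f) (h0 : ∀ z, f z ≠ 0) : HasLogOn f univ := by
  have : ContractibleSpace (univ : Set ℂ) :=
    (convex_univ (𝕜 := ℝ) (E := ℂ)).contractibleSpace univ_nonempty
  have hsc : IsSimplyConnected (univ : Set ℂ) :=
    show SimplyConnectedSpace (univ : Set ℂ) from inferInstance
  obtain ⟨L, hL, he⟩ := Complex.exists_continuousOn_eqOn_exp_comp hsc isOpen_univ
    hf.continuousOn (by rintro ⟨z, -, hz⟩; exact h0 z hz)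
  exact ⟨L, hL, he⟩

variable {A B : Set ℂ}

/-- A Mayer-Vietoris argument: the exponentials glue to a nonvanishing function on the plane, whose
logarithm differs from each of `a` and `b` by a constant. -/
lemma sub_eq_sub_of_exp_eqOn_inter
    (hAB : IsOpen A ∧ IsOpen B ∨ IsClosed A ∧ IsClosed B) (hA : IsPreconnected A)
    (hB : IsPreconnected B) (hU : A ∪ B = univ) {a b : ℂ → ℂ} (ha : ContinuousOn a A)
    (hb : ContinuousOn b B) (hab : ∀ z ∈ A ∩ B, Complex.exp (a z) = Complex.exp (b z)) {x y : ℂ}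
    (hx : x ∈ A ∩ B) (hy : y ∈ A ∩ B) : a x - b x = a y - b y := by
  classical
  set f : ℂ → ℂ := A.piecewise (fun z ↦ Complex.exp (a z)) fun z ↦ Complex.exp (b z)
  have hfA : EqOn f (fun z ↦ Complex.exp (a z)) A := piecewise_eqOn A _ _
  have hfB : EqOn f (fun z ↦ Complex.exp (b z)) B := fun z hz ↦ by
    by_cases hzA : z ∈ A
    · exact (hfA hzA).trans (hab z ⟨hzA, hz⟩)
    · exact piecewise_eq_of_notMem A _ _ hzA
  have hfcA : ContinuousOn f A := ha.cexp.congr hfA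
  have hfcB : ContinuousOn f B := hb.cexp.congr hfB
  have hfc : Continuous f := by
    rw [← continuousOn_univ, ← hU]
    rcases hAB with ⟨hAo, hBo⟩ | ⟨hAc, hBc⟩
    · exact hfcA.union_of_isOpen hfcB hAo hBo
    · exact hfcA.union_of_isClosed hfcB hAc hBc
  have hf0 : ∀ z, f z ≠ 0 := fun z ↦ by
    rcases hU.symm.subset (mem_univ z) with hz | hz
    · exact hfA hz ▸ Complex.exp_ne_zero _
    · exact hfB hz ▸ Complex.exp_ne_zero _
  obtain ⟨L, hL, hLf⟩ := hasLogOn_univ hfc hf0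
  have hLa := sub_eq_sub_of_exp_eqOn hA (hL.mono (subset_univ A)) ha
    (fun z hz ↦ (hLf z (mem_univ z)).trans (hfA hz)) hx.1 hy.1
  have hLb := sub_eq_sub_of_exp_eqOn hB (hL.mono (subset_univ B)) hb
    (fun z hz ↦ (hLf z (mem_univ z)).trans (hfB hz)) hx.2 hy.2
  linear_combination hLb - hLa

lemma isPreconnected_inter_of_isClosed (hA : IsClosed A) (hB : IsClosed B)
    (hAc : IsPreconnected A) (hBc : IsPreconnected B) (hU : A ∪ B = univ) :
    IsPreconnected (A ∩ B) := by
  rw [isPreconnected_closed_iff]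
  rintro F₀ F₁ h₀ h₁ hsub ⟨x₀, hx₀, hxF₀⟩ ⟨x₁, hx₁, hxF₁⟩
  by_contra hne
  have hd : Disjoint (A ∩ B ∩ F₀) (A ∩ B ∩ F₁) :=
    disjoint_left.2 fun x hx hx' ↦ hne ⟨x, hx.1, hx.2, hx'.2⟩
  obtain ⟨l, hl₀, hl₁, -⟩ := exists_continuous_zero_one_of_isClosed
    ((hA.inter hB).inter h₀) ((hA.inter hB).inter h₁) hd
  have hexp : ∀ z ∈ A ∩ B, Complex.exp (l z * (2 * Real.pi * Complex.I)) = Complex.exp 0 := by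
    intro z hz
    rcases hsub hz with h | h
    · simp [hl₀ ⟨hz, h⟩]
    · simp [hl₁ ⟨hz, h⟩, Complex.exp_two_pi_mul_I]
  have key := sub_eq_sub_of_exp_eqOn_inter (b := fun _ ↦ 0) (Or.inr ⟨hA, hB⟩) hAc hBc hU
    (by fun_prop) continuousOn_const hexp hx₀ hx₁
  rw [hl₀ ⟨hx₀, hxF₀⟩, hl₁ ⟨hx₁, hxF₁⟩] at key
  exact Complex.two_pi_I_ne_zero (by simpa using key.symm)

lemma isPreconnected_inter_of_isOpen (hA : IsOpen A) (hB : IsOpen B)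
    (hAc : IsPreconnected A) (hBc : IsPreconnected B) (hU : A ∪ B = univ) :
    IsPreconnected (A ∩ B) := by
  rintro G₀ G₁ h₀ h₁ hsub ⟨x₀, hx₀, hxG₀⟩ ⟨x₁, hx₁, hxG₁⟩
  by_contra hne
  have hd : Disjoint Bᶜ Aᶜ := disjoint_compl_left_iff_subset.2 fun z hz ↦
    (hU.symm.subset (mem_univ z)).resolve_left hz
  obtain ⟨l, hl₀, hl₁, -⟩ := exists_continuous_zero_one_of_isClosed
    hB.isClosed_compl hA.isClosed_compl hd
  classical
  set G : Set ℂ := A ∩ B ∩ G₁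
  have hfr : ∀ z ∈ frontier G, z ∉ A ∩ B := by
    intro z hz hzAB
    rw [((hA.inter hB).inter h₁).frontier_eq] at hz
    have hz₀ : z ∈ G₀ := (hsub hzAB).resolve_right fun h ↦ hz.2 ⟨hzAB, h⟩
    obtain ⟨y, hy₀, hy₁⟩ := mem_closure_iff.1 hz.1 _ h₀ hz₀
    exact hne ⟨y, hy₁.1, hy₀, hy₁.2⟩
  let e : ℂ → ℂ := fun z ↦ l z * (2 * Real.pi * Complex.I)
  have he : Continuous e := by fun_prop
  let a : ℂ → ℂ := fun z ↦ if z ∈ G then e z else 0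
  let b : ℂ → ℂ := fun z ↦ if z ∈ G then e z else 2 * Real.pi * Complex.I
  have ha : ContinuousOn a A := he.continuousOn.if
    (fun z hz ↦ by simp [e, hl₀ fun hB ↦ hfr z hz.2 ⟨hz.1, hB⟩]) continuousOn_const
  have hb : ContinuousOn b B := he.continuousOn.if
    (fun z hz ↦ by simp [e, hl₁ fun hA ↦ hfr z hz.2 ⟨hA, hz.1⟩]) continuousOn_const
  have hexp : ∀ z ∈ A ∩ B, Complex.exp (a z) = Complex.exp (b z) := by
    intro z _
    by_cases hz : z ∈ G <;> simp [a, b, hz, Complex.exp_two_pi_mul_I]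
  have key := sub_eq_sub_of_exp_eqOn_inter (Or.inl ⟨hA, hB⟩) hAc hBc hU ha hb hexp hx₀ hx₁
  have hx₀G : x₀ ∉ G := fun h ↦ hne ⟨x₀, hx₀, hxG₀, h.2⟩
  have hx₁G : x₁ ∈ G := ⟨hx₁, hxG₁⟩
  simp only [a, b, if_neg hx₀G, if_pos hx₁G, zero_sub, sub_self, neg_eq_zero] at key
  exact Complex.two_pi_I_ne_zero key

end Unicoherence

/-! ### Full sets and logarithms of `z - a` -/

section FullLogarithms

variable {K S V : Set ℂ} {a b p : ℂ}

lemma not_hasLogOn_sphere {R : ℝ} (hR : 0 < R) : ¬ HasLogOn (· - p) (sphere p R) := by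
  rintro ⟨M, hM, hMp⟩
  let c : ℝ → ℂ := fun t ↦ p + R * Complex.exp (t * Complex.I)
  have hc : Continuous c := by fun_prop
  have hcR : ∀ t, c t ∈ sphere p R := fun t ↦ by
    simp [c, Complex.norm_exp_ofReal_mul_I, abs_of_pos hR]
  have key := sub_eq_sub_of_exp_eqOn isPreconnected_univ (h := fun t ↦ M (c t))
    (k := fun t : ℝ ↦ (Real.log R : ℂ) + t * Complex.I)
    (hM.comp hc.continuousOn fun t _ ↦ hcR t) (by fun_prop)
    (fun t _ ↦ by
      rw [hMp _ (hcR t), Complex.exp_add, Complex.ofReal_log hR.le,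
        Complex.exp_log (by exact_mod_cast hR.ne')]
      exact add_sub_cancel_left _ _)
    (mem_univ 0) (mem_univ (2 * Real.pi))
  have hclosed : c 0 = c (2 * Real.pi) := by simp [c, Complex.exp_two_pi_mul_I]
  simp only [hclosed] at key
  exact Complex.two_pi_I_ne_zero (by simpa using (sub_right_injective key).symm)

lemma isFull_of_hasLogOn (hlog : ∀ p ∉ V, HasLogOn (· - p) V) : IsFull V := by
  intro K hKV hK p hp
  by_contra hpV
  obtain ⟨L, hL, hLp⟩ := hlog p hpV
  obtain ⟨T, hT⟩ := ContinuousMap.exists_restrict_eq hK.isClosed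
    (⟨K.domRestrict L, continuousOn_iff_continuous_domRestrict.1 (hL.mono hKV)⟩ : C(K, ℂ))
  have hTL : ∀ x ∈ K, T x = L x := fun x hx ↦ congrArg (fun F : C(K, ℂ) ↦ F ⟨x, hx⟩) hT
  set B := connectedComponentIn Kᶜ p
  have hpB : p ∈ B := mem_connectedComponentIn fun h ↦ hpV (hKV h)
  have hfr : frontier B ⊆ K :=
    compl_compl K ▸ frontier_connectedComponentIn_subset hK.isClosed.isOpen_compl p
  classical
  -- Replacing `z - p` by `exp T` inside the hole removes its zero without changing it outside.
  let f : ℂ → ℂ := fun z ↦ if z ∈ B then Complex.exp (T z) else z - p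
  have hf : Continuous f := by
    refine Continuous.if (fun z hz ↦ ?_) (by fun_prop) (by fun_prop)
    rw [hTL z (hfr hz), hLp z (hKV (hfr hz))]
  have hf0 : ∀ z, f z ≠ 0 := fun z ↦ by
    by_cases hz : z ∈ B
    · simp [f, hz]
    · simpa [f, hz, sub_eq_zero] using (ne_of_mem_of_not_mem hpB hz).symm
  obtain ⟨M, hM, hMf⟩ := hasLogOn_univ hf hf0
  obtain ⟨R, hR0, hR⟩ := Bornology.IsBounded.subset_ball_lt (s := B) hp 0 p
  refine not_hasLogOn_sphere (p := p) hR0 ⟨M, hM.mono (subset_univ _), fun z hz ↦ ?_⟩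
  have hzB : z ∉ B := fun h ↦ (mem_ball.1 (hR h)).ne hz
  rw [hMf z (mem_univ z)]
  exact if_neg hzB

lemma isFull_of_isSimplyConnected (ho : IsOpen V) (hV : IsSimplyConnected V) : IsFull V :=
  isFull_of_hasLogOn fun p hp ↦ Complex.exists_continuousOn_eqOn_exp_comp hV ho (by fun_prop)
    fun ⟨_, hz, hzp⟩ ↦ hp (sub_eq_zero.1 hzp ▸ hz)

lemma HasLogOn.sub_of_norm_lt (h : HasLogOn (· - a) S) (hd : ∀ z ∈ S, ‖a - b‖ < ‖z - a‖) :
    HasLogOn (· - b) S := by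
  have hne : ∀ z ∈ S, z - a ≠ 0 := fun z hz ↦ h.ne_zero hz
  obtain ⟨L, hL, hLa⟩ := h
  have hsl : ∀ z ∈ S, 1 + (a - b) / (z - a) ∈ Complex.slitPlane := fun z hz ↦ by
    apply Complex.mem_slitPlane_of_norm_lt_one
    rw [norm_div, div_lt_one (norm_pos_iff.2 (hne z hz))]
    exact hd z hz
  refine ⟨fun z ↦ L z + Complex.log (1 + (a - b) / (z - a)), ?_, fun z hz ↦ ?_⟩
  · exact hL.add (ContinuousOn.clog
      (continuousOn_const.add (continuousOn_const.div (by fun_prop) hne)) hsl)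
  · have := hne z hz
    rw [Complex.exp_add, hLa z hz, Complex.exp_log (Complex.slitPlane_ne_zero (hsl z hz))]
    field_simp
    ring

lemma hasLogOn_sub_of_norm_lt (hb : ∀ z ∈ S, ‖z‖ < ‖b‖) : HasLogOn (· - b) S := by
  rcases S.eq_empty_or_nonempty with rfl | ⟨z₀, hz₀⟩
  · exact ⟨0, continuousOn_empty _, by simp⟩
  have hb0 : b ≠ 0 := norm_pos_iff.1 ((norm_nonneg z₀).trans_lt (hb z₀ hz₀))
  have hsl : ∀ z ∈ S, 1 + -z / b ∈ Complex.slitPlane := fun z hz ↦ by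
    apply Complex.mem_slitPlane_of_norm_lt_one
    rw [norm_div, norm_neg, div_lt_one (norm_pos_iff.2 hb0)]
    exact hb z hz
  refine ⟨fun z ↦ Complex.log (-b) + Complex.log (1 + -z / b),
    continuousOn_const.add (ContinuousOn.clog (by fun_prop) hsl), fun z hz ↦ ?_⟩
  rw [Complex.exp_add, Complex.exp_log (neg_ne_zero.2 hb0),
    Complex.exp_log (Complex.slitPlane_ne_zero (hsl z hz))]
  field_simp
  ring

lemma eventually_hasLogOn_sub_iff (hS : IsClosed S) (ha : a ∉ S) :
    ∀ᶠ b in 𝓝 a, HasLogOn (· - a) S ↔ HasLogOn (· - b) S := by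
  obtain ⟨r, hr, hball⟩ := Metric.isOpen_iff.1 hS.isOpen_compl a ha
  filter_upwards [ball_mem_nhds a (half_pos hr)] with b hb
  rw [mem_ball, dist_comm, dist_eq_norm] at hb
  have hfar : ∀ z ∈ S, r ≤ ‖z - a‖ := fun z hz ↦ by
    by_contra! h
    exact hball (by rwa [mem_ball, dist_eq_norm]) hz
  refine ⟨fun h ↦ h.sub_of_norm_lt fun z hz ↦ ?_, fun h ↦ h.sub_of_norm_lt fun z hz ↦ ?_⟩
  · linarith [hfar z hz]
  · have := norm_sub_le_norm_sub_add_norm_sub z b a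
    rw [norm_sub_rev b a] at this ⊢
    linarith [hfar z hz]

lemma hasLogOn_sub_of_notMem_filling (hK : IsCompact K) (ha : a ∉ filling K) :
    HasLogOn (· - a) K := by
  obtain ⟨R, hR, hKR⟩ := hK.isBounded.subset_closedBall_lt 0 0
  let b : ℂ := ((R + 1 : ℝ) : ℂ)
  have hb : R < ‖b‖ := by
    simp only [b, Complex.norm_real, Real.norm_eq_abs, abs_of_pos (by linarith : 0 < R + 1)]
    linarith
  have hbK : b ∉ filling K := fun h ↦ by
    have := filling_subset_closedBall hR.le hKR h
    rw [mem_closedBall_zero_iff] at this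
    linarith
  refine ((isConnected_compl_filling hK.isBounded).2.induction₂
    (fun x y ↦ HasLogOn (· - x) K ↔ HasLogOn (· - y) K) (fun x hx ↦ ?_)
    (fun _ _ _ _ _ _ ↦ Iff.trans) (fun _ _ _ _ ↦ Iff.symm) hbK ha).1
    (hasLogOn_sub_of_norm_lt fun z hz ↦ (mem_closedBall_zero_iff.1 (hKR hz)).trans_lt hb)
  exact mem_nhdsWithin_of_mem_nhds
    (eventually_hasLogOn_sub_iff hK.isClosed fun h ↦ hx (subset_filling K h))

end FullLogarithms

section CompactConnected

variable {V X : Set ℂ} {x y : ℂ}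

lemma exists_isConnected_isCompact_of_mem (ho : IsOpen V) (hc : IsPreconnected V) (hx : x ∈ V)
    (hy : y ∈ V) : ∃ K ⊆ V, IsCompact K ∧ IsConnected K ∧ x ∈ K ∧ y ∈ K := by
  obtain ⟨γ, hγ⟩ := ((ho.isConnected_iff_isPathConnected).1 ⟨⟨x, hx⟩, hc⟩).joinedIn x hx y hy
  exact ⟨range γ, range_subset_iff.2 hγ, isCompact_range γ.continuous,
    isConnected_range γ.continuous, ⟨0, γ.source⟩, ⟨1, γ.target⟩⟩

lemma exists_isConnected_isCompact_superset (ho : IsOpen V) (hc : IsConnected V)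
    (hX : IsCompact X) (hXV : X ⊆ V) : ∃ K ⊆ V, IsCompact K ∧ IsConnected K ∧ X ⊆ K := by
  obtain ⟨x, hx⟩ := hc.nonempty
  suffices ∃ K ⊆ V, IsCompact K ∧ IsPreconnected K ∧ x ∈ K ∧ X ⊆ K by
    obtain ⟨K, hKV, hK, hKc, hxK, hXK⟩ := this
    exact ⟨K, hKV, hK, ⟨⟨x, hxK⟩, hKc⟩, hXK⟩
  refine hX.induction_on ?_ ?_ ?_ ?_
  · exact ⟨{x}, singleton_subset_iff.2 hx, isCompact_singleton, isPreconnected_singleton, rfl,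
      empty_subset _⟩
  · rintro s t hst ⟨K, hKV, hK, hKc, hxK, htK⟩
    exact ⟨K, hKV, hK, hKc, hxK, hst.trans htK⟩
  · rintro s t ⟨K, hKV, hK, hKc, hxK, hsK⟩ ⟨K', hKV', hK', hKc', hxK', htK'⟩
    exact ⟨K ∪ K', union_subset hKV hKV', hK.union hK', hKc.union x hxK hxK' hKc', Or.inl hxK,
      union_subset_union hsK htK'⟩
  · intro y hy
    obtain ⟨r, hr, hball⟩ := nhds_basis_closedBall.mem_iff.1 (ho.mem_nhds (hXV hy))
    obtain ⟨K, hKV, hK, hKc, hxK, hyK⟩ := exists_isConnected_isCompact_of_mem ho hc.2 hx (hXV hy)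
    exact ⟨closedBall y r, mem_nhdsWithin_of_mem_nhds (closedBall_mem_nhds y hr),
      K ∪ closedBall y r, union_subset hKV hball, hK.union (isCompact_closedBall y r),
      hKc.2.union y hyK (mem_closedBall_self hr.le) (convex_closedBall y r).isPreconnected,
      Or.inl hxK, subset_union_right⟩

lemma hasLogOn_of_forall_isCompact {f : ℂ → ℂ} (ho : IsOpen V) (hc : IsPreconnected V)
    (hlog : ∀ K ⊆ V, IsCompact K → HasLogOn f K) : HasLogOn f V := by
  rcases V.eq_empty_or_nonempty with rfl | ⟨x, hx⟩
  · exact hlog _ Subset.rfl isCompact_empty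
  let IsGood (K : Set ℂ) : Prop := K ⊆ V ∧ IsCompact K ∧ IsPreconnected K ∧ x ∈ K
  have good_union : ∀ {K K'}, IsGood K → K' ⊆ V → IsCompact K' → IsPreconnected K' →
      (K ∩ K').Nonempty → IsGood (K ∪ K') := fun h hV' hK' hc' ⟨y, hy⟩ ↦
    ⟨union_subset h.1 hV', h.2.1.union hK', h.2.2.1.union y hy.1 hy.2 hc', Or.inl h.2.2.2⟩
  have hnorm : ∀ K, IsGood K → ∃ L : ℂ → ℂ, ContinuousOn L K ∧
      (∀ z ∈ K, Complex.exp (L z) = f z) ∧ L x = Complex.log (f x) :=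
    fun K hK ↦ (hlog K hK.1 hK.2.1).exists_apply_eq_log hK.2.2.2
  choose! ℓ hℓc hℓf hℓx using hnorm
  have ℓ_eq : ∀ {K K'}, IsGood K → IsGood K' → K ⊆ K' → EqOn (ℓ K) (ℓ K') K :=
    fun {K K'} h h' hKK' ↦ eqOn_of_exp_eqOn h.2.2.1 (hℓc K h) ((hℓc K' h').mono hKK')
      (fun z hz ↦ (hℓf K h z hz).trans (hℓf K' h' z (hKK' hz)).symm) h.2.2.2
      ((hℓx K h).trans (hℓx K' h').symm)
  have hjoin : ∀ z ∈ V, ∃ K, IsGood K ∧ z ∈ K := fun z hz ↦ by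
    obtain ⟨K, hKV, hK, hKc, hxK, hzK⟩ := exists_isConnected_isCompact_of_mem ho hc hx hz
    exact ⟨K, ⟨hKV, hK, hKc.2, hxK⟩, hzK⟩
  choose! J hJ hzJ using hjoin
  have hJ_eq : ∀ {K z}, IsGood K → z ∈ K → ℓ (J z) z = ℓ K z := fun {K z} h hz ↦ by
    have hzV := h.1 hz
    have hJK : IsGood (J z ∪ K) :=
      good_union (hJ z hzV) h.1 h.2.1 h.2.2.1 ⟨x, (hJ z hzV).2.2.2, h.2.2.2⟩
    rw [ℓ_eq (hJ z hzV) hJK subset_union_left (hzJ z hzV), ℓ_eq h hJK subset_union_right hz]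
  refine ⟨fun z ↦ ℓ (J z) z, fun z hz ↦ ?_, fun z hz ↦ hℓf _ (hJ z hz) z (hzJ z hz)⟩
  obtain ⟨r, hr, hball⟩ := nhds_basis_closedBall.mem_iff.1 (ho.mem_nhds hz)
  have hK : IsGood (J z ∪ closedBall z r) := good_union (hJ z hz) hball (isCompact_closedBall z r)
    (convex_closedBall z r).isPreconnected ⟨z, hzJ z hz, mem_closedBall_self hr.le⟩
  have hcont : ContinuousAt (ℓ (J z ∪ closedBall z r)) z :=
    ((hℓc _ hK).mono subset_union_right).continuousAt (closedBall_mem_nhds z hr)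
  refine (hcont.congr ?_).continuousWithinAt
  filter_upwards [closedBall_mem_nhds z hr] with w hw using (hJ_eq hK (Or.inr hw)).symm

end CompactConnected

/-! ### Normal families and Hurwitz's theorem -/

section LocallyUniformConvergence

variable {ι α β : Type*} [TopologicalSpace α] [UniformSpace β] {F : ι → α → β} {f : α → β}
  {p : Filter ι} {S : Set α}

lemma tendstoLocallyUniformlyOn_iff_tendsto_nhds (hf : ContinuousOn f S) :
    TendstoLocallyUniformlyOn F f p S ↔
      ∀ x ∈ S, Tendsto (fun q : ι × α ↦ F q.1 q.2) (p ×ˢ 𝓝[S] x) (𝓝 (f x)) := by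
  have hfx (x) (hx : x ∈ S) : Tendsto (fun q : ι × α ↦ f q.2) (p ×ˢ 𝓝[S] x) (𝓝 (f x)) :=
    (hf x hx).tendsto.comp tendsto_snd
  rw [tendstoLocallyUniformlyOn_iff_forall_tendsto]
  refine forall₂_congr fun x hx ↦ ⟨(hfx x hx).congr_uniformity, fun h ↦ ?_⟩
  exact ((hfx x hx).prodMk_nhds h).mono_right (nhds_le_uniformity (f x))

lemma tendstoLocallyUniformlyOn_of_equicontinuousOn [LocallyCompactSpace α] (hS : IsOpen S)
    (hF : EquicontinuousOn F S) (h : ∀ x ∈ S, Tendsto (F · x) p (𝓝 (f x))) :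
    TendstoLocallyUniformlyOn F f p S := by
  rw [tendstoLocallyUniformlyOn_iff_forall_isCompact hS]
  intro K hKS hK
  have hpointwise : Tendsto ((⋃₀ {K}).domRestrict ∘ F) p (𝓝 ((⋃₀ {K}).domRestrict f)) :=
    tendsto_pi_nhds.2 fun x ↦ h x (hKS (by simpa using x.2))
  have hKs : ∀ L ∈ ({K} : Set (Set α)), IsCompact L := by simpa using hK
  have hFK : ∀ L ∈ ({K} : Set (Set α)), EquicontinuousOn F L := by simpa using hF.mono hKS
  have := (EquicontinuousOn.tendsto_uniformOnFun_iff_pi' hKs hFK p f).2 hpointwise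
  exact UniformOnFun.tendsto_iff_tendstoUniformlyOn.1 this K rfl

end LocallyUniformConvergence

section Montel

variable {ι E : Type*} [NormedAddCommGroup E] [NormedSpace ℂ E] {F : ι → ℂ → E} {D : Set ℂ}

lemma equicontinuousOn_of_norm_le (hD : IsOpen D) (hF : ∀ i, DifferentiableOn ℂ (F i) D)
    {C : ℝ} (hC : ∀ i, ∀ z ∈ D, ‖F i z‖ ≤ C) : EquicontinuousOn F D := by
  intro z hz
  obtain ⟨r, hr, hball⟩ := Metric.isOpen_iff.1 hD z hz
  refine EquicontinuousAt.equicontinuousWithinAt ?_ D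
  refine Metric.equicontinuousAt_of_continuity_modulus (fun w ↦ 2 * C / r * dist w z) ?_ _ ?_
  · exact Continuous.tendsto' (by fun_prop) _ _ (by simp)
  filter_upwards [ball_mem_nhds z hr] with w hw i
  rw [dist_comm]
  refine Complex.dist_le_div_mul_dist_of_mapsTo_ball ((hF i).mono hball) (fun x hx ↦ ?_) hw
  calc dist (F i x) (F i z) ≤ ‖F i x‖ + ‖F i z‖ := dist_le_norm_add_norm _ _
    _ ≤ 2 * C := by linarith [hC i x (hball hx), hC i z hz]

lemma exists_tendstoLocallyUniformlyOn_of_norm_le [ProperSpace E] (l : Ultrafilter ι)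
    (hD : IsOpen D) (hF : ∀ i, DifferentiableOn ℂ (F i) D) {C : ℝ}
    (hC : ∀ i, ∀ z ∈ D, ‖F i z‖ ≤ C) : ∃ f : ℂ → E, TendstoLocallyUniformlyOn F f l D := by
  have hlim : ∀ z ∈ D, ∃ y : E, Tendsto (F · z) l (𝓝 y) := fun z hz ↦ by
    obtain ⟨y, -, hy⟩ := (isCompact_closedBall (0 : E) C).ultrafilter_le_nhds (l.map (F · z))
      (le_principal_iff.2 (Ultrafilter.mem_map.2
        (univ_mem' fun i ↦ mem_closedBall_zero_iff.2 (hC i z hz))))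
    exact ⟨y, hy⟩
  choose! f hf using hlim
  exact ⟨f, tendstoLocallyUniformlyOn_of_equicontinuousOn hD
    (equicontinuousOn_of_norm_le hD hF hC) hf⟩

end Montel

section Hurwitz

lemma eq_const_of_eventually_eq {f : ℂ → ℂ} {D : Set ℂ} (hD : IsOpen D)
    (hc : IsPreconnected D) (hf : DifferentiableOn ℂ f D) {z a : ℂ} (hz : z ∈ D)
    (h : ∀ᶠ x in 𝓝 z, f x = a) : ∀ w ∈ D, f w = a :=
  (hf.analyticOnNhd hD).eqOn_of_preconnected_of_eventuallyEq analyticOnNhd_const hc hz h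

lemma eventually_exists_le_norm_sub_on_sphere {f : ℂ → ℂ} {z : ℂ} (hf : AnalyticAt ℂ f z)
    (hnc : ¬ ∀ᶠ w in 𝓝 z, f w = f z) :
    ∀ᶠ ρ in 𝓝[>] (0 : ℝ), ∃ ε > 0, ∀ w ∈ sphere z ρ, ε ≤ ‖f w - f z‖ := by
  have hne := (hf.eventually_eq_or_eventually_ne analyticAt_const).resolve_left hnc
  obtain ⟨R, hR, hball⟩ := Metric.eventually_nhds_iff_ball.1
    ((eventually_nhdsWithin_iff.1 hne).and hf.eventually_continuousAt)
  filter_upwards [Ioo_mem_nhdsGT hR] with ρ hρ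
  have hsphere : ∀ w ∈ sphere z ρ, w ∈ ball z R ∧ w ≠ z := fun w hw ↦
    ⟨mem_ball.2 ((mem_sphere.1 hw).trans_lt hρ.2), ne_of_mem_sphere hw hρ.1.ne'⟩
  obtain ⟨w₀, hw₀, hmin⟩ := (isCompact_sphere z ρ).exists_isMinOn
    (NormedSpace.sphere_nonempty.2 hρ.1.le)
    (f := fun w ↦ ‖f w - f z‖) fun w hw ↦
      ((hball w (hsphere w hw).1).2.sub continuousAt_const).norm.continuousWithinAt
  obtain ⟨hw₀R, hw₀z⟩ := hsphere w₀ hw₀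
  exact ⟨_, norm_pos_iff.2 (sub_ne_zero.2 ((hball w₀ hw₀R).1 hw₀z)), hmin⟩

lemma ball_subset_image_closedBall_of_le_norm_sub {f : ℂ → ℂ} {z : ℂ} {ρ ε : ℝ} (hρ : 0 < ρ)
    (hf : DifferentiableOn ℂ f (closedBall z ρ)) (hε : 0 < ε)
    (h : ∀ w ∈ sphere z ρ, ε ≤ ‖f w - f z‖) :
    ball (f z) (ε / 2) ⊆ f '' closedBall z ρ := by
  refine DiffContOnCl.ball_subset_image_closedBall
    (hf.diffContOnCl_ball le_rfl) hρ h fun hconst ↦ ?_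
  have hball : EqOn f (fun _ ↦ f z) (ball z ρ) :=
    eq_const_of_eventually_eq isOpen_ball (convex_ball z ρ).isPreconnected
      (hf.mono ball_subset_closedBall) (mem_ball_self hρ) (hconst.mono fun _ ↦ not_not.1)
  have hclosed : EqOn f (fun _ ↦ f z) (closedBall z ρ) :=
    hball.of_subset_closure hf.continuousOn continuousOn_const ball_subset_closedBall
      (closure_ball z hρ.ne').ge
  obtain ⟨w, hw⟩ := NormedSpace.sphere_nonempty (x := z).2 hρ.le
  have := h w hw
  rw [hclosed (sphere_subset_closedBall hw), sub_self, norm_zero] at this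
  exact hε.not_ge this

variable {ι : Type*} {F : ι → ℂ → ℂ} {f : ℂ → ℂ} {l : Filter ι} {D : Set ℂ}

lemma exists_eventually_ball_subset_image [l.NeBot] (hD : IsOpen D)
    (hF : ∀ i, DifferentiableOn ℂ (F i) D) (h : TendstoLocallyUniformlyOn F f l D)
    {z : ℂ} (hz : z ∈ D) (hnc : ¬ ∀ᶠ w in 𝓝 z, f w = f z) {N : Set ℂ} (hN : N ∈ 𝓝 z) :
    ∃ δ > 0, ∀ᶠ i in l, ball (f z) δ ⊆ F i '' N := by
  have hfD : DifferentiableOn ℂ f D := h.differentiableOn (Eventually.of_forall hF) hD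
  obtain ⟨r, hr, hrN⟩ := Metric.nhds_basis_closedBall.mem_iff.1
    (inter_mem hN (hD.mem_nhds hz))
  obtain ⟨ρ, ⟨ε, hε, hlow⟩, hρ, hρr⟩ := ((eventually_exists_le_norm_sub_on_sphere
    (hfD.analyticAt (hD.mem_nhds hz)) hnc).and (Ioo_mem_nhdsGT hr)).exists
  have hρN : closedBall z ρ ⊆ N ∩ D := (closedBall_subset_closedBall hρr.le).trans hrN
  have hunif := Metric.tendstoUniformlyOn_iff.1
    ((tendstoLocallyUniformlyOn_iff_forall_isCompact hD).1 h _
      (hρN.trans inter_subset_right) (isCompact_closedBall z ρ))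
  refine ⟨ε / 8, by positivity, (hunif (ε / 8) (by positivity)).mono fun i hi ↦ ?_⟩
  have hiz := hi z (mem_closedBall_self hρ.le)
  have hlow_i : ∀ w ∈ sphere z ρ, ε / 2 ≤ ‖F i w - F i z‖ := fun w hw ↦ by
    have hiw := hi w (sphere_subset_closedBall hw)
    have hw := hlow w hw
    rw [← dist_eq_norm] at hw ⊢
    linarith [dist_triangle4 (f w) (F i w) (F i z) (f z), dist_comm (F i z) (f z)]
  calc ball (f z) (ε / 8) ⊆ ball (F i z) (ε / 2 / 2) :=
        ball_subset_ball' (by linarith)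
    _ ⊆ F i '' closedBall z ρ := ball_subset_image_closedBall_of_le_norm_sub hρ
        ((hF i).mono (hρN.trans inter_subset_right)) (by positivity) hlow_i
    _ ⊆ F i '' N := image_mono (hρN.trans inter_subset_left)

lemma forall_ne_zero_of_tendstoLocallyUniformlyOn [l.NeBot] (hD : IsOpen D)
    (hc : IsPreconnected D) (hF : ∀ i, DifferentiableOn ℂ (F i) D)
    (h : TendstoLocallyUniformlyOn F f l D) (hF0 : ∀ i, ∀ w ∈ D, F i w ≠ 0)
    {z : ℂ} (hz : z ∈ D) (hfz : f z ≠ 0) : ∀ w ∈ D, f w ≠ 0 := by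
  intro w hw hfw
  have hfD : DifferentiableOn ℂ f D := h.differentiableOn (Eventually.of_forall hF) hD
  have hnc : ¬ ∀ᶠ x in 𝓝 w, f x = f w := fun hev ↦
    hfz ((eq_const_of_eventually_eq hD hc hfD hw hev z hz).trans hfw)
  obtain ⟨δ, hδ, hev⟩ := exists_eventually_ball_subset_image hD hF h hw hnc (hD.mem_nhds hw)
  obtain ⟨i, hi⟩ := hev.exists
  obtain ⟨v, hv, hv0⟩ := hi (by simpa [hfw] using hδ : (0 : ℂ) ∈ ball (f w) δ)
  exact hF0 i v hv hv0

lemma injOn_of_tendstoLocallyUniformlyOn [l.NeBot] (hD : IsOpen D) (hc : IsPreconnected D)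
    (hF : ∀ i, DifferentiableOn ℂ (F i) D) (h : TendstoLocallyUniformlyOn F f l D)
    (hinj : ∀ i, InjOn (F i) D) (hnc : ∃ x ∈ D, ∃ y ∈ D, f x ≠ f y) : InjOn f D := by
  have hfD : DifferentiableOn ℂ f D := h.differentiableOn (Eventually.of_forall hF) hD
  have hnc_loc : ∀ z ∈ D, ¬ ∀ᶠ w in 𝓝 z, f w = f z := fun z hz hev ↦ by
    obtain ⟨x, hx, y, hy, hxy⟩ := hnc
    have hconst := eq_const_of_eventually_eq hD hc hfD hz hev
    exact hxy ((hconst x hx).trans (hconst y hy).symm)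
  intro a ha b hb hab
  by_contra hne
  obtain ⟨A, B, hA, hB, haA, hbB, hAB⟩ := t2_separation hne
  obtain ⟨δ, hδ, hδA⟩ := exists_eventually_ball_subset_image hD hF h ha (hnc_loc a ha)
    (inter_mem (hA.mem_nhds haA) (hD.mem_nhds ha))
  obtain ⟨η, hη, hηB⟩ := exists_eventually_ball_subset_image hD hF h hb (hnc_loc b hb)
    (inter_mem (hB.mem_nhds hbB) (hD.mem_nhds hb))
  obtain ⟨i, hiA, hiB⟩ := (hδA.and hηB).exists
  obtain ⟨p, ⟨hpA, hpD⟩, hp⟩ := hiA (mem_ball_self hδ)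
  obtain ⟨q, ⟨hqB, hqD⟩, hq⟩ := hiB (mem_ball_self hη)
  have hpq : p = q := hinj i hpD hqD ((hp.trans hab).trans hq.symm)
  exact disjoint_left.1 hAB hpA (hpq ▸ hqB)

lemma tendsto_prod_nhds_of_tendstoLocallyUniformlyOn (hD : IsOpen D) (hf : ContinuousOn f D)
    (h : TendstoLocallyUniformlyOn F f l D) {x : ℂ} (hx : x ∈ D) :
    Tendsto (fun q : ι × ℂ ↦ F q.1 q.2) (l ×ˢ 𝓝 x) (𝓝 (f x)) :=
  hD.nhdsWithin_eq hx ▸ (tendstoLocallyUniformlyOn_iff_tendsto_nhds hf).1 h x hx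

lemma eventually_exists_eq_self_of_tendsto_const [l.NeBot] (hD : IsOpen D)
    (hF : ∀ i, DifferentiableOn ℂ (F i) D) {y : ℂ}
    (h : TendstoLocallyUniformlyOn F (fun _ ↦ y) l D) (hy : y ∈ D) {N : Set ℂ} (hN : N ∈ 𝓝 y) :
    ∀ᶠ i in l, ∃ a ∈ N, F i a = a := by
  have hlim : TendstoLocallyUniformlyOn (fun i w ↦ F i w - w) (fun w ↦ y - w) l D :=
    (tendstoLocallyUniformlyOn_iff_tendsto_nhds (by fun_prop)).2 fun x hx ↦
      ((tendstoLocallyUniformlyOn_iff_tendsto_nhds continuousOn_const).1 h x hx).sub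
        (tendsto_nhds_of_tendsto_nhdsWithin tendsto_snd)
  have hnc : ¬ ∀ᶠ w in 𝓝 y, y - w = y - y := fun hev ↦
    infinite_of_mem_nhds y (mem_of_superset hev fun w hw ↦ (sub_right_injective hw))
      (finite_singleton y)
  obtain ⟨δ, hδ, hev⟩ := exists_eventually_ball_subset_image hD
    (fun i ↦ (hF i).sub differentiableOn_id) hlim hy hnc hN
  filter_upwards [hev] with i hi
  obtain ⟨a, ha, ha₀⟩ := hi (by simpa using hδ : (0 : ℂ) ∈ ball (y - y) δ)
  exact ⟨a, ha, sub_eq_zero.1 ha₀⟩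

lemma eventually_tendsto_leftInverse {l : Ultrafilter ι} (hD : IsOpen D)
    (hF : ∀ i, DifferentiableOn ℂ (F i) D) (h : TendstoLocallyUniformlyOn F f l D) {z : ℂ}
    (hz : z ∈ D) (hnc : ¬ ∀ᶠ w in 𝓝 z, f w = f z) {G : ι → ℂ → ℂ}
    (hG : ∀ i, DifferentiableOn ℂ (G i) (F i '' D)) (hGF : ∀ i, LeftInvOn (G i) (F i) D) :
    ∀ᶠ w in 𝓝 z, Tendsto (fun q : ι × ℂ ↦ G q.1 q.2) (l ×ˢ 𝓝 (f w)) (𝓝 w) := by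
  classical
  have hfc : ContinuousOn f D := (h.differentiableOn (Eventually.of_forall hF) hD).continuousOn
  obtain ⟨r, hr, hrD⟩ := Metric.isOpen_iff.1 hD z hz
  obtain ⟨δ, hδ, hev⟩ := exists_eventually_ball_subset_image hD hF h hz hnc (ball_mem_nhds z hr)
  set B := ball (f z) δ
  -- `G i` is only controlled on `B` for the eventually many `i` with `B ⊆ F i '' ball z r`.
  let k : ι → ℂ → ℂ := fun i ↦ if B ⊆ F i '' ball z r then G i else fun _ ↦ z
  have hk : ∀ i, DifferentiableOn ℂ (k i) B ∧ MapsTo (k i) B (ball z r) := fun i ↦ by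
    by_cases hi : B ⊆ F i '' ball z r
    · simp only [k, if_pos hi]
      refine ⟨(hG i).mono (hi.trans (image_mono hrD)), fun x hx ↦ ?_⟩
      obtain ⟨w, hw, rfl⟩ := hi hx
      rwa [hGF i (hrD hw)]
    · simp only [k, if_neg hi]
      exact ⟨differentiableOn_const _, fun _ _ ↦ mem_ball_self hr⟩
  obtain ⟨C, hC⟩ := (isBounded_ball (x := z) (r := r)).exists_norm_le
  obtain ⟨κ, hκ⟩ := exists_tendstoLocallyUniformlyOn_of_norm_le l isOpen_ball
    (fun i ↦ (hk i).1) fun i x hx ↦ hC _ ((hk i).2 hx)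
  have hκc : ContinuousOn κ B :=
    (hκ.differentiableOn (Eventually.of_forall fun i ↦ (hk i).1) isOpen_ball).continuousOn
  filter_upwards [hD.mem_nhds hz,
    (hfc.continuousAt (hD.mem_nhds hz)).preimage_mem_nhds (ball_mem_nhds _ hδ)] with w hw hfw
  have hkw := tendsto_prod_nhds_of_tendstoLocallyUniformlyOn isOpen_ball hκc hκ hfw
  have hκw : κ (f w) = w := by
    refine tendsto_nhds_unique (hkw.comp (tendsto_id.prodMk (h.tendsto_at hw)))
      (tendsto_const_nhds.congr' ?_)
    filter_upwards [hev] with i hi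
    simp only [comp_apply, id, k, if_pos hi, hGF i hw]
  rw [hκw] at hkw
  refine hkw.congr' ?_
  filter_upwards [tendsto_fst.eventually hev] with q hq
  simp only [k, if_pos hq]

end Hurwitz

/-! ### Full domains are simply connected -/

section InjectiveHolomorphic

variable {V : Set ℂ} {f L : ℂ → ℂ}

lemma differentiableOn_of_exp_eq (hV : IsOpen V) (hf : DifferentiableOn ℂ f V)
    (hL : ContinuousOn L V) (he : ∀ z ∈ V, Complex.exp (L z) = f z) :
    DifferentiableOn ℂ L V := by
  intro z hz
  have hzV := hV.mem_nhds hz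
  have hquot : ∀ w ∈ V, f w * Complex.exp (-L z) = Complex.exp (L w - L z) := fun w hw ↦ by
    rw [← he w hw, ← Complex.exp_add, sub_eq_add_neg]
  have hlog : DifferentiableAt ℂ (fun w ↦ Complex.log (f w * Complex.exp (-L z)) + L z) z := by
    refine (((hf.differentiableAt hzV).mul_const _).clog ?_).add_const _
    simp [hquot z hz]
  have him : ContinuousAt (fun w ↦ (L w - L z).im) z :=
    Complex.continuous_im.continuousAt.comp ((hL.continuousAt hzV).sub continuousAt_const)
  refine (hlog.congr_of_eventuallyEq ?_).differentiableWithinAt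
  filter_upwards [him.eventually_mem (Ioo_mem_nhds (a := -Real.pi) (b := Real.pi)
    (by simp [Real.pi_pos]) (by simp [Real.pi_pos])), hzV] with w hw hwV
  rw [hquot w hwV, Complex.log_exp hw.1 hw.2.le, sub_add_cancel]

lemma isOpen_image_of_injOn (hV : IsOpen V) (hf : DifferentiableOn ℂ f V) (hinj : InjOn f V) :
    IsOpen (f '' V) := by
  rw [isOpen_iff_mem_nhds]
  rintro _ ⟨z, hz, rfl⟩
  have hzV := hV.mem_nhds hz
  have hnc : ¬ ∀ᶠ w in 𝓝 z, f w = f z := fun h ↦ by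
    obtain ⟨w, ⟨hw, hwV⟩, hwz⟩ := (((h.and hzV).filter_mono nhdsWithin_le_nhds).and
      (self_mem_nhdsWithin : {z}ᶜ ∈ 𝓝[≠] z)).exists
    exact hwz (hinj hwV hz hw)
  exact (hf.analyticAt hzV).eventually_constant_or_nhds_le_map_nhds.resolve_left hnc
    (image_mem_map hzV)

lemma isPreconnected_diff_of_filling_eq (ho : IsOpen V) (hc : IsPreconnected V) {K : Set ℂ}
    (hKV : K ⊆ V) (hK : IsCompact K) (hfill : filling K = K) : IsPreconnected (V \ K) := by
  refine isPreconnected_inter_of_isOpen ho hK.isClosed.isOpen_compl hc ?_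
    ((compl_subset_iff_union (s := V)).1 (compl_subset_compl.2 hKV))
  exact hfill ▸ (isConnected_compl_filling hK.isBounded).2

/-- The component of `a` in the complement of `f '' K` accumulates at `f '' K`, so it meets the
connected set `f '' (V \ K)` and contains it. -/
lemma image_subset_filling_image_of_injOn (ho : IsOpen V) (hc : IsPreconnected V)
    (hf : DifferentiableOn ℂ f V) (hinj : InjOn f V) {K : Set ℂ} (hKV : K ⊆ V)
    (hK : IsCompact K) (hfill : filling K = K) {a : ℂ} (ha : a ∈ filling (f '' K))
    (haV : a ∉ f '' V) : f '' V ⊆ filling (f '' K) := by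
  have hfK : IsCompact (f '' K) := hK.image_of_continuousOn (hf.continuousOn.mono hKV)
  have hdiff : f '' (V \ K) ⊆ (f '' K)ᶜ := by
    rintro _ ⟨v, ⟨hv, hvK⟩, rfl⟩ ⟨k, hk, hkv⟩
    exact hvK (hinj (hKV hk) hv hkv ▸ hk)
  have hne : (f '' K).Nonempty := nonempty_iff_ne_empty.2 fun h ↦ by
    rw [h, filling_empty] at ha
    exact ha
  obtain ⟨b, hb⟩ := nonempty_frontier_connectedComponentIn (V := (f '' K)ᶜ)
    (fun h ↦ haV (image_mono hKV h)) (compl_ne_univ.2 hne)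
  have hbK := not_not.1 (frontier_connectedComponentIn_subset hfK.isClosed.isOpen_compl a hb)
  obtain ⟨_, ⟨v, hv, rfl⟩, hva⟩ := mem_closure_iff_nhds.1 (frontier_subset_closure hb) _
    ((isOpen_image_of_injOn ho hf hinj).mem_nhds (image_mono hKV hbK))
  have hvK : v ∉ K := fun h ↦ connectedComponentIn_subset _ _ hva (mem_image_of_mem f h)
  have hsub : f '' (V \ K) ⊆ connectedComponentIn (f '' K)ᶜ a :=
    connectedComponentIn_eq hva ▸
      ((isPreconnected_diff_of_filling_eq ho hc hKV hK hfill).image f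
        (hf.continuousOn.mono sdiff_subset)).subset_connectedComponentIn
        (mem_image_of_mem f ⟨hv, hvK⟩) hdiff
  rintro _ ⟨u, hu, rfl⟩
  by_cases huK : u ∈ K
  · exact subset_filling _ (mem_image_of_mem f huK)
  · exact connectedComponentIn_compl_subset_filling ha (hsub (mem_image_of_mem f ⟨hu, huK⟩))

lemma notMem_filling_image_of_injOn (ho : IsOpen V) (hc : IsPreconnected V) (hfull : IsFull V)
    (hf : DifferentiableOn ℂ f V) (hinj : InjOn f V) {K : Set ℂ} (hKV : K ⊆ V)
    (hK : IsCompact K) {a : ℂ} (ha : a ∉ f '' V) : a ∉ filling (f '' K) := by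
  intro haK
  have hKV' : filling K ⊆ V := hfull K hKV hK
  have hcomp : IsCompact (f '' filling K) :=
    (isCompact_filling hK).image_of_continuousOn (hf.continuousOn.mono hKV')
  set F := filling (f '' filling K)
  have haF : a ∈ F := filling_mono (image_mono (subset_filling K)) haK
  have hVF : f '' V ⊆ F := image_subset_filling_image_of_injOn ho hc hf hinj hKV'
    (isCompact_filling hK) (filling_filling hK.isBounded) haF ha
  have hfront : frontier F ⊆ interior F := calc
    frontier F ⊆ f '' filling K :=
      (frontier_filling_subset hcomp).trans hcomp.isClosed.frontier_subset
    _ ⊆ f '' V := image_mono hKV'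
    _ ⊆ interior F := interior_maximal hVF (isOpen_image_of_injOn ho hf hinj)
  obtain ⟨b, hb⟩ := nonempty_frontier_iff.2 ⟨⟨a, haF⟩, fun h : F = univ ↦
    NormedSpace.unbounded_univ ℝ ℂ (h ▸ (isCompact_filling hcomp).isBounded)⟩
  exact hb.2 (hfront hb)

lemma exists_differentiableOn_exp_eq_sub (ho : IsOpen V) (hc : IsConnected V)
    (hfull : IsFull V) (hf : DifferentiableOn ℂ f V) (hinj : InjOn f V) {a : ℂ}
    (ha : a ∉ f '' V) :
    ∃ L : ℂ → ℂ, DifferentiableOn ℂ L V ∧ ∀ z ∈ V, Complex.exp (L z) = f z - a := by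
  obtain ⟨L, hL, he⟩ : HasLogOn (fun z ↦ f z - a) V :=
    hasLogOn_of_forall_isCompact ho hc.2 fun K hKV hK ↦ by
      have hfK := hf.continuousOn.mono hKV
      obtain ⟨L, hL, he⟩ := hasLogOn_sub_of_notMem_filling (hK.image_of_continuousOn hfK)
        (notMem_filling_image_of_injOn ho hc.2 hfull hf hinj hKV hK ha)
      exact ⟨L ∘ f, hL.comp hfK (mapsTo_image f K), fun z hz ↦ he _ (mem_image_of_mem f hz)⟩
  exact ⟨L, differentiableOn_of_exp_eq ho (hf.sub_const a) hL he, he⟩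

end InjectiveHolomorphic

section OmittedValue

variable {V : Set ℂ}

lemma exists_sq_eq_sub_and_le_norm_add (ho : IsOpen V) (hc : IsConnected V) (hfull : IsFull V)
    {a : ℂ} (ha : a ∉ V) :
    ∃ (s : ℂ → ℂ) (c : ℂ), ∃ ε > 0, DifferentiableOn ℂ s V ∧ (∀ z ∈ V, s z ^ 2 = z - a) ∧
      ∀ z ∈ V, ε ≤ ‖s z + c‖ := by
  obtain ⟨L, hL, he⟩ := exists_differentiableOn_exp_eq_sub ho hc hfull differentiableOn_id
    (injOn_id V) (a := a) (by simpa using ha)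
  set s : ℂ → ℂ := fun z ↦ Complex.exp (L z / 2)
  have hs : DifferentiableOn ℂ s V := (hL.div_const 2).cexp
  have hsq : ∀ z ∈ V, s z ^ 2 = z - a := fun z hz ↦ by
    rw [sq, ← Complex.exp_add, add_halves, he z hz, id]
  have hinj_neg : ∀ y ∈ V, ∀ z ∈ V, s y ^ 2 = s z ^ 2 → y = z := fun y hy z hz h ↦
    sub_left_injective ((hsq y hy).symm.trans (h.trans (hsq z hz)))
  have hopen : IsOpen (s '' V) :=
    isOpen_image_of_injOn ho hs fun y hy z hz h ↦ hinj_neg y hy z hz (by rw [h])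
  obtain ⟨v, hv⟩ := hc.nonempty
  obtain ⟨ε, hε, hball⟩ := Metric.isOpen_iff.1 hopen (s v) (mem_image_of_mem s hv)
  refine ⟨s, s v, ε, hε, hs, hsq, fun z hz ↦ ?_⟩
  -- The image of `s` is disjoint from its opposite, since `s` never vanishes.
  by_contra! hlt
  have hneg : -s z ∈ ball (s v) ε := by
    rwa [mem_ball, dist_comm, dist_eq_norm, sub_neg_eq_add, add_comm]
  obtain ⟨y, hy, hys⟩ := hball hneg
  obtain rfl := hinj_neg y hy z hz (by rw [hys, neg_sq])
  exact Complex.exp_ne_zero _ (self_eq_neg.1 hys)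

open Polynomial in
lemma exists_norm_lt_and_eval_inv_eq (ho : IsOpen V) (hc : IsConnected V) (hfull : IsFull V)
    (hV : V ≠ univ) :
    ∃ (u : ℂ → ℂ) (P : ℂ[X]), DifferentiableOn ℂ u V ∧ 0 < P.degree ∧
      ∀ z ∈ V, u z ≠ 0 ∧ ‖u z‖ < 1 / 2 ∧ P.eval (u z)⁻¹ = z := by
  obtain ⟨a, ha⟩ := (ne_univ_iff_exists_notMem V).1 hV
  obtain ⟨s, c, ε, hε, hs, hsq, hle⟩ := exists_sq_eq_sub_and_le_norm_add ho hc hfull ha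
  have hne : ∀ z ∈ V, s z + c ≠ 0 := fun z hz ↦ norm_pos_iff.1 (hε.trans_le (hle z hz))
  set k : ℂ := ((ε / 3 : ℝ) : ℂ)
  have hk : k ≠ 0 := Complex.ofReal_ne_zero.2 (by positivity)
  have hknorm : ‖k‖ = ε / 3 := Complex.norm_of_nonneg (by positivity)
  refine ⟨fun z ↦ k / (s z + c), C a + (C k * X - C c) ^ 2,
    (differentiableOn_const k).div (hs.add_const c) hne, ?_, fun z hz ↦ ⟨?_, ?_, ?_⟩⟩
  · have : (C k * X - C c).degree = 1 := by
      rw [sub_eq_add_neg, ← C_neg, degree_linear hk]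
    rw [add_comm, degree_add_C] <;> simp [degree_pow, this]
  · exact div_ne_zero hk (hne z hz)
  · rw [norm_div, hknorm, div_lt_iff₀ (norm_pos_iff.2 (hne z hz))]
    linarith [hle z hz]
  · simp only [inv_div, eval_add, eval_C, eval_pow, eval_sub, eval_mul, eval_X]
    rw [mul_div_cancel₀ _ hk, add_sub_cancel_right, hsq z hz, add_sub_cancel]

/-- The reciprocals of the functions `u ∘ h i`, where `u` is a bounded function on `V`, are
recovered from `h i` up to a polynomial; so only a limit of `u ∘ h i` that vanishes somewhere
could obstruct the convergence of `h i`. -/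
lemma exists_tendstoLocallyUniformlyOn_of_mapsTo {ι : Type*} (l : Ultrafilter ι)
    (ho : IsOpen V) (hc : IsConnected V) (hfull : IsFull V) (hV : V ≠ univ) {D : Set ℂ}
    (hD : IsOpen D) (hDc : IsPreconnected D) {h : ι → ℂ → ℂ}
    (hh : ∀ i, DifferentiableOn ℂ (h i) D) (hmap : ∀ i, MapsTo (h i) D V) {x : ι → ℂ} {z y : ℂ}
    (hz : z ∈ D) (hx : Tendsto x l (𝓝 z)) (hy : Tendsto (fun i ↦ h i (x i)) l (𝓝 y)) :
    ∃ f : ℂ → ℂ, TendstoLocallyUniformlyOn h f l D := by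
  obtain ⟨u, P, hu, hP, huV⟩ := exists_norm_lt_and_eval_inv_eq ho hc hfull hV
  have hud : ∀ i, DifferentiableOn ℂ (u ∘ h i) D := fun i ↦ hu.comp (hh i) (hmap i)
  obtain ⟨f, hf⟩ := exists_tendstoLocallyUniformlyOn_of_norm_le l hD hud
    fun i w hw ↦ (huV _ (hmap i hw)).2.1.le
  have hfd : DifferentiableOn ℂ f D := hf.differentiableOn (Eventually.of_forall hud) hD
  have hxD : ∀ᶠ i in (l : Filter ι), x i ∈ D := hx.eventually (hD.mem_nhds hz)
  have hfz : f z ≠ 0 := fun h0 ↦ by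
    have hlim : Tendsto (fun i ↦ ‖u (h i (x i))‖) l (𝓝[>] 0) := by
      refine tendsto_nhdsWithin_iff.2 ⟨?_, hxD.mono fun i hi ↦
        norm_pos_iff.2 (huV _ (hmap i hi)).1⟩
      simpa [h0] using (hf.tendsto_comp (hfd.continuousOn z hz) hz
        (tendsto_nhdsWithin_iff.2 ⟨hx, hxD⟩)).norm
    have hinf := P.tendsto_norm_atTop hP (z := fun i ↦ (u (h i (x i)))⁻¹)
      (hlim.inv_tendsto_nhdsGT_zero.congr fun i ↦ (norm_inv _).symm)
    refine not_tendsto_nhds_of_tendsto_atTop hinf _ (hy.norm.congr' ?_)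
    filter_upwards [hxD] with i hi
    rw [(huV _ (hmap i hi)).2.2]
  have hf0 : ∀ w ∈ D, f w ≠ 0 := forall_ne_zero_of_tendstoLocallyUniformlyOn hD hDc hud hf
    (fun i w hw ↦ (huV _ (hmap i hw)).1) hz hfz
  refine ⟨fun w ↦ P.eval (f w)⁻¹, (tendstoLocallyUniformlyOn_iff_tendsto_nhds
    (P.continuous.comp_continuousOn (hfd.continuousOn.inv₀ hf0))).2 fun w hw ↦ ?_⟩
  have hfw := (tendstoLocallyUniformlyOn_iff_tendsto_nhds hfd.continuousOn).1 hf w hw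
  refine ((P.continuous.tendsto _).comp (hfw.inv₀ (hf0 w hw))).congr' ?_
  filter_upwards [tendsto_snd.eventually (self_mem_nhdsWithin : D ∈ 𝓝[D] w)] with q hq
  exact (huV _ (hmap q.1 hq)).2.2

end OmittedValue

section RiemannMapping

open ComplexConjugate

/-- The automorphism of the unit disk that sends `a` to `0`. -/
def diskAut (a w : ℂ) : ℂ := (w - a) / (1 - conj a * w)

variable {a w v : ℂ}

lemma re_one_sub_conj_mul_pos (ha : ‖a‖ < 1) (hw : ‖w‖ < 1) : 0 < (1 - conj a * w).re := by
  have hre := Complex.re_le_norm (conj a * w)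
  rw [norm_mul, RCLike.norm_conj] at hre
  have : ‖a‖ * ‖w‖ < 1 := mul_lt_one_of_nonneg_of_lt_one_left (norm_nonneg a) ha hw.le
  rw [Complex.sub_re, Complex.one_re]
  linarith

lemma one_sub_conj_mul_ne_zero (ha : ‖a‖ < 1) (hw : ‖w‖ < 1) : 1 - conj a * w ≠ 0 := fun h ↦ by
  simpa [h] using re_one_sub_conj_mul_pos ha hw

lemma norm_diskAut_lt_one (ha : ‖a‖ < 1) (hw : ‖w‖ < 1) : ‖diskAut a w‖ < 1 := by
  rw [diskAut, norm_div, div_lt_one (norm_pos_iff.2 (one_sub_conj_mul_ne_zero ha hw)),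
    ← sq_lt_sq₀ (norm_nonneg _) (norm_nonneg _), ← sub_pos]
  have hfactor : ‖1 - conj a * w‖ ^ 2 - ‖w - a‖ ^ 2 = (1 - ‖a‖ ^ 2) * (1 - ‖w‖ ^ 2) := by
    simp only [← Complex.normSq_eq_norm_sq, Complex.normSq_apply, Complex.sub_re, Complex.sub_im,
      Complex.mul_re, Complex.mul_im, Complex.conj_re, Complex.conj_im, Complex.one_re,
      Complex.one_im]
    ring
  rw [hfactor]
  exact mul_pos (sub_pos.2 (pow_lt_one₀ (norm_nonneg a) ha two_ne_zero))
    (sub_pos.2 (pow_lt_one₀ (norm_nonneg w) hw two_ne_zero))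

lemma diskAut_injOn (ha : ‖a‖ < 1) : InjOn (diskAut a) (ball 0 1) := by
  intro w hw v hv h
  rw [mem_ball_zero_iff] at hw hv
  rw [diskAut, diskAut, div_eq_div_iff (one_sub_conj_mul_ne_zero ha hw)
    (one_sub_conj_mul_ne_zero ha hv)] at h
  have : (w - v) * (1 - conj a * a) = 0 := by linear_combination h
  exact sub_eq_zero.1 ((mul_eq_zero_iff_right (one_sub_conj_mul_ne_zero ha ha)).1 this)

lemma hasDerivAt_diskAut (ha : ‖a‖ < 1) (hw : ‖w‖ < 1) :
    HasDerivAt (diskAut a) ((1 - conj a * a) / (1 - conj a * w) ^ 2) w := by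
  have hden : HasDerivAt (fun w ↦ 1 - conj a * w) (-conj a) w := by
    simpa using ((hasDerivAt_id w).const_mul (conj a)).const_sub 1
  have hdiv := ((hasDerivAt_id w).sub_const a).fun_div hden (one_sub_conj_mul_ne_zero ha hw)
  rwa [show 1 * (1 - conj a * w) - (id w - a) * (-conj a) = 1 - conj a * a by
    rw [id]; ring] at hdiv

/-- The normalized injective holomorphic maps from `V` to the unit disk, among which a Riemann map
is one with the largest derivative at `v₀`. -/
def diskInjections (V : Set ℂ) (v₀ : ℂ) : Set (ℂ → ℂ) :=
  {f | DifferentiableOn ℂ f V ∧ InjOn f V ∧ MapsTo f V (ball 0 1) ∧ f v₀ = 0}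

variable {V : Set ℂ} {v₀ : ℂ} {f : ℂ → ℂ}

lemma exists_mem_diskInjections (ho : IsOpen V) (hc : IsConnected V) (hfull : IsFull V)
    (hV : V ≠ univ) (hv : v₀ ∈ V) : ∃ f ∈ diskInjections V v₀, deriv f v₀ ≠ 0 := by
  obtain ⟨u, P, hu, -, huV⟩ := exists_norm_lt_and_eval_inv_eq ho hc hfull hV
  refine ⟨fun z ↦ u z - u v₀, ⟨hu.sub_const _, fun z hz w hw h ↦ ?_, fun z hz ↦ ?_,
    sub_self _⟩, fun h0 ↦ ?_⟩
  · rw [← (huV z hz).2.2, ← (huV w hw).2.2, sub_left_injective h]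
  · rw [mem_ball_zero_iff]
    linarith [norm_sub_le (u z) (u v₀), (huV z hz).2.1, (huV v₀ hv).2.1]
  · rw [deriv_sub_const] at h0
    have hderiv := (P.hasDerivAt _).comp v₀
      ((hu.differentiableAt (ho.mem_nhds hv)).hasDerivAt.inv (huV v₀ hv).1)
    have hid : HasDerivAt (fun z ↦ P.eval (u z)⁻¹) 1 v₀ :=
      (hasDerivAt_id v₀).congr_of_eventuallyEq
        ((eventually_mem_nhds_iff.2 (ho.mem_nhds hv)).mono fun z hz ↦
          (huV z (mem_of_mem_nhds hz)).2.2)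
    simpa [h0] using hderiv.unique hid

lemma exists_sq_eq_diskAut (ho : IsOpen V) (hc : IsConnected V) (hfull : IsFull V)
    (hf : DifferentiableOn ℂ f V) (hinj : InjOn f V) (hmap : MapsTo f V (ball 0 1))
    (ha : ‖a‖ < 1) (haf : a ∉ f '' V) :
    ∃ h : ℂ → ℂ, DifferentiableOn ℂ h V ∧ ∀ z ∈ V, h z ≠ 0 ∧ h z ^ 2 = diskAut a (f z) := by
  have hnorm : ∀ z ∈ V, ‖f z‖ < 1 := fun z hz ↦ mem_ball_zero_iff.1 (hmap hz)
  obtain ⟨L, hL, he⟩ := exists_differentiableOn_exp_eq_sub ho hc hfull hf hinj haf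
  refine ⟨fun z ↦ Complex.exp ((L z - Complex.log (1 - conj a * f z)) / 2),
    ((hL.sub (((hf.const_mul _).const_sub 1).clog fun z hz ↦ ?_)).div_const 2).cexp,
    fun z hz ↦ ⟨Complex.exp_ne_zero _, ?_⟩⟩
  · exact Or.inl (re_one_sub_conj_mul_pos ha (hnorm z hz))
  · rw [sq, ← Complex.exp_add, add_halves, Complex.exp_sub, he z hz,
      Complex.exp_log (one_sub_conj_mul_ne_zero ha (hnorm z hz)), diskAut]

lemma two_mul_deriv_diskAut_comp_eq {h : ℂ → ℂ} (hV : V ∈ 𝓝 v₀) (hf : DifferentiableOn ℂ f V)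
    (hf0 : f v₀ = 0) (ha : ‖a‖ < 1) (hh : DifferentiableOn ℂ h V)
    (hsq : ∀ z ∈ V, h z ^ 2 = diskAut a (f z)) (hb : ‖h v₀‖ < 1) :
    2 * h v₀ * deriv (diskAut (h v₀) ∘ h) v₀ =
      ((1 + ‖h v₀‖ ^ 2 : ℝ) : ℂ) * deriv f v₀ := by
  set b := h v₀
  have hb2 : b ^ 2 = -a := by simpa [hf0, diskAut] using hsq v₀ (mem_of_mem_nhds hV)
  have hh' : HasDerivAt h (deriv h v₀) v₀ := (hh.differentiableAt hV).hasDerivAt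
  have hf' : HasDerivAt f (deriv f v₀) v₀ := (hf.differentiableAt hV).hasDerivAt
  have hsq' : 2 * b * deriv h v₀ = (1 - conj a * a) * deriv f v₀ := by
    have hleft : HasDerivAt (fun z ↦ h z ^ 2) (2 * b * deriv h v₀) v₀ := by
      simpa using hh'.fun_pow 2
    have hright := (hasDerivAt_diskAut ha (w := f v₀) (by simp [hf0])).comp v₀ hf'
    simp only [hf0, mul_zero, sub_zero, one_pow, div_one] at hright
    exact hleft.unique (hright.congr_of_eventuallyEq (Filter.mem_of_superset hV hsq))
  have hconj : conj a * a = (conj b * b) ^ 2 := by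
    rw [← neg_eq_iff_eq_neg.2 hb2, map_neg, map_pow]
    ring
  have hnorm : ((1 + ‖b‖ ^ 2 : ℝ) : ℂ) = 1 + conj b * b := by
    push_cast
    rw [Complex.conj_mul']
  have hne := one_sub_conj_mul_ne_zero hb hb
  rw [((hasDerivAt_diskAut hb hb).comp v₀ hh').deriv, hnorm]
  calc 2 * b * ((1 - conj b * b) / (1 - conj b * b) ^ 2 * deriv h v₀)
      = 2 * b * deriv h v₀ / (1 - conj b * b) := by field_simp
    _ = (1 + conj b * b) * deriv f v₀ := by
      rw [hsq', hconj, div_eq_iff hne]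
      ring

/-- Koebe's trick: composing with a branch of the square root increases the derivative of a disk
injection that omits a value. -/
lemma exists_norm_deriv_lt_of_notMem_image (ho : IsOpen V) (hc : IsConnected V)
    (hfull : IsFull V) (hv : v₀ ∈ V) (hf : f ∈ diskInjections V v₀) (hd : deriv f v₀ ≠ 0)
    (ha : ‖a‖ < 1) (haf : a ∉ f '' V) :
    ∃ φ ∈ diskInjections V v₀, ‖deriv f v₀‖ < ‖deriv φ v₀‖ := by
  obtain ⟨hfd, hfi, hfm, hf0⟩ := hf
  obtain ⟨h, hhd, hh⟩ := exists_sq_eq_diskAut ho hc hfull hfd hfi hfm ha haf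
  have hhn : ∀ z ∈ V, ‖h z‖ < 1 := fun z hz ↦ by
    have := norm_diskAut_lt_one ha (mem_ball_zero_iff.1 (hfm hz))
    rwa [← (hh z hz).2, norm_pow, sq_lt_one_iff₀ (norm_nonneg _)] at this
  have hhi : InjOn h V := fun z hz w hw hzw ↦ hfi hz hw (diskAut_injOn ha (hfm hz) (hfm hw)
    (by rw [← (hh z hz).2, ← (hh w hw).2, hzw]))
  have hhm : MapsTo h V (ball 0 1) := fun z hz ↦ mem_ball_zero_iff.2 (hhn z hz)
  have hb := hhn v₀ hv
  refine ⟨diskAut (h v₀) ∘ h, ⟨fun z hz ↦ ?_, (diskAut_injOn hb).comp hhi hhm,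
    fun z hz ↦ mem_ball_zero_iff.2 (norm_diskAut_lt_one hb (hhn z hz)), by simp [diskAut]⟩, ?_⟩
  · exact ((hasDerivAt_diskAut hb (hhn z hz)).differentiableAt.comp z
      (hhd.differentiableAt (ho.mem_nhds hz))).differentiableWithinAt
  · have heq := congrArg norm (two_mul_deriv_diskAut_comp_eq (ho.mem_nhds hv) hfd hf0 ha hhd
      (fun z hz ↦ (hh z hz).2) hb)
    simp only [norm_mul, Complex.norm_ofNat,
      Complex.norm_of_nonneg (by positivity : 0 ≤ 1 + ‖h v₀‖ ^ 2)] at heq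
    have hbpos : 0 < ‖h v₀‖ := norm_pos_iff.2 (hh v₀ hv).1
    have hfpos : 0 < ‖deriv f v₀‖ := norm_pos_iff.2 hd
    refine lt_of_mul_lt_mul_left (a := 2 * ‖h v₀‖) ?_ (by positivity)
    rw [heq]
    exact mul_lt_mul_of_pos_right (by nlinarith [sq_pos_of_pos (sub_pos.2 hb)]) hfpos

lemma bddAbove_norm_deriv_diskInjections (hV : V ∈ 𝓝 v₀) :
    BddAbove ((fun f : ℂ → ℂ ↦ ‖deriv f v₀‖) '' diskInjections V v₀) := by
  obtain ⟨r, hr, hball⟩ := Metric.nhds_basis_closedBall.mem_iff.1 hV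
  refine ⟨1 / r, ?_⟩
  rintro _ ⟨f, ⟨hd, -, hm, -⟩, rfl⟩
  exact Complex.norm_deriv_le_of_forall_mem_sphere_norm_le hr
    ((hd.mono hball).diffContOnCl_ball le_rfl) fun z hz ↦
      (mem_ball_zero_iff.1 (hm (hball (sphere_subset_closedBall hz)))).le

lemma mem_diskInjections_of_tendstoLocallyUniformlyOn (ho : IsOpen V) (hc : IsPreconnected V)
    (hv : v₀ ∈ V) {ι : Type*} {l : Filter ι} [l.NeBot] {F : ι → ℂ → ℂ}
    (hF : ∀ i, F i ∈ diskInjections V v₀) (hlim : TendstoLocallyUniformlyOn F f l V)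
    (hd : deriv f v₀ ≠ 0) : f ∈ diskInjections V v₀ := by
  have hfd : DifferentiableOn ℂ f V :=
    hlim.differentiableOn (Eventually.of_forall fun i ↦ (hF i).1) ho
  have hnc : ∃ x ∈ V, ∃ y ∈ V, f x ≠ f y := by
    by_contra! hconst
    have : f =ᶠ[𝓝 v₀] fun _ ↦ f v₀ :=
      Filter.mem_of_superset (ho.mem_nhds hv) fun z hz ↦ hconst z hz v₀ hv
    exact hd (by rw [this.deriv_eq, deriv_const])
  have hinj : InjOn f V := injOn_of_tendstoLocallyUniformlyOn ho hc (fun i ↦ (hF i).1) hlim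
    (fun i ↦ (hF i).2.1) hnc
  have hclosed : f '' V ⊆ closedBall 0 1 := by
    rintro _ ⟨z, hz, rfl⟩
    exact isClosed_closedBall.mem_of_tendsto (hlim.tendsto_at hz)
      (Eventually.of_forall fun i ↦ ball_subset_closedBall ((hF i).2.2.1 hz))
  refine ⟨hfd, hinj, mapsTo_iff_image_subset.2 ?_, tendsto_nhds_unique (hlim.tendsto_at hv) ?_⟩
  · rw [← interior_closedBall (0 : ℂ) one_ne_zero]
    exact interior_maximal hclosed (isOpen_image_of_injOn ho hfd hinj)
  · simp only [(hF _).2.2.2, tendsto_const_nhds_iff]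

lemma exists_diskInjection_forall_norm_deriv_le (ho : IsOpen V) (hc : IsConnected V)
    (hfull : IsFull V) (hV : V ≠ univ) (hv : v₀ ∈ V) :
    ∃ f ∈ diskInjections V v₀, deriv f v₀ ≠ 0 ∧
      ∀ φ ∈ diskInjections V v₀, ‖deriv φ v₀‖ ≤ ‖deriv f v₀‖ := by
  obtain ⟨f₀, hf₀, hf₀'⟩ := exists_mem_diskInjections ho hc hfull hV hv
  have hbdd := bddAbove_norm_deriv_diskInjections (ho.mem_nhds hv)
  obtain ⟨u, -, hu, hmem⟩ := exists_seq_tendsto_sSup ⟨_, mem_image_of_mem _ hf₀⟩ hbdd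
  choose F hF hFu using hmem
  obtain ⟨f, hf⟩ := exists_tendstoLocallyUniformlyOn_of_norm_le (hyperfilter ℕ) ho
    (fun i ↦ (hF i).1) fun i z hz ↦ (mem_ball_zero_iff.1 ((hF i).2.2.1 hz)).le
  have hderiv : Tendsto (fun i ↦ deriv (F i) v₀) (hyperfilter ℕ) (𝓝 (deriv f v₀)) :=
    (hf.deriv (Eventually.of_forall fun i ↦ (hF i).1) ho).tendsto_at hv
  have hsup : ‖deriv f v₀‖ = sSup _ := tendsto_nhds_unique hderiv.norm
    ((hu.mono_left Nat.hyperfilter_le_atTop).congr fun i ↦ (hFu i).symm)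
  have hmax : ∀ φ ∈ diskInjections V v₀, ‖deriv φ v₀‖ ≤ ‖deriv f v₀‖ := fun φ hφ ↦
    hsup ▸ le_csSup hbdd (mem_image_of_mem _ hφ)
  have hne : deriv f v₀ ≠ 0 := norm_pos_iff.1 ((norm_pos_iff.2 hf₀').trans_le (hmax f₀ hf₀))
  exact ⟨f, mem_diskInjections_of_tendstoLocallyUniformlyOn ho hc.2 hv hF hf hne, hne, hmax⟩

theorem exists_injOn_image_eq_unitBall (ho : IsOpen V) (hc : IsConnected V) (hfull : IsFull V)
    (hV : V ≠ univ) : ∃ f : ℂ → ℂ, DifferentiableOn ℂ f V ∧ InjOn f V ∧ f '' V = ball 0 1 := by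
  obtain ⟨v₀, hv⟩ := hc.nonempty
  obtain ⟨f, hf, hne, hmax⟩ := exists_diskInjection_forall_norm_deriv_le ho hc hfull hV hv
  refine ⟨f, hf.1, hf.2.1, hf.2.2.1.image_subset.antisymm fun a ha ↦ ?_⟩
  by_contra haf
  obtain ⟨φ, hφ, hlt⟩ := exists_norm_deriv_lt_of_notMem_image ho hc hfull hv hf hne
    (mem_ball_zero_iff.1 ha) haf
  exact hlt.not_ge (hmax φ hφ)

lemma IsFull.simplyConnectedSpace (hfull : IsFull V) (ho : IsOpen V) (hc : IsConnected V) :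
    SimplyConnectedSpace V := by
  by_cases hV : V = univ
  · subst hV
    exact (Homeomorph.Set.univ ℂ).toHomotopyEquiv.simplyConnectedSpace
  obtain ⟨f, hfd, hfi, him⟩ := exists_injOn_image_eq_unitBall ho hc hfull hV
  have hopen : IsOpenMap (V.domRestrict f) := fun s hs ↦ by
    have hsub : Subtype.val '' s ⊆ V := Subtype.coe_image_subset V s
    rw [show V.domRestrict f '' s = f '' (Subtype.val '' s) from image_comp f Subtype.val s]
    exact isOpen_image_of_injOn (ho.isOpenMap_subtype_val s hs) (hfd.mono hsub) (hfi.mono hsub)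
  have hemb : IsOpenEmbedding (V.domRestrict f) := .of_continuous_injective_isOpenMap
    (continuousOn_iff_continuous_domRestrict.1 hfd.continuousOn) hfi.injective hopen
  have hrange : range (V.domRestrict f) = ball 0 1 := (range_domRestrict f V).trans him
  have : ContractibleSpace (ball (0 : ℂ) 1) := (convex_ball 0 1).contractibleSpace (by simp)
  exact (hemb.isEmbedding.toHomeomorph.trans
    (Homeomorph.setCongr hrange)).toHomotopyEquiv.simplyConnectedSpace

end RiemannMapping

/-! ### Proper holomorphic maps as branched coverings -/

section PlaneMaps

variable {g h k f : ℂ → ℂ}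

lemma eqOn_of_comp_eqOn {D : Set ℂ} (hD : IsOpen D) (hc : IsPreconnected D)
    (hh : DifferentiableOn ℂ h D) (hk : DifferentiableOn ℂ k D) {w : ℂ} (hw : w ∈ D)
    (hwk : h w = k w) (hg : AnalyticAt ℂ g (h w)) (hg' : deriv g (h w) ≠ 0)
    (heq : ∀ z ∈ D, g (h z) = g (k z)) : EqOn h k D := by
  refine (hh.analyticOnNhd hD).eqOn_of_preconnected_of_eventuallyEq (hk.analyticOnNhd hD) hc hw ?_
  have hinv := hg.hasStrictDerivAt.eventually_left_inverse hg'
  have hhw : Tendsto h (𝓝 w) (𝓝 (h w)) := hh.continuousOn.continuousAt (hD.mem_nhds hw)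
  have hkw : Tendsto k (𝓝 w) (𝓝 (h w)) :=
    hwk ▸ hk.continuousOn.continuousAt (hD.mem_nhds hw)
  filter_upwards [hhw.eventually hinv, hkw.eventually hinv, hD.mem_nhds hw] with z hz hz' hzD
  rw [← hz, ← hz', heq z hzD]

lemma differentiableAt_of_eventually_comp_eq {z : ℂ} (hh : ContinuousAt h z)
    (hg : AnalyticAt ℂ g (h z)) (hg' : deriv g (h z) ≠ 0) (hf : DifferentiableAt ℂ f z)
    (heq : ∀ᶠ w in 𝓝 z, g (h w) = f w) : DifferentiableAt ℂ h z := by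
  have hst := hg.hasStrictDerivAt
  have hloc := (hst.to_localInverse hg').hasDerivAt.differentiableAt
  rw [heq.self_of_nhds] at hloc
  refine (hloc.comp z hf).congr_of_eventuallyEq ?_
  filter_upwards [hh.eventually (hst.eventually_left_inverse hg'), heq] with w hw hwf
  rw [comp_apply, ← hwf, hw]

lemma isFull_inter_preimage {U' V : Set ℂ} (hU' : IsFull U') (hg : DifferentiableOn ℂ g U')
    (hV : IsFull V) : IsFull (U' ∩ g ⁻¹' V) := fun K hK hKc x hx ↦ by
  have hKU' : K ⊆ U' := hK.trans inter_subset_left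
  have hfill := hU' K hKU' hKc
  refine ⟨hfill hx, hV (g '' K) ?_ (hKc.image_of_continuousOn (hg.continuousOn.mono hKU'))
    (image_filling_subset hg hKc hfill (mem_image_of_mem g hx))⟩
  rintro _ ⟨y, hy, rfl⟩
  exact (hK hy).2

end PlaneMaps

/-- `g : U' → U` is a proper holomorphic map between open subsets of the plane. -/
structure IsProperHolomorphic (g : ℂ → ℂ) (U' U : Set ℂ) : Prop where
  isOpen_source : IsOpen U'
  isOpen_target : IsOpen U
  differentiableOn : DifferentiableOn ℂ g U'
  mapsTo : MapsTo g U' U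
  properOn : ProperOn g U' U

namespace IsProperHolomorphic

variable {g : ℂ → ℂ} {U' U : Set ℂ} (H : IsProperHolomorphic g U' U)

include H

lemma analyticAt {x : ℂ} (hx : x ∈ U') : AnalyticAt ℂ g x :=
  H.differentiableOn.analyticAt (H.isOpen_source.mem_nhds hx)

lemma isOpen_inter_preimage {S : Set ℂ} (hS : IsOpen S) : IsOpen (U' ∩ g ⁻¹' S) :=
  H.differentiableOn.continuousOn.isOpen_inter_preimage H.isOpen_source hS

lemma isProperMap_restrict : IsProperMap (H.mapsTo.restrict g U' U) := by
  have := H.isOpen_target.locallyCompactSpace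
  refine isProperMap_iff_isCompact_preimage.2
    ⟨H.differentiableOn.continuousOn.mapsToRestrict H.mapsTo, fun K hK ↦ ?_⟩
  rw [Subtype.isCompact_iff]
  convert H.properOn _ (Subtype.coe_image_subset U K) (Subtype.isCompact_iff.1 hK) using 1
  ext x
  constructor
  · rintro ⟨y, hy, rfl⟩
    exact ⟨y.2, _, hy, rfl⟩
  · rintro ⟨hx, w, hw, hwx⟩
    have hxw : H.mapsTo.restrict g U' U ⟨x, hx⟩ = w := Subtype.ext hwx.symm
    exact ⟨⟨x, hx⟩, mem_preimage.2 (hxw ▸ hw), rfl⟩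

lemma isLocalHomeomorphOn_restrict : IsLocalHomeomorphOn (H.mapsTo.restrict g U' U)
    (H.mapsTo.restrict g U' U ⁻¹' {w | (w : ℂ) ∉ g '' critPts g U'}) := by
  have hg : IsLocalHomeomorphOn g (U' \ critPts g U') := fun x hx ↦ by
    have hd : deriv g x ≠ 0 := fun h ↦ hx.2 ⟨hx.1, h⟩
    have hst := (H.analyticAt hx.1).hasStrictDerivAt.hasStrictFDerivAt_equiv hd
    exact ⟨hst.toOpenPartialHomeomorph g, hst.mem_toOpenPartialHomeomorph_source,
      hst.toOpenPartialHomeomorph_coe.symm⟩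
  have hcomp := hg.comp (s := {x : U' | g x ∉ g '' critPts g U'})
    (H.isOpen_source.isOpenEmbedding_subtypeVal.isLocalHomeomorph.isLocalHomeomorphOn.mono
      (subset_univ _))
    fun x hx ↦ ⟨x.2, fun hc ↦ hx (mem_image_of_mem g hc)⟩
  exact .of_comp_left (g := (Subtype.val : U → ℂ)) hcomp
    (H.isOpen_target.isOpenEmbedding_subtypeVal.isLocalHomeomorph.isLocalHomeomorphOn.mono
      (subset_univ _))
    fun x _ ↦ H.isProperMap_restrict.continuous.continuousAt

lemma finite_fiber {w : ℂ} (hw : w ∈ U) (hcrit : w ∉ g '' critPts g U') :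
    (U' ∩ g ⁻¹' {w}).Finite := by
  refine (H.properOn _ (singleton_subset_iff.2 hw) isCompact_singleton).finite
    (isDiscrete_iff_nhdsNE.2 fun x hx ↦ inf_principal_eq_bot.2 ?_)
  have hd : deriv g x ≠ 0 := fun h ↦ hcrit ⟨x, ⟨hx.1, h⟩, hx.2⟩
  filter_upwards [(H.analyticAt hx.1).differentiableAt.hasDerivAt.eventually_ne
    (c := w) hd] with y hy hyw
  exact hy hyw.2

lemma isCoveringMapOn_restrict :
    IsCoveringMapOn (H.mapsTo.restrict g U' U) {w | (w : ℂ) ∉ g '' critPts g U'} := by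
  refine H.isProperMap_restrict.isClosedMap.isCoveringMapOn_of_isLocalHomeomorphOn
    (fun w hw ↦ ?_) H.isLocalHomeomorphOn_restrict
  refine ((H.finite_fiber w.2 hw).subset ?_).of_finite_image Subtype.val_injective.injOn
  rintro _ ⟨x, hx, rfl⟩
  exact ⟨x.2, congrArg Subtype.val hx⟩

lemma exists_lift {S : Set ℂ} (hS : IsOpen S) [SimplyConnectedSpace S] {f : ℂ → ℂ}
    (hf : DifferentiableOn ℂ f S) (hmap : MapsTo f S (U \ g '' critPts g U')) {s₀ x₀ : ℂ}
    (hs₀ : s₀ ∈ S) (hx₀ : x₀ ∈ U') (h₀ : g x₀ = f s₀) :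
    ∃ σ : ℂ → ℂ, DifferentiableOn ℂ σ S ∧ σ s₀ = x₀ ∧ ∀ s ∈ S, σ s ∈ U' ∧ g (σ s) = f s := by
  classical
  have := hS.locallyPathConnectedSpace
  have hmapU : MapsTo f S U := fun s hs ↦ (hmap hs).1
  obtain ⟨L, ⟨hL₀, hL⟩, -⟩ := H.isCoveringMapOn_restrict.existsUnique_continuousMap_lifts
    ⟨hmapU.restrict f S U, hf.continuousOn.mapsToRestrict hmapU⟩ (a₀ := ⟨s₀, hs₀⟩)
    (e₀ := ⟨x₀, hx₀⟩) (Subtype.ext h₀) fun s ↦ (hmap s.2).2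
  let σ : ℂ → ℂ := fun s ↦ if hs : s ∈ S then L ⟨s, hs⟩ else 0
  have hσL : ∀ s (hs : s ∈ S), σ s = L ⟨s, hs⟩ := fun s hs ↦ dif_pos hs
  have hσc : ContinuousOn σ S := by
    rw [continuousOn_iff_continuous_domRestrict,
      show S.domRestrict σ = fun s ↦ (L s : ℂ) from funext fun s ↦ hσL s s.2]
    exact continuous_subtype_val.comp L.continuous
  have hσ : ∀ s ∈ S, σ s ∈ U' ∧ g (σ s) = f s := fun s hs ↦ by
    rw [hσL s hs]
    exact ⟨(L ⟨s, hs⟩).2, congrArg Subtype.val (congrFun hL ⟨s, hs⟩)⟩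
  refine ⟨σ, fun s hs ↦ (differentiableAt_of_eventually_comp_eq (hσc.continuousAt (hS.mem_nhds hs))
    (H.analyticAt (hσ s hs).1) (fun hd ↦ (hmap hs).2 ⟨σ s, ⟨(hσ s hs).1, hd⟩, (hσ s hs).2⟩)
    (hf.differentiableAt (hS.mem_nhds hs)) ?_).differentiableWithinAt,
    by rw [hσL s₀ hs₀, hL₀], hσ⟩
  filter_upwards [hS.mem_nhds hs] with t ht using (hσ t ht).2

lemma isOpen_image (hc : IsPreconnected U') {s : Set ℂ} (hsU : s ⊆ U') (hs : IsOpen s) :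
    IsOpen (g '' s) := by
  rcases (H.differentiableOn.analyticOnNhd H.isOpen_source).is_constant_or_isOpen hc
    with ⟨v, hv⟩ | hopen
  · rcases s.eq_empty_or_nonempty with rfl | ⟨x, hx⟩
    · simp
    have hfib : U' ∩ g ⁻¹' {v} = U' := inter_eq_left.2 fun y hy ↦ hv y hy
    have hcpt : IsCompact U' := hfib ▸ H.properOn {v}
      (singleton_subset_iff.2 (hv x (hsU hx) ▸ H.mapsTo (hsU hx))) isCompact_singleton
    exact absurd (diff_nonempty_of_isOpen_of_isCompact H.isOpen_source ⟨x, hsU hx⟩ hcpt subset_rfl)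
      (by simp)
  · exact hopen s hsU hs

lemma frontier_inter_preimage_subset {S : Set ℂ} (hS : IsCompact (closure S))
    (hSU : closure S ⊆ U) : frontier (U' ∩ g ⁻¹' S) ⊆ U' ∩ g ⁻¹' frontier S := by
  rintro x ⟨hxcl, hxint⟩
  have hx : x ∈ U' ∩ g ⁻¹' closure S := closure_minimal
    (inter_subset_inter_right _ (preimage_mono subset_closure)) (H.properOn _ hSU hS).isClosed hxcl
  exact ⟨hx.1, hx.2, fun hint ↦ hxint (interior_maximal
    (inter_subset_inter_right _ (preimage_mono interior_subset))
    (H.isOpen_inter_preimage isOpen_interior) ⟨hx.1, hint⟩)⟩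

lemma inter_preimage_filling_subset (hU : IsFull U) {K : Set ℂ} (hK : IsCompact K)
    (hKU : K ⊆ U) : U' ∩ g ⁻¹' filling K ⊆ filling (U' ∩ g ⁻¹' K) := fun x hx ↦ by
  by_cases hxK : g x ∈ K
  · exact subset_filling _ ⟨hx.1, hxK⟩
  set B := connectedComponentIn Kᶜ (g x)
  have hcl : closure B ⊆ filling K :=
    closure_minimal (connectedComponentIn_compl_subset_filling hx.2) (isCompact_filling hK).isClosed
  have hclc : IsCompact (closure B) :=
    (isCompact_filling hK).of_isClosed_subset isClosed_closure hcl
  have hclU := hcl.trans (hU K hKU hK)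
  have hbdd : Bornology.IsBounded (U' ∩ g ⁻¹' B) := (H.properOn _ hclU hclc).isBounded.subset
    (inter_subset_inter_right _ (preimage_mono subset_closure))
  refine subset_filling_of_frontier_subset hbdd ?_ ⟨hx.1, mem_connectedComponentIn hxK⟩
  refine (H.frontier_inter_preimage_subset hclc hclU).trans
    (inter_subset_inter_right _ (preimage_mono ?_))
  simpa only [compl_compl] using frontier_connectedComponentIn_subset hK.isClosed.isOpen_compl (g x)

end IsProperHolomorphic

section IteratedPullback

variable {α : Type*} {g : α → α} {U' U S T : Set α} {x : α} {m n : ℕ}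

/-- The set `g⁻ⁿ(S)` for a partially defined map `g : U' → α`: the points whose first `n` iterates
are defined and whose `n`-th iterate lies in `S`. -/
def iteratedPullback (g : α → α) (U' : Set α) (n : ℕ) (S : Set α) : Set α :=
  {x | (∀ i < n, g^[i] x ∈ U') ∧ g^[n] x ∈ S}

lemma iteratedPullback_zero : iteratedPullback g U' 0 S = S := by
  simp [iteratedPullback]

lemma iteratedPullback_succ :
    iteratedPullback g U' (n + 1) S = U' ∩ g ⁻¹' iteratedPullback g U' n S := by
  ext x
  simp only [iteratedPullback, mem_ofPred_eq, mem_inter_iff, mem_preimage, Nat.forall_lt_succ_left,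
    iterate_zero_apply, iterate_succ_apply, and_assoc]

lemma iteratedPullback_mono (h : S ⊆ T) : iteratedPullback g U' n S ⊆ iteratedPullback g U' n T :=
  fun _ hx ↦ ⟨hx.1, h hx.2⟩

lemma iterate_mem_iteratedPullback (hx : x ∈ iteratedPullback g U' (m + n) S) :
    g^[m] x ∈ iteratedPullback g U' n S := by
  refine ⟨fun i hi ↦ ?_, ?_⟩
  · rw [← iterate_add_apply]
    exact hx.1 _ (by omega)
  · rw [← iterate_add_apply, add_comm]
    exact hx.2

lemma iteratedPullback_subset (hU : U' ⊆ U) (hS : S ⊆ U) : iteratedPullback g U' n S ⊆ U := by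
  cases n with
  | zero => rwa [iteratedPullback_zero]
  | succ n => exact iteratedPullback_succ.subset.trans (inter_subset_left.trans hU)

end IteratedPullback

namespace IsProperHolomorphic

variable {g : ℂ → ℂ} {U' U S : Set ℂ} (H : IsProperHolomorphic g U' U)

include H

lemma isOpen_iteratedPullback (hS : IsOpen S) (n : ℕ) : IsOpen (iteratedPullback g U' n S) := by
  induction n with
  | zero => rwa [iteratedPullback_zero]
  | succ n ih => exact iteratedPullback_succ ▸ H.isOpen_inter_preimage ih

lemma isCompact_iteratedPullback (hU : U' ⊆ U) (hS : IsCompact S) (hSU : S ⊆ U) (n : ℕ) :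
    IsCompact (iteratedPullback g U' n S) := by
  induction n with
  | zero => rwa [iteratedPullback_zero]
  | succ n ih => exact iteratedPullback_succ ▸ H.properOn _ (iteratedPullback_subset hU hSU) ih

lemma frontier_iteratedPullback_subset (hU : U' ⊆ U) (hS : IsCompact (closure S))
    (hSU : closure S ⊆ U) (n : ℕ) :
    frontier (iteratedPullback g U' n S) ⊆ iteratedPullback g U' n (frontier S) := by
  induction n with
  | zero => simp only [iteratedPullback_zero, subset_rfl]
  | succ n ih =>
    have hcpt := H.isCompact_iteratedPullback hU hS hSU n
    have hcl : closure (iteratedPullback g U' n S) ⊆ iteratedPullback g U' n (closure S) :=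
      closure_minimal (iteratedPullback_mono subset_closure) hcpt.isClosed
    rw [iteratedPullback_succ, iteratedPullback_succ]
    exact (H.frontier_inter_preimage_subset (hcpt.of_isClosed_subset isClosed_closure hcl)
      (hcl.trans (iteratedPullback_subset hU hSU))).trans
        (inter_subset_inter_right _ (preimage_mono ih))

lemma analyticAt_iterate {n : ℕ} {x : ℂ} (hx : x ∈ iteratedPullback g U' n S) :
    AnalyticAt ℂ g^[n] x := by
  induction n generalizing x with
  | zero => exact analyticAt_id
  | succ n ih =>
    rw [iteratedPullback_succ] at hx
    exact (ih hx.2).comp (H.analyticAt hx.1)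

end IsProperHolomorphic

/-- A proper holomorphic map `g : U' → U` between topological disks, where `U'` is strictly smaller
than `U`, which is not injective (that is, has degree at least two) and whose postcritical set is a
compact subset of `U'`. -/
structure IsProperDiskMap (g : ℂ → ℂ) (U' U : Set ℂ) : Prop
    extends IsProperHolomorphic g U' U where
  isConnected_source : IsConnected U'
  isSimplyConnected_source : IsSimplyConnected U'
  isConnected_target : IsConnected U
  isSimplyConnected_target : IsSimplyConnected U
  subset : U' ⊆ U
  ne : U' ≠ U
  not_injOn : ¬ InjOn g U'
  postCrit_subset : postCrit g U' ⊆ U'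
  isCompact_postCrit : IsCompact (postCrit g U')

/-- The postcritical set together with the bounded components of its complement. -/
def filledPostCrit (g : ℂ → ℂ) (U' : Set ℂ) : Set ℂ := filling (postCrit g U')

lemma image_critPts_subset_filledPostCrit {g : ℂ → ℂ} {U' : Set ℂ} :
    g '' critPts g U' ⊆ filledPostCrit g U' := by
  rintro _ ⟨c, hc, rfl⟩
  exact subset_filling _ (subset_closure (mem_iUnion.2 ⟨1, c, hc, rfl⟩))

lemma deriv_ne_zero_of_apply_notMem_filledPostCrit {g : ℂ → ℂ} {U' : Set ℂ} {x : ℂ} (hx : x ∈ U')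
    (hgx : g x ∉ filledPostCrit g U') : deriv g x ≠ 0 :=
  fun h ↦ hgx (image_critPts_subset_filledPostCrit (mem_image_of_mem g ⟨hx, h⟩))

namespace IsProperDiskMap

variable {g : ℂ → ℂ} {U' U S : Set ℂ} (H : IsProperDiskMap g U' U)

include H

lemma isFull_source : IsFull U' :=
  isFull_of_isSimplyConnected H.isOpen_source H.isSimplyConnected_source

lemma isFull_target : IsFull U :=
  isFull_of_isSimplyConnected H.isOpen_target H.isSimplyConnected_target

lemma diff_nonempty : (U \ U').Nonempty :=
  sdiff_nonempty.2 fun h ↦ H.ne (H.subset.antisymm h)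

lemma source_ne_univ : U' ≠ univ := fun h ↦ by
  obtain ⟨q, -, hq⟩ := H.diff_nonempty
  exact hq (h ▸ mem_univ q)

lemma isCompact_filledPostCrit : IsCompact (filledPostCrit g U') :=
  isCompact_filling H.isCompact_postCrit

lemma filledPostCrit_subset_source : filledPostCrit g U' ⊆ U' :=
  H.isFull_source _ H.postCrit_subset H.isCompact_postCrit

lemma mapsTo_postCrit : MapsTo g (postCrit g U') (postCrit g U') := by
  refine mapsTo_iff_image_subset.2 (((H.differentiableOn.continuousOn.mono
    H.postCrit_subset).image_closure).trans (closure_mono ?_))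
  rintro _ ⟨x, hx, rfl⟩
  obtain ⟨n, c, hc, rfl⟩ := mem_iUnion.1 hx
  exact mem_iUnion.2 ⟨n + 1, c, hc, iterate_succ_apply' g n c⟩

lemma mapsTo_filledPostCrit : MapsTo g (filledPostCrit g U') (filledPostCrit g U') := fun _ hx ↦
  filling_mono H.mapsTo_postCrit.image_subset (image_filling_subset H.differentiableOn
    H.isCompact_postCrit H.filledPostCrit_subset_source (mem_image_of_mem g hx))

lemma filledPostCrit_subset_inter_preimage (hS : filledPostCrit g U' ⊆ S) :
    filledPostCrit g U' ⊆ U' ∩ g ⁻¹' S :=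
  fun _ hx ↦ ⟨H.filledPostCrit_subset_source hx, hS (H.mapsTo_filledPostCrit hx)⟩

lemma filledPostCrit_subset_iteratedPullback (hS : filledPostCrit g U' ⊆ S) (n : ℕ) :
    filledPostCrit g U' ⊆ iteratedPullback g U' n S := by
  induction n with
  | zero => rwa [iteratedPullback_zero]
  | succ n ih => exact iteratedPullback_succ ▸ H.filledPostCrit_subset_inter_preimage ih

lemma isOpen_diff_filledPostCrit : IsOpen (U \ filledPostCrit g U') :=
  H.isOpen_target.sdiff H.isCompact_filledPostCrit.isClosed

lemma isPreconnected_diff_filledPostCrit : IsPreconnected (U \ filledPostCrit g U') :=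
  isPreconnected_diff_of_filling_eq H.isOpen_target H.isConnected_target.isPreconnected
    (H.filledPostCrit_subset_source.trans H.subset) H.isCompact_filledPostCrit
    (filling_filling H.isCompact_postCrit.isBounded)

lemma iteratedPullback_subset_diff_filledPostCrit (hS : S ⊆ U \ filledPostCrit g U') (n : ℕ) :
    iteratedPullback g U' n S ⊆ U \ filledPostCrit g U' := fun _ hx ↦
  ⟨iteratedPullback_subset H.subset (hS.trans sdiff_subset) hx,
    fun hX ↦ (hS hx.2).2 (H.mapsTo_filledPostCrit.iterate n hX)⟩

end IsProperDiskMap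

/-! ### Inverse branches of the iterates -/

/-- `h` is a holomorphic branch of `g⁻ⁿ` on `D`. -/
structure IsInverseBranch (g : ℂ → ℂ) (U' : Set ℂ) (n : ℕ) (D : Set ℂ) (h : ℂ → ℂ) : Prop where
  differentiableOn : DifferentiableOn ℂ h D
  apply_mem : ∀ w ∈ D, h w ∈ iteratedPullback g U' n {w}

namespace IsInverseBranch

variable {g h k : ℂ → ℂ} {U' U D E : Set ℂ} {m n : ℕ} {w : ℂ}

lemma mono (hh : IsInverseBranch g U' n D h) (hED : E ⊆ D) : IsInverseBranch g U' n E h :=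
  ⟨hh.differentiableOn.mono hED, fun w hw ↦ hh.apply_mem w (hED hw)⟩

lemma iterate_apply (hh : IsInverseBranch g U' n D h) (hw : w ∈ D) : g^[n] (h w) = w :=
  (hh.apply_mem w hw).2

lemma mapsTo_source (hh : IsInverseBranch g U' n D h) (hn : 0 < n) : MapsTo h D U' :=
  fun w hw ↦ (hh.apply_mem w hw).1 0 hn

lemma deriv_mul_deriv (hh : IsInverseBranch g U' n D h) (H : IsProperHolomorphic g U' U)
    (hD : IsOpen D) (hw : w ∈ D) : deriv g^[n] (h w) * deriv h w = 1 := by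
  have hchain := (H.analyticAt_iterate (hh.apply_mem w hw)).differentiableAt.hasDerivAt.comp w
    (hh.differentiableOn.differentiableAt (hD.mem_nhds hw)).hasDerivAt
  refine hchain.unique ((hasDerivAt_id w).congr_of_eventuallyEq ?_)
  filter_upwards [hD.mem_nhds hw] with v hv using hh.iterate_apply hv

lemma eqOn (hh : IsInverseBranch g U' n D h) (hk : IsInverseBranch g U' n D k)
    (H : IsProperHolomorphic g U' U) (hD : IsOpen D) (hc : IsPreconnected D) (hw : w ∈ D)
    (hwk : h w = k w) : EqOn h k D :=
  eqOn_of_comp_eqOn hD hc hh.differentiableOn hk.differentiableOn hw hwk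
    (H.analyticAt_iterate (hh.apply_mem w hw))
    (left_ne_zero_of_mul_eq_one (hh.deriv_mul_deriv H hD hw))
    fun _ hz ↦ (hh.iterate_apply hz).trans (hk.iterate_apply hz).symm

lemma iterate_comp (hh : IsInverseBranch g U' (m + n) D h) (H : IsProperHolomorphic g U' U)
    (hD : IsOpen D) : IsInverseBranch g U' n D (g^[m] ∘ h) := by
  refine ⟨fun w hw ↦ ?_, fun w hw ↦ iterate_mem_iteratedPullback (hh.apply_mem w hw)⟩
  have hmem : h w ∈ iteratedPullback g U' m univ :=
    ⟨fun i hi ↦ (hh.apply_mem w hw).1 i (by omega), mem_univ _⟩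
  exact ((H.analyticAt_iterate hmem).differentiableAt.comp w
    (hh.differentiableOn.differentiableAt (hD.mem_nhds hw))).differentiableWithinAt

lemma mem_repellingPts (hh : IsInverseBranch g U' n D h) (H : IsProperHolomorphic g U' U)
    (hD : IsOpen D) (hn : 0 < n) (hw : w ∈ D) (hfix : h w = w) (hlt : ‖deriv h w‖ < 1) :
    w ∈ repellingPts g U' := by
  have hmem := hh.apply_mem w hw
  rw [hfix] at hmem
  have hper : IsPeriodicPt g n w := hmem.2
  refine ⟨n, hn, fun j ↦ ?_, hper, ?_⟩
  · rw [← hper.iterate_mod_apply j]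
    exact hmem.1 _ (Nat.mod_lt _ hn)
  · have hmul : ‖deriv g^[n] w‖ * ‖deriv h w‖ = 1 := by
      simpa only [hfix, norm_mul, norm_one] using congrArg norm (hh.deriv_mul_deriv H hD hw)
    by_contra! hle
    exact (mul_lt_one_of_nonneg_of_lt_one_right hle (norm_nonneg _) hlt).ne hmul

end IsInverseBranch

lemma IsProperDiskMap.exists_isInverseBranch {g : ℂ → ℂ} {U' U D : Set ℂ}
    (H : IsProperDiskMap g U' U) (hD : IsOpen D) (hsc : IsSimplyConnected D)
    (hDU : D ⊆ U \ filledPostCrit g U') {n : ℕ} {x z : ℂ} (hz : z ∈ D)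
    (hx : x ∈ iteratedPullback g U' n {z}) : ∃ h, IsInverseBranch g U' n D h ∧ h z = x := by
  have := hsc.simplyConnectedSpace
  induction n generalizing x with
  | zero => exact ⟨id, ⟨differentiableOn_id, fun w _ ↦ ⟨by simp, rfl⟩⟩, hx.2.symm⟩
  | succ n ih =>
    rw [iteratedPullback_succ] at hx
    obtain ⟨h, hh, hhz⟩ := ih hx.2
    have hmap : MapsTo h D (U \ g '' critPts g U') := fun w hw ↦
      sdiff_subset_sdiff_right image_critPts_subset_filledPostCrit
        (H.iteratedPullback_subset_diff_filledPostCrit (singleton_subset_iff.2 (hDU hw)) n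
          (hh.apply_mem w hw))
    obtain ⟨σ, hσ, hσz, hσg⟩ := H.exists_lift hD hh.differentiableOn hmap hz hx.1 hhz.symm
    refine ⟨σ, ⟨hσ, fun w hw ↦ ?_⟩, hσz⟩
    rw [iteratedPullback_succ]
    refine ⟨(hσg w hw).1, ?_⟩
    rw [mem_preimage, (hσg w hw).2]
    exact hh.apply_mem w hw

lemma isSimplyConnected_ball (z : ℂ) {r : ℝ} (hr : 0 < r) : IsSimplyConnected (ball z r) := by
  have := (convex_ball z r).contractibleSpace (nonempty_ball.2 hr)
  exact SimplyConnectedSpace.ofContractible _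

/-! ### Limits of inverse branches -/

/-- `φ` is a locally uniform limit on `D`, along `l`, of inverse branches of `g^[m i]`. -/
def IsLimitOfInverseBranches {ι : Type*} (g : ℂ → ℂ) (U' : Set ℂ) (l : Filter ι) (m : ι → ℕ)
    (D : Set ℂ) (φ : ℂ → ℂ) : Prop :=
  ∃ e : ι → ℂ → ℂ, (∀ i, IsInverseBranch g U' (m i) D (e i)) ∧ TendstoLocallyUniformlyOn e φ l D

namespace IsLimitOfInverseBranches

variable {ι : Type*} {g φ : ℂ → ℂ} {U' U D E : Set ℂ} {l : Ultrafilter ι} {m : ι → ℕ} {y z : ℂ}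

lemma mono {l : Filter ι} (h : IsLimitOfInverseBranches g U' l m D φ) (hED : E ⊆ D) :
    IsLimitOfInverseBranches g U' l m E φ := by
  obtain ⟨e, he, hlim⟩ := h
  exact ⟨e, fun i ↦ (he i).mono hED, hlim.mono hED⟩

lemma extend (h : IsLimitOfInverseBranches g U' l m D φ) (H : IsProperDiskMap g U' U)
    (hm : ∀ i, 0 < m i) (hD : IsOpen D) (hE : IsOpen E) (hsc : IsSimplyConnected E)
    (hEU : E ⊆ U \ filledPostCrit g U') (hφ : DifferentiableOn ℂ φ E) (hzD : z ∈ D) (hzE : z ∈ E) :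
    IsLimitOfInverseBranches g U' l m E φ := by
  obtain ⟨s, hs, hsDE⟩ := Metric.isOpen_iff.1 (hD.inter hE) z ⟨hzD, hzE⟩
  obtain ⟨e, he, hlim⟩ := h.mono (hsDE.trans inter_subset_left)
  have hz := mem_ball_self (x := z) hs
  choose k hk hkz using fun i ↦ H.exists_isInverseBranch hE hsc hEU hzE ((he i).apply_mem z hz)
  have hcE := hsc.isPathConnected.isConnected.isPreconnected
  have hlimz : Tendsto (fun i ↦ k i z) l (𝓝 (φ z)) := by
    simpa only [hkz] using hlim.tendsto_at hz
  obtain ⟨f, hf⟩ := exists_tendstoLocallyUniformlyOn_of_mapsTo l H.isOpen_source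
    H.isConnected_source H.isFull_source H.source_ne_univ hE hcE
    (fun i ↦ (hk i).differentiableOn) (fun i ↦ (hk i).mapsTo_source (hm i)) hzE
    (tendsto_const_nhds (x := z)) hlimz
  have hfd := hf.differentiableOn (Eventually.of_forall fun i ↦ (hk i).differentiableOn) hE
  refine ⟨k, hk, hf.congr_right ((hfd.analyticOnNhd hE).eqOn_of_preconnected_of_eventuallyEq
    (hφ.analyticOnNhd hE) hcE hzE ?_)⟩
  filter_upwards [isOpen_ball.mem_nhds hz] with w hw
  have hke : ∀ i, k i w = e i w := fun i ↦
    ((hk i).mono (hsDE.trans inter_subset_right)).eqOn (he i) H.toIsProperHolomorphic isOpen_ball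
      (convex_ball z s).isPreconnected hz (hkz i) hw
  refine tendsto_nhds_unique (hf.tendsto_at (hsDE hw).2) ?_
  simpa only [hke] using hlim.tendsto_at hw

lemma exists_ball (h : IsLimitOfInverseBranches g U' l m D φ) (H : IsProperDiskMap g U' U)
    (hm : ∀ i, 0 < m i) (hD : IsOpen D) (hne : (D ∩ (U \ filledPostCrit g U')).Nonempty)
    (hφ : Differentiable ℂ φ) (hz : z ∈ U \ filledPostCrit g U') :
    ∃ r > 0, ball z r ⊆ U \ filledPostCrit g U' ∧
      IsLimitOfInverseBranches g U' l m (ball z r) φ := by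
  let Q := {z | ∃ S, IsOpen S ∧ z ∈ S ∧ IsLimitOfInverseBranches g U' l m S φ}
  have hQ : IsOpen Q := isOpen_iff_mem_nhds.2 fun w ⟨S, hS, hw, hlim⟩ ↦
    mem_of_superset (hS.mem_nhds hw) fun v hv ↦ ⟨S, hS, hv, hlim⟩
  have hextend : ∀ {v w : ℂ} {r : ℝ}, 0 < r → ball w r ⊆ U \ filledPostCrit g U' → v ∈ ball w r →
      v ∈ Q → IsLimitOfInverseBranches g U' l m (ball w r) φ := fun hr hb hv ⟨_, hS, hvS, hlim⟩ ↦
    hlim.extend H hm hS isOpen_ball (isSimplyConnected_ball _ hr) hb hφ.differentiableOn hvS hv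
  obtain ⟨x, hxD, hxU⟩ := hne
  have hall : U \ filledPostCrit g U' ⊆ Q := by
    refine H.isPreconnected_diff_filledPostCrit.subset_of_closure_inter_subset hQ
      ⟨x, hxU, D, hD, hxD, h⟩ ?_
    rintro w ⟨hwQ, hwU⟩
    obtain ⟨r, hr, hb⟩ := Metric.isOpen_iff.1 H.isOpen_diff_filledPostCrit w hwU
    obtain ⟨v, hvQ, hvw⟩ := Metric.mem_closure_iff.1 hwQ r hr
    exact ⟨_, isOpen_ball, mem_ball_self hr, hextend hr hb (mem_ball'.2 hvw) hvQ⟩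
  obtain ⟨r, hr, hb⟩ := Metric.isOpen_iff.1 H.isOpen_diff_filledPostCrit z hz
  exact ⟨r, hr, hb, hextend hr hb (mem_ball_self hr) (hall hz)⟩

/-- By continuation the identity would also be a limit near a point of `U \ U'`, which the branches
would then have to attain, although they map into `U'`. -/
lemma not_id (H : IsProperDiskMap g U' U) (hm : ∀ i, 0 < m i) (hD : IsOpen D)
    (hne : (D ∩ (U \ filledPostCrit g U')).Nonempty) :
    ¬ IsLimitOfInverseBranches g U' l m D id := fun h ↦ by
  obtain ⟨q, hqU, hqU'⟩ := H.diff_nonempty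
  obtain ⟨r, hr, -, e, he, hlim⟩ := h.exists_ball H hm hD hne differentiable_id
    ⟨hqU, fun hq ↦ hqU' (H.filledPostCrit_subset_source hq)⟩
  obtain ⟨δ, hδ, hev⟩ := exists_eventually_ball_subset_image isOpen_ball
    (fun i ↦ (he i).differentiableOn) hlim (mem_ball_self hr)
    (fun h ↦ infinite_of_mem_nhds q h (finite_singleton q)) (ball_mem_nhds q hr)
  obtain ⟨i, hi⟩ := hev.exists
  obtain ⟨x, hx, hxq⟩ := hi (mem_ball_self hδ)
  rw [id] at hxq
  exact hqU' (hxq ▸ (he i).mapsTo_source (hm i) hx)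

lemma mem_closure_repellingPts (h : IsLimitOfInverseBranches g U' l m D (fun _ ↦ y))
    (H : IsProperDiskMap g U' U) (hm : ∀ i, 0 < m i) (hD : IsOpen D)
    (hne : (D ∩ (U \ filledPostCrit g U')).Nonempty) (hy : y ∈ U \ filledPostCrit g U') :
    y ∈ closure (repellingPts g U') := by
  obtain ⟨r, hr, -, e, he, hlim⟩ := h.exists_ball H hm hD hne (differentiable_const y) hy
  have hyr := mem_ball_self (x := y) hr
  have hderiv : Tendsto (fun q : ι × ℂ ↦ deriv (e q.1) q.2) (l ×ˢ 𝓝 y) (𝓝 0) :=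
    tendsto_prod_nhds_of_tendstoLocallyUniformlyOn isOpen_ball (f := fun _ ↦ 0) continuousOn_const
      ((hlim.deriv (Eventually.of_forall fun i ↦ (he i).differentiableOn) isOpen_ball).congr_right
        fun x _ ↦ by simp) hyr
  obtain ⟨A, hA, B, hB, hAB⟩ := eventually_prod_iff.1
    (hderiv.norm.eventually_lt_const (by simp : ‖(0 : ℂ)‖ < 1))
  refine mem_closure_iff_nhds.2 fun N hN ↦ ?_
  obtain ⟨i, hiA, a, ⟨⟨haN, haB⟩, har⟩, hfix⟩ := (Eventually.and hA
    (eventually_exists_eq_self_of_tendsto_const isOpen_ball (fun i ↦ (he i).differentiableOn) hlim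
      hyr (inter_mem (inter_mem hN hB) (isOpen_ball.mem_nhds hyr)))).exists
  exact ⟨a, haN, (he i).mem_repellingPts H.toIsProperHolomorphic isOpen_ball (hm i) har hfix
    (hAB hiA haB)⟩

end IsLimitOfInverseBranches

lemma exists_ultrafilter_lt {ι : Type*} (l : Ultrafilter ι) {n : ι → ℕ} (hn : Tendsto n l atTop) :
    ∃ L : Ultrafilter {p : ι × ι // n p.1 < n p.2},
      Tendsto (fun p : {p : ι × ι // n p.1 < n p.2} ↦ p.1.1) L l ∧
      Tendsto (fun p : {p : ι × ι // n p.1 < n p.2} ↦ p.1.2) L l := by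
  have : (comap (Subtype.val : {p : ι × ι // n p.1 < n p.2} → ι × ι)
      ((l : Filter ι) ×ˢ (l : Filter ι))).NeBot := by
    refine comap_neBot fun t ht ↦ ?_
    obtain ⟨A, hA, B, hB, hAB⟩ := mem_prod_iff.1 ht
    obtain ⟨i, hi⟩ := l.neBot.nonempty_of_mem hA
    obtain ⟨j, hj, hij⟩ := l.neBot.nonempty_of_mem (inter_mem hB (hn.eventually_gt_atTop (n i)))
    exact ⟨⟨(i, j), hij⟩, hAB ⟨hi, hj⟩⟩
  exact ⟨Ultrafilter.of _, tendsto_prod_iff'.1 (tendsto_comap.mono_left (Ultrafilter.of_le _))⟩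

namespace IsProperDiskMap

variable {ι : Type*} {g f : ℂ → ℂ} {U' U D : Set ℂ} (H : IsProperDiskMap g U' U)
  {l : Ultrafilter ι} {n : ι → ℕ} {h : ι → ℂ → ℂ} {y z : ℂ}

include H

/-- If `h i → f` were not locally constant, then `g^[n i] ∘ h j`, a branch of `g⁻ᵐ` with
`m = n j - n i`, would tend to the identity. -/
lemma eventually_eq_of_tendsto_inverseBranch (hn : Tendsto n l atTop) (hD : IsOpen D)
    (hDU : D ⊆ U \ filledPostCrit g U') (hh : ∀ i, IsInverseBranch g U' (n i) D (h i))
    (hlim : TendstoLocallyUniformlyOn h f l D) (hz : z ∈ D) : ∀ᶠ w in 𝓝 z, f w = f z := by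
  by_contra hnc
  have hhd := fun i ↦ (hh i).differentiableOn
  have hfc : ContinuousOn f D := (hlim.differentiableOn (Eventually.of_forall hhd) hD).continuousOn
  have hinv := eventually_tendsto_leftInverse hD hhd hlim hz hnc (G := fun i ↦ g^[n i])
    (fun i ↦ by
      rintro _ ⟨w, hw, rfl⟩
      exact (H.analyticAt_iterate ((hh i).apply_mem w hw)).differentiableAt.differentiableWithinAt)
    fun i w hw ↦ (hh i).iterate_apply hw
  obtain ⟨s, hs, hsub⟩ := Metric.eventually_nhds_iff_ball.1 ((hD.eventually_mem hz).and hinv)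
  have hsD : ball z s ⊆ D := fun w hw ↦ (hsub w hw).1
  obtain ⟨L, hL₁, hL₂⟩ := exists_ultrafilter_lt l hn
  refine IsLimitOfInverseBranches.not_id H (l := L) (m := fun p ↦ n p.1.2 - n p.1.1)
    (fun p ↦ Nat.sub_pos_of_lt p.2) isOpen_ball
    ⟨z, mem_ball_self hs, hDU hz⟩ ⟨fun p ↦ g^[n p.1.1] ∘ h p.1.2, fun p ↦ ?_, ?_⟩
  · have hbranch := (hh p.1.2).mono hsD
    rw [← Nat.add_sub_of_le p.2.le] at hbranch
    exact hbranch.iterate_comp H.toIsProperHolomorphic isOpen_ball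
  · refine (tendstoLocallyUniformlyOn_iff_tendsto_nhds continuousOn_id).2 fun x hx ↦ ?_
    rw [isOpen_ball.nhdsWithin_eq hx]
    have hhx := (tendsto_prod_nhds_of_tendstoLocallyUniformlyOn hD hfc hlim (hsD hx)).comp
      ((hL₂.comp tendsto_fst).prodMk tendsto_snd)
    exact (hsub x hx).2.comp ((hL₁.comp tendsto_fst).prodMk hhx)

lemma isLimitOfInverseBranches_const (hn : Tendsto n l atTop) (hn0 : ∀ i, 0 < n i)
    (hD : IsOpen D) (hc : IsPreconnected D) (hDU : D ⊆ U \ filledPostCrit g U')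
    (hh : ∀ i, IsInverseBranch g U' (n i) D (h i)) {w : ι → ℂ} (hz : z ∈ D)
    (hw : Tendsto w l (𝓝 z)) (hy : Tendsto (fun i ↦ h i (w i)) l (𝓝 y)) :
    IsLimitOfInverseBranches g U' l n D fun _ ↦ y := by
  have hhd := fun i ↦ (hh i).differentiableOn
  obtain ⟨f, hf⟩ := exists_tendstoLocallyUniformlyOn_of_mapsTo l H.isOpen_source
    H.isConnected_source H.isFull_source H.source_ne_univ hD hc hhd
    (fun i ↦ (hh i).mapsTo_source (hn0 i)) hz hw hy
  have hfd : DifferentiableOn ℂ f D := hf.differentiableOn (Eventually.of_forall hhd) hD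
  have hfz : f z = y := tendsto_nhds_unique
    ((tendsto_prod_nhds_of_tendstoLocallyUniformlyOn hD hfd.continuousOn hf hz).comp
      (tendsto_id.prodMk hw)) hy
  exact ⟨h, hh, hf.congr_right (eq_const_of_eventually_eq hD hc hfd hz
    (hfz ▸ H.eventually_eq_of_tendsto_inverseBranch hn hD hDU hh hf hz))⟩

lemma mem_closure_repellingPts_of_tendsto (hn : Tendsto n l atTop) {x w : ι → ℂ}
    (hx : ∀ i, x i ∈ iteratedPullback g U' (n i) {w i}) (hxy : Tendsto x l (𝓝 y))
    (hwz : Tendsto w l (𝓝 z)) (hy : y ∈ U \ filledPostCrit g U')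
    (hz : z ∈ U \ filledPostCrit g U') : y ∈ closure (repellingPts g U') := by
  obtain ⟨r, hr, hb⟩ := Metric.isOpen_iff.1 H.isOpen_diff_filledPostCrit z hz
  have hlarge : {i | w i ∈ ball z r ∧ 0 < n i} ∈ l :=
    (hwz.eventually (ball_mem_nhds z hr)).and (hn.eventually_gt_atTop 0)
  let J := {i // w i ∈ ball z r ∧ 0 < n i}
  let L : Ultrafilter J := l.comap Subtype.val_injective (by rwa [Subtype.range_coe_subtype])
  have hL : Tendsto (Subtype.val : J → ι) L l := tendsto_comap
  choose h hh hhx using fun i : J ↦ H.exists_isInverseBranch isOpen_ball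
    (isSimplyConnected_ball z hr) hb i.2.1 (hx i)
  exact (H.isLimitOfInverseBranches_const (hn.comp hL) (fun i ↦ i.2.2) isOpen_ball
    (convex_ball z r).isPreconnected hb hh (mem_ball_self hr) (hwz.comp hL)
    ((hxy.comp hL).congr fun i ↦ (hhx i).symm)).mem_closure_repellingPts H (fun i ↦ i.2.2)
      isOpen_ball ⟨z, mem_ball_self hr, hz⟩ hy

lemma eventually_disjoint_iteratedPullback {Γ Y : Set ℂ} (hΓ : IsCompact Γ) (hY : IsCompact Y)
    (hΓU : Γ ⊆ U \ filledPostCrit g U') (hYU : Y ⊆ U \ filledPostCrit g U')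
    (hYR : Disjoint Y (closure (repellingPts g U'))) :
    ∀ᶠ n in atTop, Disjoint Y (iteratedPullback g U' n Γ) := by
  by_contra hcon
  rw [eventually_atTop] at hcon
  push Not at hcon
  choose n hn hmeet using hcon
  choose x hxY hx using fun i ↦ not_disjoint_iff.1 (hmeet i)
  let l : Ultrafilter ℕ := hyperfilter ℕ
  obtain ⟨y, hyY, hy⟩ := hY.ultrafilter_le_nhds (l.map x)
    (le_principal_iff.2 (Ultrafilter.mem_map.2 (univ_mem' hxY)))
  obtain ⟨z, hzΓ, hz⟩ := hΓ.ultrafilter_le_nhds (l.map fun i ↦ g^[n i] (x i))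
    (le_principal_iff.2 (Ultrafilter.mem_map.2 (univ_mem' fun i ↦ (hx i).2)))
  exact disjoint_left.1 hYR hyY (H.mem_closure_repellingPts_of_tendsto (l := l)
    ((tendsto_atTop_mono hn tendsto_id).mono_left Nat.hyperfilter_le_atTop)
    (fun i ↦ ⟨(hx i).1, rfl⟩) hy hz (hYU hyY) (hΓU hzΓ))

/-- Without critical points, `g` would be a covering of the simply connected `U`. -/
lemma postCrit_nonempty : (postCrit g U').Nonempty := by
  by_contra hne
  have hX : filledPostCrit g U' = ∅ := by
    rw [filledPostCrit, not_nonempty_iff_eq_empty.1 hne, filling_empty]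
  have := H.isSimplyConnected_target.simplyConnectedSpace
  obtain ⟨x₀, hx₀⟩ := H.isConnected_source.nonempty
  obtain ⟨σ, hσ, hσ₀, hσg⟩ := H.exists_lift H.isOpen_target (f := id) differentiableOn_id
    (fun w hw ↦ ⟨hw, fun hc ↦ hX.le (image_critPts_subset_filledPostCrit hc)⟩)
    (H.mapsTo hx₀) hx₀ rfl
  have hσ_left : EqOn id (σ ∘ g) U' := eqOn_of_comp_eqOn H.isOpen_source
    H.isConnected_source.isPreconnected differentiableOn_id
    (hσ.comp H.differentiableOn H.mapsTo) hx₀ hσ₀.symm (H.analyticAt hx₀)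
    (deriv_ne_zero_of_apply_notMem_filledPostCrit hx₀ (by simp [hX]))
    fun x hx ↦ (hσg _ (H.mapsTo hx)).2.symm
  exact H.not_injOn (LeftInvOn.injOn (f₁' := σ) fun x hx ↦ (hσ_left hx).symm)

end IsProperDiskMap

/-! ### Preimages under the exponential -/

lemma subset_of_isPreconnected_of_forall_nhds {X : Type*} [TopologicalSpace X] {A B : Set X}
    (hA : IsPreconnected A) (hne : (A ∩ B).Nonempty)
    (h : ∀ y ∈ A, ∃ O ∈ 𝓝 y, (O ∩ B).Nonempty → O ⊆ B) : A ⊆ B := by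
  refine subset_of_isPreconnected_of_disjoint_frontier hA (disjoint_left.2 fun y hy hfr ↦ ?_) hne
  obtain ⟨O, hO, hOB⟩ := h y hy
  exact hfr.2 (mem_interior_iff_mem_nhds.2
    (mem_of_superset hO (hOB (mem_closure_iff_nhds.1 hfr.1 O hO))))

lemma subset_connectedComponentIn_of_inter_nonempty {X : Type*} [TopologicalSpace X]
    {T Q : Set X} {a : X} (hQ : IsPreconnected Q) (hQT : Q ⊆ T)
    (hne : (Q ∩ connectedComponentIn T a).Nonempty) : Q ⊆ connectedComponentIn T a := by
  obtain ⟨x, hxQ, hx⟩ := hne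
  exact connectedComponentIn_eq hx ▸ hQ.subset_connectedComponentIn hxQ hQT

/-- The universal covering `w ↦ p + exp w` of the punctured plane `ℂ \ {p}`. -/
def expAround (p w : ℂ) : ℂ := p + Complex.exp w

lemma expAround_sub (p w : ℂ) : expAround p w - p = Complex.exp w :=
  add_sub_cancel_left _ _

lemma differentiable_expAround (p : ℂ) : Differentiable ℂ (expAround p) :=
  Complex.differentiable_exp.const_add p

lemma expAround_ne (p w : ℂ) : expAround p w ≠ p :=
  sub_ne_zero.1 (expAround_sub p w ▸ Complex.exp_ne_zero w)

lemma expAround_log {p y : ℂ} (hy : y ≠ p) : expAround p (Complex.log (y - p)) = y := by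
  rw [expAround, Complex.exp_log (sub_ne_zero.2 hy), add_sub_cancel]

lemma expAround_eq_iff {p w t : ℂ} :
    expAround p w = expAround p t ↔ ∃ n : ℤ, w = t + n * (2 * Real.pi * Complex.I) :=
  (add_right_inj p).trans Complex.exp_eq_exp_iff_exists_int

lemma isOpen_image_expAround (p : ℂ) {B : Set ℂ} (hB : IsOpen B) :
    IsOpen (expAround p '' B) := by
  refine isOpen_iff_mem_nhds.2 ?_
  rintro _ ⟨z, hz, rfl⟩
  have hd : HasStrictDerivAt (expAround p) (Complex.exp z) z :=
    (Complex.hasStrictDerivAt_exp z).const_add p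
  exact hd.map_nhds_eq (Complex.exp_ne_zero z) ▸ image_mem_map (hB.mem_nhds hz)

lemma exists_rightInverse_expAround {p y w : ℂ} (hw : expAround p w ∈ ball y ‖y - p‖) :
    ∃ l : ℂ → ℂ, DifferentiableOn ℂ l (ball y ‖y - p‖) ∧ l (expAround p w) = w ∧
      ∀ z ∈ ball y ‖y - p‖, expAround p (l z) = z := by
  have hn : 0 < ‖y - p‖ := dist_nonneg.trans_lt hw
  have hyp : y - p ≠ 0 := norm_pos_iff.1 hn
  have hslit : ∀ z ∈ ball y ‖y - p‖, (z - p) / (y - p) ∈ Complex.slitPlane := by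
    intro z hz
    have hsplit : (z - p) / (y - p) = 1 + (z - y) / (y - p) := by field_simp; ring
    rw [hsplit]
    apply Complex.mem_slitPlane_of_norm_lt_one
    rwa [norm_div, div_lt_one hn, ← dist_eq_norm]
  refine ⟨fun z ↦ Complex.log ((z - p) / (y - p)) +
    (w - Complex.log ((expAround p w - p) / (y - p))), fun z hz ↦ ?_, by simp, fun z hz ↦ ?_⟩
  · have hlog : DifferentiableAt ℂ (fun z ↦ Complex.log ((z - p) / (y - p))) z :=
      DifferentiableAt.clog (by fun_prop) (hslit z hz)
    exact (hlog.add (differentiableAt_const _)).differentiableWithinAt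
  · rw [expAround, Complex.exp_add, Complex.exp_sub,
      Complex.exp_log (Complex.slitPlane_ne_zero (hslit z hz)),
      Complex.exp_log (Complex.slitPlane_ne_zero (hslit _ hw)), expAround_sub]
    have := Complex.exp_ne_zero w
    field_simp
    ring

lemma subset_image_expAround_connectedComponentIn {G : Set ℂ} {p a : ℂ} (hG : IsOpen G)
    (hc : IsPreconnected G) (hp : p ∉ G) (ha : expAround p a ∈ G) :
    G ⊆ expAround p '' connectedComponentIn (expAround p ⁻¹' G) a := by
  have haT : a ∈ connectedComponentIn (expAround p ⁻¹' G) a := mem_connectedComponentIn ha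
  refine subset_of_isPreconnected_of_forall_nhds hc ⟨_, ha, a, haT, rfl⟩ fun y hy ↦ ?_
  have hyp : 0 < ‖y - p‖ := norm_pos_iff.2 (sub_ne_zero.2 fun h ↦ hp (h ▸ hy))
  obtain ⟨ε, hε, hεG⟩ := Metric.isOpen_iff.1 hG y hy
  have hsub : ball y (min ε ‖y - p‖) ⊆ ball y ‖y - p‖ := ball_subset_ball (min_le_right _ _)
  refine ⟨_, ball_mem_nhds y (lt_min hε hyp), ?_⟩
  rintro ⟨_, hwb, w, hw, rfl⟩
  obtain ⟨l, hl, hlw, hexp⟩ := exists_rightInverse_expAround (hsub hwb)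
  have himage : l '' ball y (min ε ‖y - p‖) ⊆ connectedComponentIn (expAround p ⁻¹' G) a := by
    refine subset_connectedComponentIn_of_inter_nonempty
      ((convex_ball y _).isPreconnected.image l (hl.continuousOn.mono hsub)) ?_
      ⟨w, ⟨_, hwb, hlw⟩, hw⟩
    rintro _ ⟨z, hz, rfl⟩
    rw [mem_preimage, hexp z (hsub hz)]
    exact hεG (ball_subset_ball (min_le_left _ _) hz)
  exact fun z hz ↦ ⟨l z, himage (mem_image_of_mem l hz), hexp z (hsub hz)⟩

lemma isPreconnected_preimage_expAround {G : Set ℂ} {p : ℂ} (hG : IsOpen G)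
    (hc : IsPreconnected G) (hp : p ∉ G) {r : ℝ} (hr0 : 0 < r) (hr : sphere p r ⊆ G) :
    IsPreconnected (expAround p ⁻¹' G) := by
  set L : Set ℂ := Complex.reCLM ⁻¹' {Real.log r}
  have hLT : L ⊆ expAround p ⁻¹' G := fun w hw ↦ hr <| by
    rw [mem_sphere, dist_eq_norm, expAround_sub, Complex.norm_exp, ← Real.exp_log hr0]
    exact congrArg Real.exp hw
  have hL : IsPreconnected L :=
    ((convex_singleton (𝕜 := ℝ) _).linear_preimage Complex.reCLM.toLinearMap).isPreconnected
  have haL : (Real.log r : ℂ) ∈ L := Complex.ofReal_re _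
  set T := connectedComponentIn (expAround p ⁻¹' G) (Real.log r : ℂ)
  have hLT' : L ⊆ T := hL.subset_connectedComponentIn haL hLT
  suffices expAround p ⁻¹' G ⊆ T from
    this.antisymm (connectedComponentIn_subset _ _) ▸ isPreconnected_connectedComponentIn
  intro w hw
  obtain ⟨t, ht, hwt⟩ := subset_image_expAround_connectedComponentIn hG hc hp (hLT haL) hw
  obtain ⟨n, rfl⟩ := expAround_eq_iff.1 hwt.symm
  have htranslate : (fun z ↦ z + n * (2 * Real.pi * Complex.I)) '' T ⊆ T := by
    refine subset_connectedComponentIn_of_inter_nonempty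
      (isPreconnected_connectedComponentIn.image _ (by fun_prop)) ?_
      ⟨_, mem_image_of_mem _ (hLT' haL), hLT' (by simp [L])⟩
    rintro _ ⟨z, hz, rfl⟩
    rw [mem_preimage, expAround_eq_iff.2 ⟨n, rfl⟩]
    exact connectedComponentIn_subset (expAround p ⁻¹' G) _ hz
  exact htranslate (mem_image_of_mem _ ht)

lemma isPreconnected_preimage_expAround_of_mem {N : Set ℂ} {p : ℂ} (hN : IsOpen N)
    (hNc : IsPreconnected N) (hp : p ∈ N) : IsPreconnected (expAround p ⁻¹' N) := by
  have hpunctured : expAround p ⁻¹' N = expAround p ⁻¹' (N ∩ {p}ᶜ) := by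
    ext w; simp [expAround_ne]
  obtain ⟨r, hr, hrN⟩ := Metric.nhds_basis_closedBall.mem_iff.1 (hN.mem_nhds hp)
  rw [hpunctured]
  refine isPreconnected_preimage_expAround (hN.inter isOpen_compl_singleton) ?_ (by simp) hr
    fun z hz ↦ ⟨hrN (sphere_subset_closedBall hz), ne_of_mem_sphere hz hr.ne'⟩
  refine isPreconnected_inter_of_isOpen hN isOpen_compl_singleton hNc ?_ ?_
  · exact (isConnected_compl_singleton_of_one_lt_rank (by simp) p).isPreconnected
  · exact compl_subset_iff_union.1 (compl_subset_compl.2 (singleton_subset_iff.2 hp))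

lemma isPreconnected_preimage_expAround_compl {K : Set ℂ} {p : ℂ} (hK : IsCompact K)
    (hfill : filling K = K) (hp : p ∈ K) : IsPreconnected (expAround p ⁻¹' Kᶜ) := by
  obtain ⟨r, hr⟩ := hK.isBounded.subset_closedBall p
  refine isPreconnected_preimage_expAround (r := max r 0 + 1) hK.isClosed.isOpen_compl ?_
    (by simpa using hp) (by positivity) fun z hz hzK ↦ ?_
  · exact hfill ▸ (isConnected_compl_filling hK.isBounded).isPreconnected
  · have hle : dist z p ≤ r := hr hzK
    rw [mem_sphere.1 hz] at hle
    linarith [le_max_left r 0]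

lemma isPreconnected_preimage_expAround_diff {K N : Set ℂ} {p : ℂ} (hK : IsCompact K)
    (hfill : filling K = K) (hp : p ∈ K) (hN : IsOpen N) (hNc : IsPreconnected N)
    (hKN : K ⊆ N) : IsPreconnected (expAround p ⁻¹' (N \ K)) := by
  have hcont := (differentiable_expAround p).continuous
  refine isPreconnected_inter_of_isOpen (hN.preimage hcont)
    (hK.isClosed.isOpen_compl.preimage hcont)
    (isPreconnected_preimage_expAround_of_mem hN hNc (hKN hp))
    (isPreconnected_preimage_expAround_compl hK hfill hp) ?_
  exact compl_subset_iff_union.1 fun w hw hwK ↦ hw (hKN hwK)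

/-- If a bounded complementary component `B` of a compact set in the preimage met the preimage of
`K`, then its image, an open set whose frontier avoids `K`, would contain `K` and hence `p`. -/
lemma isFull_preimage_expAround_diff {K U : Set ℂ} {p : ℂ} (hKc : IsPreconnected K)
    (hp : p ∈ K) (hU : IsFull U) : IsFull (expAround p ⁻¹' (U \ K)) := by
  intro L hL hLc w hw
  have hcont := (differentiable_expAround p).continuous
  refine ⟨hU _ ?_ (hLc.image hcont) (image_filling_subset
    (differentiable_expAround p).differentiableOn hLc (subset_univ _) (mem_image_of_mem _ hw)),
    fun hwK ↦ ?_⟩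
  · rintro _ ⟨z, hz, rfl⟩
    exact (hL hz).1
  set B := connectedComponentIn Lᶜ w
  have hB : Bornology.IsBounded B := hw
  have hBo : IsOpen B := hLc.isClosed.isOpen_compl.connectedComponentIn
  have hwB : w ∈ B := mem_connectedComponentIn fun h ↦ (hL h).2 hwK
  have hfrontier : frontier B ⊆ L :=
    compl_compl L ▸ frontier_connectedComponentIn_subset hLc.isClosed.isOpen_compl w
  have hclosure : closure (expAround p '' B) ⊆ expAround p '' closure B :=
    closure_minimal (image_mono subset_closure)
      (hB.isCompact_closure.image hcont).isClosed
  have hKB : K ⊆ expAround p '' B := by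
    refine subset_of_isPreconnected_of_disjoint_frontier hKc
      (disjoint_left.2 fun x hx hfr ↦ ?_) ⟨_, hwK, w, hwB, rfl⟩
    rw [(isOpen_image_expAround p hBo).frontier_eq] at hfr
    obtain ⟨z, hz, rfl⟩ := hclosure hfr.1
    have hzB : z ∈ frontier B :=
      hBo.frontier_eq ▸ ⟨hz, fun h ↦ hfr.2 (mem_image_of_mem _ h)⟩
    exact (hL (hfrontier hzB)).2 hx
  obtain ⟨z, -, hz⟩ := hKB hp
  exact expAround_ne p z hz

/-! ### Connectedness of preimages -/

lemma inter_preimage_diff_eq_image_lift {g σ : ℂ → ℂ} {U' U K N : Set ℂ} {p : ℂ}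
    (hNU : N ⊆ U)
    (hlift : ∀ s ∈ expAround p ⁻¹' (U \ K), σ s ∈ U' ∧ g (σ s) = expAround p s)
    (honto : U' \ g ⁻¹' K ⊆ σ '' (expAround p ⁻¹' (U \ K))) :
    U' ∩ g ⁻¹' (N \ K) = σ '' (expAround p ⁻¹' (N \ K)) := by
  ext x
  constructor
  · rintro ⟨hx, hxN, hxK⟩
    obtain ⟨s, hs, rfl⟩ := honto ⟨hx, hxK⟩
    rw [(hlift s hs).2] at hxN hxK
    exact ⟨s, ⟨hxN, hxK⟩, rfl⟩
  · rintro ⟨s, hs, rfl⟩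
    obtain ⟨hσs, hgσs⟩ := hlift s ⟨hNU hs.1, hs.2⟩
    exact ⟨hσs, by rwa [mem_preimage, hgσs]⟩

namespace IsProperHolomorphic

variable {g : ℂ → ℂ} {U' U K N u v : Set ℂ} (H : IsProperHolomorphic g U' U)

include H

lemma filling_inter_preimage_eq (hU' : IsFull U') (hK : IsCompact K) (hKU : K ⊆ U)
    (hfill : filling K = K) : filling (U' ∩ g ⁻¹' K) = U' ∩ g ⁻¹' K := by
  have hc := H.properOn K hKU hK
  have hsub : filling (U' ∩ g ⁻¹' K) ⊆ U' := hU' _ inter_subset_left hc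
  refine (subset_filling _).antisymm' fun x hx ↦ ⟨hsub hx, ?_⟩
  have himage : g '' (U' ∩ g ⁻¹' K) ⊆ K := image_subset_iff.2 inter_subset_right
  rw [mem_preimage, ← hfill]
  exact filling_mono himage (image_filling_subset H.differentiableOn hc hsub
    (mem_image_of_mem g hx))

lemma isPreconnected_diff_preimage (hU' : IsFull U') (hc : IsPreconnected U') (hK : IsCompact K)
    (hKU : K ⊆ U) (hfill : filling K = K) : IsPreconnected (U' \ g ⁻¹' K) := by
  rw [← sdiff_self_inter]
  exact isPreconnected_diff_of_filling_eq H.isOpen_source hc inter_subset_left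
    (H.properOn K hKU hK) (H.filling_inter_preimage_eq hU' hK hKU hfill)

/-- A lift `σ` of `expAround p` continues along every disk `B` on which `expAround p` has an inverse
branch `l` over `g`: there `σ ∘ l ∘ g` agrees with the identity. -/
lemma diff_preimage_subset_image_lift {p : ℂ} {σ : ℂ → ℂ} (hK : IsClosed K) (hp : p ∈ K)
    (hcrit : g '' critPts g U' ⊆ K) (hpre : IsPreconnected (U' \ g ⁻¹' K))
    (hσ : DifferentiableOn ℂ σ (expAround p ⁻¹' (U \ K)))
    (hlift : ∀ s ∈ expAround p ⁻¹' (U \ K), σ s ∈ U' ∧ g (σ s) = expAround p s)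
    (hne : (U' \ g ⁻¹' K ∩ σ '' (expAround p ⁻¹' (U \ K))).Nonempty) :
    U' \ g ⁻¹' K ⊆ σ '' (expAround p ⁻¹' (U \ K)) := by
  refine subset_of_isPreconnected_of_forall_nhds hpre hne fun y hy ↦ ?_
  have hyp : 0 < ‖g y - p‖ := norm_pos_iff.2 (sub_ne_zero.2 (ne_of_mem_of_not_mem hp hy.2).symm)
  have hopen : IsOpen (U' ∩ g ⁻¹' (Kᶜ ∩ ball (g y) ‖g y - p‖)) :=
    H.isOpen_inter_preimage (hK.isOpen_compl.inter isOpen_ball)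
  obtain ⟨δ, hδ, hball⟩ := Metric.isOpen_iff.1 hopen y ⟨hy.1, hy.2, mem_ball_self hyp⟩
  refine ⟨_, ball_mem_nhds y hδ, ?_⟩
  rintro ⟨_, hsδ, s, hs, rfl⟩
  obtain ⟨l, hl, hls, hexp⟩ := exists_rightInverse_expAround
    ((hlift s hs).2 ▸ (hball hsδ).2.2 : expAround p s ∈ ball (g y) ‖g y - p‖)
  have hlS : ∀ z ∈ ball y δ, l (g z) ∈ expAround p ⁻¹' (U \ K) := fun z hz ↦ by
    rw [mem_preimage, hexp _ (hball hz).2.2]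
    exact ⟨H.mapsTo (hball hz).1, (hball hz).2.1⟩
  have hgdiff : DifferentiableOn ℂ g (ball y δ) :=
    H.differentiableOn.mono fun z hz ↦ (hball hz).1
  have hderiv : deriv g (σ s) ≠ 0 := fun h ↦
    (hball hsδ).2.1 (hcrit (mem_image_of_mem g ⟨(hlift s hs).1, h⟩))
  have heq : EqOn id (fun z ↦ σ (l (g z))) (ball y δ) := by
    refine eqOn_of_comp_eqOn isOpen_ball (convex_ball y δ).isPreconnected differentiableOn_id
      (hσ.comp (hl.comp hgdiff fun z hz ↦ (hball hz).2.2) hlS) hsδ ?_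
      (H.analyticAt (hlift s hs).1) hderiv fun z hz ↦ ?_
    · rw [(hlift s hs).2, hls, id]
    · rw [(hlift _ (hlS z hz)).2, hexp _ (hball hz).2.2, id]
  exact fun z hz ↦ ⟨_, hlS z hz, (heq hz).symm⟩

lemma subset_image_of_disjoint_cover (hc : IsPreconnected U') (hN : IsOpen N)
    (hNc : IsPreconnected N) (hNU : N ⊆ U) (hu : IsOpen u) (hv : IsOpen v)
    (huv : U' ∩ g ⁻¹' N ⊆ u ∪ v) (hdisj : Disjoint (U' ∩ g ⁻¹' N) (u ∩ v))
    (hne : (U' ∩ g ⁻¹' N ∩ u).Nonempty) : N ⊆ g '' (U' ∩ g ⁻¹' N ∩ u) := by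
  have hopen : IsOpen (g '' (U' ∩ g ⁻¹' N ∩ u)) :=
    H.isOpen_image hc (inter_subset_left.trans inter_subset_left)
      ((H.isOpen_inter_preimage hN).inter hu)
  obtain ⟨x, hx⟩ := hne
  refine subset_of_isPreconnected_of_disjoint_frontier hNc (disjoint_left.2 fun y hy hfr ↦ ?_)
    ⟨g x, hx.1.2, x, hx, rfl⟩
  rw [hopen.frontier_eq] at hfr
  obtain ⟨r, hr, hrN⟩ := Metric.nhds_basis_closedBall.mem_iff.1 (hN.mem_nhds hy)
  have himage : IsClosed (g '' (U' ∩ g ⁻¹' closedBall y r ∩ vᶜ)) :=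
    (((H.properOn _ (hrN.trans hNU) (isCompact_closedBall y r)).inter_right
      hv.isClosed_compl).image_of_continuousOn (H.differentiableOn.continuousOn.mono
        (inter_subset_left.trans inter_subset_left))).isClosed
  have hy' : y ∈ closure (g '' (U' ∩ g ⁻¹' closedBall y r ∩ vᶜ)) := by
    refine mem_closure_iff_nhds.2 fun t ht ↦ ?_
    obtain ⟨_, ⟨hzt, hzr⟩, z, hz, rfl⟩ :=
      mem_closure_iff_nhds.1 hfr.1 _ (inter_mem ht (closedBall_mem_nhds y hr))
    exact ⟨g z, hzt, z, ⟨⟨hz.1.1, hzr⟩, fun hzv ↦ hdisj.notMem_of_mem_left hz.1 ⟨hz.2, hzv⟩⟩, rfl⟩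
  rw [himage.closure_eq] at hy'
  obtain ⟨z, ⟨hz, hzv⟩, rfl⟩ := hy'
  have hzN : z ∈ U' ∩ g ⁻¹' N := ⟨hz.1, hrN hz.2⟩
  exact hfr.2 ⟨z, ⟨hzN, (huv hzN).resolve_right hzv⟩, rfl⟩

end IsProperHolomorphic

namespace IsProperDiskMap

variable {g : ℂ → ℂ} {U' U K N : Set ℂ} (H : IsProperDiskMap g U' U)

include H

lemma isPreconnected_inter_preimage_diff (hK : IsCompact K) (hKc : IsConnected K)
    (hfill : filling K = K) (hXK : filledPostCrit g U' ⊆ K) (hN : IsOpen N)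
    (hNc : IsPreconnected N) (hKN : K ⊆ N) (hNU : N ⊆ U) :
    IsPreconnected (U' ∩ g ⁻¹' (N \ K)) := by
  obtain ⟨p, hp⟩ := hKc.nonempty
  have hKU := hKN.trans hNU
  have hcrit := image_critPts_subset_filledPostCrit.trans hXK
  obtain ⟨x, hx, hxK⟩ : (U' \ (U' ∩ g ⁻¹' K)).Nonempty := diff_nonempty_of_isOpen_of_isCompact
    H.isOpen_source H.isConnected_source.nonempty (H.properOn K hKU hK) inter_subset_left
  have hgxK : g x ∉ K := fun h ↦ hxK ⟨hx, h⟩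
  set S := expAround p ⁻¹' (U \ K)
  have hS : IsOpen S := (H.isOpen_target.sdiff hK.isClosed).preimage
    (differentiable_expAround p).continuous
  have hlog : expAround p (Complex.log (g x - p)) = g x := expAround_log fun h ↦ hgxK (h ▸ hp)
  have hlogS : Complex.log (g x - p) ∈ S := mem_preimage.2 (hlog.symm ▸ ⟨H.mapsTo hx, hgxK⟩)
  have : SimplyConnectedSpace S := (isFull_preimage_expAround_diff hKc.isPreconnected hp
    H.isFull_target).simplyConnectedSpace hS ⟨⟨_, hlogS⟩, isPreconnected_preimage_expAround_diff
      hK hfill hp H.isOpen_target H.isConnected_target.isPreconnected hKU⟩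
  obtain ⟨σ, hσ, hσx, hlift⟩ := H.exists_lift hS (differentiable_expAround p).differentiableOn
    (fun s hs ↦ ⟨hs.1, fun h ↦ hs.2 (hcrit h)⟩) hlogS hx hlog.symm
  have honto : U' \ g ⁻¹' K ⊆ σ '' S := H.diff_preimage_subset_image_lift hK.isClosed hp hcrit
    (H.isPreconnected_diff_preimage H.isFull_source H.isConnected_source.isPreconnected hK hKU
      hfill) hσ hlift ⟨x, ⟨hx, hgxK⟩, _, hlogS, hσx⟩
  rw [inter_preimage_diff_eq_image_lift hNU hlift honto]
  exact (isPreconnected_preimage_expAround_diff hK hfill hp hN hNc hKN).image σ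
    (hσ.continuousOn.mono fun s hs ↦ ⟨hNU hs.1, hs.2⟩)

/-- Every relatively clopen piece of `g⁻¹(N)` is mapped onto `N`, hence meets the preimage of
`N \ K` for a full continuum `K ⊆ N` around the postcritical set; but that preimage is connected. -/
lemma isConnected_inter_preimage (hN : IsOpen N) (hNc : IsConnected N) (hNf : IsFull N)
    (hXN : filledPostCrit g U' ⊆ N) (hNU : N ⊆ U) : IsConnected (U' ∩ g ⁻¹' N) := by
  obtain ⟨x, hx⟩ := H.postCrit_nonempty
  refine ⟨⟨x, H.filledPostCrit_subset_inter_preimage hXN (subset_filling _ hx)⟩, ?_⟩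
  obtain ⟨K, hKN, hK, hKc, hXK⟩ :=
    exists_isConnected_isCompact_superset hN hNc H.isCompact_filledPostCrit hXN
  have hfillN : filling K ⊆ N := hNf K hKN hK
  have hdiff := H.isPreconnected_inter_preimage_diff (isCompact_filling hK)
    (isConnected_filling hK hKc) (filling_filling hK.isBounded) (hXK.trans (subset_filling K)) hN
    hNc.isPreconnected hfillN hNU
  obtain ⟨z, hzN, hzK⟩ :=
    diff_nonempty_of_isOpen_of_isCompact hN hNc.nonempty (isCompact_filling hK) hfillN
  have hsub : U' ∩ g ⁻¹' (N \ filling K) ⊆ U' ∩ g ⁻¹' N := fun _ hx ↦ ⟨hx.1, hx.2.1⟩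
  intro u v hu hv huv hnu hnv
  by_contra hempty
  have hdisj : Disjoint (U' ∩ g ⁻¹' N) (u ∩ v) :=
    disjoint_iff_inter_eq_empty.2 (not_nonempty_iff_eq_empty.1 hempty)
  obtain ⟨a, ⟨ha, hau⟩, rfl⟩ := H.subset_image_of_disjoint_cover
    H.isConnected_source.isPreconnected hN hNc.isPreconnected hNU hu hv huv hdisj hnu hzN
  obtain ⟨b, ⟨hb, hbv⟩, hba⟩ := H.subset_image_of_disjoint_cover
    H.isConnected_source.isPreconnected hN hNc.isPreconnected hNU hv hu (by rwa [union_comm])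
    (by rwa [inter_comm v u]) hnv hzN
  obtain ⟨c, hc, hcuv⟩ := hdiff u v hu hv (hsub.trans huv) ⟨a, ⟨ha.1, hzN, hzK⟩, hau⟩
    ⟨b, ⟨hb.1, by rw [mem_preimage, hba]; exact ⟨hzN, hzK⟩⟩, hbv⟩
  exact hdisj.notMem_of_mem_left (hsub hc) hcuv

end IsProperDiskMap

/-! ### Filling in open sets -/

section OpenFilling

variable {X : Type*} [TopologicalSpace X] [Bornology X] {N K : Set X}

/-- The union of the fillings of the compact subsets of `N`. Unlike `filling N`, it is open when `N`
is open. -/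
def openFilling (N : Set X) : Set X := ⋃ K ∈ {K | K ⊆ N ∧ IsCompact K}, filling K

lemma filling_subset_openFilling (hK : IsCompact K) (hKN : K ⊆ N) : filling K ⊆ openFilling N :=
  subset_biUnion_of_mem (u := filling) ⟨hKN, hK⟩

lemma subset_openFilling (N : Set X) : N ⊆ openFilling N := fun z hz ↦
  filling_subset_openFilling isCompact_singleton (singleton_subset_iff.2 hz)
    (subset_filling {z} rfl)

lemma openFilling_subset_filling (hNK : N ⊆ K) : openFilling N ⊆ filling K :=
  iUnion₂_subset fun _ hL ↦ filling_mono (hL.1.trans hNK)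

lemma exists_isCompact_filling_mem_nhds [T2Space X] [LocallyCompactSpace X]
    [LocallyConnectedSpace X] (hN : IsOpen N) {x : X} (hx : x ∈ openFilling N) :
    ∃ K ⊆ N, IsCompact K ∧ filling K ∈ 𝓝 x := by
  obtain ⟨K, ⟨hKN, hK⟩, hxK⟩ := mem_iUnion₂.1 hx
  by_cases hxN : x ∈ K
  · obtain ⟨L, hL, hxL, hLN⟩ := exists_compact_subset hN (hKN hxN)
    exact ⟨L, hLN, hL, mem_of_superset (mem_interior_iff_mem_nhds.1 hxL) (subset_filling L)⟩
  · exact ⟨K, hKN, hK, mem_of_superset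
      ((isOpen_filling_diff hK.isClosed).mem_nhds ⟨hxK, hxN⟩) sdiff_subset⟩

lemma isOpen_openFilling [T2Space X] [LocallyCompactSpace X] [LocallyConnectedSpace X]
    (hN : IsOpen N) : IsOpen (openFilling N) := isOpen_iff_mem_nhds.2 fun _ hx ↦
  have ⟨_, hKN, hK, hxK⟩ := exists_isCompact_filling_mem_nhds hN hx
  mem_of_superset hxK (filling_subset_openFilling hK hKN)

end OpenFilling

section PlaneOpenFilling

variable {N : Set ℂ}

lemma isFull_openFilling (hN : IsOpen N) : IsFull (openFilling N) := by
  intro L hL hLc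
  obtain ⟨K, hKN, hK, hLK⟩ : ∃ K ⊆ N, IsCompact K ∧ L ⊆ filling K := by
    refine hLc.induction_on (p := fun S ↦ ∃ K ⊆ N, IsCompact K ∧ S ⊆ filling K)
      ⟨∅, empty_subset _, isCompact_empty, empty_subset _⟩ ?_ ?_ fun x hx ↦ ?_
    · rintro s t hst ⟨K, hKN, hK, htK⟩
      exact ⟨K, hKN, hK, hst.trans htK⟩
    · rintro s t ⟨K₁, hKN₁, hK₁, hs⟩ ⟨K₂, hKN₂, hK₂, ht⟩
      exact ⟨K₁ ∪ K₂, union_subset hKN₁ hKN₂, hK₁.union hK₂, union_subset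
        (hs.trans (filling_mono subset_union_left)) (ht.trans (filling_mono subset_union_right))⟩
    · obtain ⟨K, hKN, hK, hxK⟩ := exists_isCompact_filling_mem_nhds hN (hL hx)
      exact ⟨filling K, mem_nhdsWithin_of_mem_nhds hxK, K, hKN, hK, subset_rfl⟩
  exact (filling_mono hLK).trans ((filling_filling hK.isBounded).subset.trans
    (filling_subset_openFilling hK hKN))

lemma isConnected_openFilling (hN : IsOpen N) (hc : IsConnected N) :
    IsConnected (openFilling N) := by
  obtain ⟨x, hx⟩ := hc.nonempty
  refine ⟨⟨x, subset_openFilling N hx⟩, isPreconnected_of_forall x fun y hy ↦ ?_⟩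
  obtain ⟨K, ⟨hKN, hK⟩, hyK⟩ := mem_iUnion₂.1 hy
  obtain ⟨L, hLN, hL, hLc, hKL⟩ :=
    exists_isConnected_isCompact_superset hN hc (hK.insert x) (insert_subset hx hKN)
  exact ⟨filling L, filling_subset_openFilling hL hLN, subset_filling L (hKL (mem_insert x K)),
    filling_mono ((subset_insert x K).trans hKL) hyK, (isConnected_filling hL hLc).isPreconnected⟩

end PlaneOpenFilling

lemma isConnected_thickening {E : Type*} [SeminormedAddCommGroup E] [NormedSpace ℝ E] {K : Set E}
    (hK : IsConnected K) {δ : ℝ} (hδ : 0 < δ) : IsConnected (thickening δ K) := by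
  obtain ⟨x, hx⟩ := hK.nonempty
  have hsub := self_subset_thickening hδ K
  refine ⟨⟨x, hsub hx⟩, isPreconnected_of_forall x fun y hy ↦ ?_⟩
  obtain ⟨z, hz, hyz⟩ := mem_thickening_iff.1 hy
  exact ⟨K ∪ ball z δ, union_subset hsub (ball_subset_thickening hz δ), Or.inl hx, Or.inr hyz,
    hK.isPreconnected.union z hz (mem_ball_self hδ) (convex_ball z δ).isPreconnected⟩

lemma isPreconnected_frontier_of_filling_eq {K : Set ℂ} (hK : IsCompact K)
    (hKc : IsPreconnected K) (hfill : filling K = K) : IsPreconnected (frontier K) := by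
  rw [frontier_eq_closure_inter_closure, hK.isClosed.closure_eq]
  refine isPreconnected_inter_of_isClosed hK.isClosed isClosed_closure hKc ?_
    (compl_subset_iff_union.1 subset_closure)
  exact (hfill ▸ isConnected_compl_filling hK.isBounded).isPreconnected.closure

/-! ### Polynomial-like restrictions -/

/-- `g : U' → U` has a polynomial-like restriction to a neighborhood of its postcritical set. -/
def HasPolyLikeRestriction (g : ℂ → ℂ) (U' U : Set ℂ) : Prop :=
  ∃ V' V : Set ℂ, IsTopDisk V' ∧ IsTopDisk V ∧ V ⊆ U ∧ postCrit g U' ⊆ V' ∧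
    V' = U' ∩ g ⁻¹' V ∧ closure V' ⊆ V

namespace IsProperDiskMap

variable {g : ℂ → ℂ} {U' U : Set ℂ} (H : IsProperDiskMap g U' U)

include H

lemma isConnected_isFull_iteratedPullback {N : Set ℂ} (hN : IsOpen N) (hNc : IsConnected N)
    (hNf : IsFull N) (hXN : filledPostCrit g U' ⊆ N) (hNU : N ⊆ U) (n : ℕ) :
    IsConnected (iteratedPullback g U' n N) ∧ IsFull (iteratedPullback g U' n N) := by
  induction n with
  | zero => rw [iteratedPullback_zero]; exact ⟨hNc, hNf⟩
  | succ n ih =>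
    rw [iteratedPullback_succ]
    exact ⟨H.isConnected_inter_preimage (H.isOpen_iteratedPullback hN n) ih.1 ih.2
      (H.filledPostCrit_subset_iteratedPullback hXN n) (iteratedPullback_subset H.subset hNU),
      isFull_inter_preimage H.isFull_source H.differentiableOn ih.2⟩

lemma hasPolyLikeRestriction_of_inter_preimage_subset {W K : Set ℂ} (hW : IsOpen W)
    (hWc : IsConnected W) (hXW : filledPostCrit g U' ⊆ W) (hWK : W ⊆ K) (hK : IsCompact K)
    (hKU : K ⊆ U) (hgK : U' ∩ g ⁻¹' K ⊆ W) : HasPolyLikeRestriction g U' U := by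
  have hV := isOpen_openFilling hW
  have hVc := isConnected_openFilling hW hWc
  have hVf := isFull_openFilling hW
  have hVK : openFilling W ⊆ filling K := openFilling_subset_filling hWK
  have hVU : openFilling W ⊆ U := hVK.trans (H.isFull_target K hKU hK)
  have hXV : filledPostCrit g U' ⊆ openFilling W := hXW.trans (subset_openFilling W)
  have hV' := H.isOpen_inter_preimage hV
  have hV'c := H.isConnected_inter_preimage hV hVc hVf hXV hVU
  have hV'f := isFull_inter_preimage H.isFull_source H.differentiableOn hVf
  refine ⟨U' ∩ g ⁻¹' openFilling W, openFilling W,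
    ⟨hV', hV'c, hV'f.simplyConnectedSpace hV' hV'c⟩, ⟨hV, hVc, hVf.simplyConnectedSpace hV hVc⟩,
    hVU, (subset_filling _).trans (H.filledPostCrit_subset_inter_preimage hXV), rfl, ?_⟩
  have hgKc := H.properOn K hKU hK
  calc closure (U' ∩ g ⁻¹' openFilling W)
    _ ⊆ filling (U' ∩ g ⁻¹' K) := closure_minimal
        ((inter_subset_inter_right U' (preimage_mono hVK)).trans
          (H.inter_preimage_filling_subset H.isFull_target hK hKU))
        (isCompact_filling hgKc).isClosed
    _ ⊆ openFilling W := filling_subset_openFilling hgKc hgK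

/-- The union of the pullbacks `g⁻ʲ(W j)`, `j < n`, is compactly mapped into itself by `g⁻¹`. -/
lemma hasPolyLikeRestriction_of_chain {W K : ℕ → Set ℂ} {n : ℕ} (hn : 0 < n)
    (hW : ∀ j, IsOpen (W j)) (hWc : ∀ j, IsConnected (W j)) (hWf : ∀ j, IsFull (W j))
    (hXW : ∀ j, filledPostCrit g U' ⊆ W j) (hWK : ∀ j, W j ⊆ K j) (hK : ∀ j, IsCompact (K j))
    (hKU : ∀ j < n, K j ⊆ U) (hKW : ∀ j < n, K j ⊆ W (j + 1))
    (hnest : iteratedPullback g U' n (W n) ⊆ W 0) : HasPolyLikeRestriction g U' U := by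
  have hX := fun j ↦ H.filledPostCrit_subset_iteratedPullback (hXW j) j
  have hsub : ∀ j < n,
      iteratedPullback g U' j (W j) ⊆ ⋃ i ∈ Iio n, iteratedPullback g U' i (W i) := fun j hj ↦
    subset_biUnion_of_mem (u := fun i ↦ iteratedPullback g U' i (W i)) hj
  refine H.hasPolyLikeRestriction_of_inter_preimage_subset
    (W := ⋃ j ∈ Iio n, iteratedPullback g U' j (W j))
    (K := ⋃ j ∈ Iio n, iteratedPullback g U' j (K j))
    (isOpen_biUnion fun j _ ↦ H.isOpen_iteratedPullback (hW j) j) ?_ ((hX 0).trans (hsub 0 hn))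
    (iUnion₂_mono fun j _ ↦ iteratedPullback_mono (hWK j)) ((finite_Iio n).isCompact_biUnion
      fun j hj ↦ H.isCompact_iteratedPullback H.subset (hK j) (hKU j hj) j)
    (iUnion₂_subset fun j hj ↦ iteratedPullback_subset H.subset (hKU j hj)) ?_
  · obtain ⟨x, hx⟩ := H.postCrit_nonempty
    have hxX := subset_filling _ hx
    refine ⟨⟨x, hsub 0 hn (hX 0 hxX)⟩, isPreconnected_of_forall x fun y hy ↦ ?_⟩
    obtain ⟨j, hj, hyj⟩ := mem_iUnion₂.1 hy
    exact ⟨_, hsub j hj, hX j hxX, hyj, (H.isConnected_isFull_iteratedPullback (hW j) (hWc j)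
      (hWf j) (hXW j) ((hWK j).trans (hKU j hj)) j).1.isPreconnected⟩
  · rintro z ⟨hz, hgz⟩
    obtain ⟨j, hj, hzj⟩ := mem_iUnion₂.1 hgz
    have hsucc : z ∈ iteratedPullback g U' (j + 1) (W (j + 1)) := by
      rw [iteratedPullback_succ]
      exact ⟨hz, iteratedPullback_mono (hKW j hj) hzj⟩
    rcases (Nat.succ_le_of_lt hj).lt_or_eq with hlt | rfl
    · exact hsub (j + 1) hlt hsucc
    · exact hsub 0 hn (iteratedPullback_zero.symm.subset (hnest hsucc))

lemma hasPolyLikeRestriction_of_iteratedPullback_thickening_subset {K : Set ℂ} (hK : IsCompact K)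
    (hKc : IsConnected K) (hXK : filledPostCrit g U' ⊆ K) {ε : ℝ} (hε : 0 < ε)
    (hεU : cthickening ε K ⊆ U) {n : ℕ} (hn : 0 < n)
    (hnest : iteratedPullback g U' n (openFilling (thickening ε K)) ⊆ K) :
    HasPolyLikeRestriction g U' U := by
  set a : ℕ → ℝ := fun j ↦ ε * ((j + 1 : ℝ) / (n + 1))
  have ha : ∀ j, 0 < a j := fun j ↦ by positivity
  have hmono : StrictMono a := fun i j hij ↦ by dsimp only [a]; gcongr
  have han : a n = ε := by dsimp only [a]; rw [div_self (by positivity), mul_one]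
  have hKW : ∀ j, K ⊆ openFilling (thickening (a j) K) := fun j ↦
    (self_subset_thickening (ha j) K).trans (subset_openFilling _)
  refine H.hasPolyLikeRestriction_of_chain (W := fun j ↦ openFilling (thickening (a j) K))
    (K := fun j ↦ filling (cthickening (a j) K)) hn
    (fun j ↦ isOpen_openFilling isOpen_thickening)
    (fun j ↦ isConnected_openFilling isOpen_thickening (isConnected_thickening hKc (ha j)))
    (fun j ↦ isFull_openFilling isOpen_thickening) (fun j ↦ hXK.trans (hKW j))
    (fun j ↦ openFilling_subset_filling (thickening_subset_cthickening _ _))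
    (fun j ↦ isCompact_filling hK.cthickening) (fun j hj ↦ ?_) (fun j _ ↦ ?_) ?_
  · exact H.isFull_target _ ((cthickening_mono (han ▸ (hmono hj).le) K).trans hεU) hK.cthickening
  · exact filling_subset_openFilling hK.cthickening
      (cthickening_subset_thickening' (ha _) (hmono j.lt_succ_self) K)
  · rw [han]
    exact hnest.trans (hKW 0)

lemma eventually_iteratedPullback_subset {K V : Set ℂ} (hK : IsCompact K)
    (hKc : IsPreconnected K) (hfill : filling K = K) (hKU : K ⊆ U) (hKU' : ¬ K ⊆ U')
    (hXK : filledPostCrit g U' ⊆ interior K)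
    (hKR : Disjoint (frontier K) (closure (repellingPts g U'))) (hV : IsOpen V)
    (hVc : IsConnected V) (hVf : IsFull V) (hXV : filledPostCrit g U' ⊆ V)
    (hclV : IsCompact (closure V)) (hVU : closure V ⊆ U) :
    ∀ᶠ n in atTop, iteratedPullback g U' n V ⊆ K := by
  have hfr : IsCompact (frontier K) :=
    hK.of_isClosed_subset isClosed_frontier hK.isClosed.frontier_subset
  have hlim := H.eventually_disjoint_iteratedPullback (Γ := frontier V)
    (hclV.of_isClosed_subset isClosed_frontier frontier_subset_closure) hfr
    (fun z hz ↦ ⟨hVU hz.1, fun h ↦ hz.2 (hV.interior_eq.symm ▸ hXV h)⟩)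
    (fun z hz ↦ ⟨hKU (hK.isClosed.frontier_subset hz), fun h ↦ hz.2 (hXK h)⟩) hKR
  filter_upwards [hlim, eventually_ge_atTop 1] with n hn hn1
  have hdisj : Disjoint (frontier K) (frontier (iteratedPullback g U' n V)) :=
    hn.mono_right (H.frontier_iteratedPullback_subset H.subset hclV hVU n)
  obtain ⟨x, hx⟩ := H.postCrit_nonempty
  have hxX : x ∈ filledPostCrit g U' := subset_filling _ hx
  refine subset_of_isPreconnected_of_disjoint_frontier (H.isConnected_isFull_iteratedPullback hV
    hVc hVf hXV (subset_closure.trans hVU) n).1.isPreconnected (disjoint_left.2 fun y hy hyK ↦ ?_)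
    ⟨x, H.filledPostCrit_subset_iteratedPullback hXV n hxX, interior_subset (hXK hxX)⟩
  have hsub : frontier K ⊆ iteratedPullback g U' n V :=
    subset_of_isPreconnected_of_disjoint_frontier
      (isPreconnected_frontier_of_filling_eq hK hKc hfill) hdisj ⟨y, hyK, hy⟩
  exact hKU' ((subset_filling_of_frontier_subset hK.isBounded subset_rfl).trans
    (H.isFull_source _ (fun z hz ↦ (hsub hz).1 0 hn1) hfr))

lemma hasPolyLikeRestriction_of_disjoint_frontier {K : Set ℂ} (hK : IsCompact K)
    (hKc : IsConnected K) (hfill : filling K = K) (hKU : K ⊆ U) (hKU' : ¬ K ⊆ U')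
    (hXK : filledPostCrit g U' ⊆ interior K)
    (hKR : Disjoint (frontier K) (closure (repellingPts g U'))) :
    HasPolyLikeRestriction g U' U := by
  obtain ⟨ε, hε, hεU⟩ := hK.exists_cthickening_subset_open H.isOpen_target hKU
  have hXK' := hXK.trans interior_subset
  have hXV : filledPostCrit g U' ⊆ openFilling (thickening ε K) :=
    hXK'.trans ((self_subset_thickening hε K).trans (subset_openFilling _))
  have hfillc := isCompact_filling (hK.cthickening (r := ε))
  have hclosure : closure (openFilling (thickening ε K)) ⊆ filling (cthickening ε K) :=
    closure_minimal (openFilling_subset_filling (thickening_subset_cthickening ε K))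
      hfillc.isClosed
  obtain ⟨n, hn, hn0⟩ := ((H.eventually_iteratedPullback_subset hK hKc.isPreconnected hfill hKU
    hKU' hXK hKR (isOpen_openFilling isOpen_thickening)
    (isConnected_openFilling isOpen_thickening (isConnected_thickening hKc hε))
    (isFull_openFilling isOpen_thickening) hXV (hfillc.of_isClosed_subset isClosed_closure hclosure)
    (hclosure.trans (H.isFull_target _ hεU hK.cthickening))).and (eventually_gt_atTop 0)).exists
  exact H.hasPolyLikeRestriction_of_iteratedPullback_thickening_subset hK hKc hXK' hε hεU hn0 hn

end IsProperDiskMap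

/-! ### Continua reaching the frontier -/

/-- `R` contains a nontrivial continuum which meets both `O` and the frontier of `O`. -/
def ContainsContinuumToFrontier {X : Type*} [TopologicalSpace X] (R O : Set X) : Prop :=
  ∃ C ⊆ R, IsCompact C ∧ IsConnected C ∧ C.Nontrivial ∧ (C ∩ O).Nonempty ∧
    (C ∩ frontier O).Nonempty

lemma containsContinuumToFrontier_of_mem_connectedComponent {X : Type*} [TopologicalSpace X]
    {R O : Set X} (hR : IsCompact R) {a b : R} (ha : a.1 ∈ O) (hb : b.1 ∉ O)
    (hab : b ∈ connectedComponent a) : ContainsContinuumToFrontier R O := by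
  have := isCompact_iff_compactSpace.1 hR
  have hC : IsConnected (Subtype.val '' connectedComponent a) :=
    isConnected_connectedComponent.image _ continuous_subtype_val.continuousOn
  have haC : a.1 ∈ Subtype.val '' connectedComponent a := ⟨a, mem_connectedComponent, rfl⟩
  have hbC : b.1 ∈ Subtype.val '' connectedComponent a := ⟨b, hab, rfl⟩
  refine ⟨_, Subtype.coe_image_subset R _,
    isClosed_connectedComponent.isCompact.image continuous_subtype_val, hC,
    ⟨a, haC, b, hbC, fun h ↦ hb (h ▸ ha)⟩, ⟨a, haC, ha⟩, ?_⟩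
  rw [← not_disjoint_iff_nonempty_inter]
  exact fun hd ↦ hb
    (subset_of_isPreconnected_of_disjoint_frontier hC.isPreconnected hd ⟨a, haC, ha⟩ hbC)

lemma exists_isCompact_splitting_of_not_containsContinuumToFrontier {X : Type*} [TopologicalSpace X]
    [T2Space X] {R A O : Set X} (hR : IsCompact R) (hA : IsClosed A) (hO : IsOpen O) (hAO : A ⊆ O)
    (hno : ¬ ContainsContinuumToFrontier R O) :
    ∃ F G : Set X, IsCompact F ∧ IsCompact G ∧ F ∪ G = R ∧ F ⊆ O ∧ Disjoint F G ∧
      Disjoint A G := by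
  have := isCompact_iff_compactSpace.1 hR
  obtain ⟨F, hF, hAF, hOF⟩ := exists_isClopen_separating (X := R)
    (hA.preimage continuous_subtype_val) (hO.isClosed_compl.preimage continuous_subtype_val)
    fun a ha b hb hab ↦
      hno (containsContinuumToFrontier_of_mem_connectedComponent hR (hAO ha) hb hab)
  refine ⟨Subtype.val '' F, Subtype.val '' Fᶜ,
    hF.isClosed.isCompact.image continuous_subtype_val,
    hF.compl.isClosed.isCompact.image continuous_subtype_val, ?_, ?_,
    (disjoint_image_iff Subtype.val_injective).2 disjoint_compl_right, ?_⟩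
  · rw [← image_union, union_compl_self, image_univ, Subtype.range_val]
  · rintro _ ⟨x, hx, rfl⟩
    exact not_not.1 fun h ↦ disjoint_left.1 hOF h hx
  · rw [disjoint_right]
    rintro _ ⟨x, hx, rfl⟩ hxA
    exact hx (hAF hxA)

lemma exists_isOpen_disjoint_frontier_of_not_containsContinuumToFrontier {X : Type*}
    [TopologicalSpace X] [T2Space X] [LocallyCompactSpace X] {E U P : Set X} (hE : IsCompact E)
    (hU : IsOpen U) (hEU : E ⊆ U)
    (hno : ¬ ContainsContinuumToFrontier (closure ((fun x : X ↦ (x : OnePoint X)) '' P))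
      ((fun x : X ↦ (x : OnePoint X)) '' U)) :
    ∃ M, IsOpen M ∧ E ⊆ M ∧ IsCompact (closure M) ∧ closure M ⊆ U ∧
      Disjoint (frontier M) (closure P) := by
  have hι : IsOpenEmbedding ((↑) : X → OnePoint X) := OnePoint.isOpenEmbedding_coe
  obtain ⟨F, G, hF, hG, hFG, hFU, hdFG, hdEG⟩ :=
    exists_isCompact_splitting_of_not_containsContinuumToFrontier isClosed_closure.isCompact
      (hE.image hι.continuous).isClosed (hι.isOpenMap U hU) (image_mono hEU) hno
  have hFc : IsCompact ((↑) ⁻¹' F : Set X) :=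
    hι.isInducing.isCompact_preimage_iff (hFU.trans (image_subset_range _ _)) |>.2 hF
  have hsub : (↑) ⁻¹' F ∪ E ⊆ U ∩ ((↑) ⁻¹' G)ᶜ := by
    refine union_subset (fun x hx ↦ ⟨?_, disjoint_left.1 hdFG hx⟩)
      fun x hx ↦ ⟨hEU hx, disjoint_left.1 hdEG (mem_image_of_mem _ hx)⟩
    exact (hι.injective.mem_set_image).1 (hFU hx)
  obtain ⟨M, hM, hYM, hMO, hMc⟩ := exists_open_between_and_isCompact_closure (hFc.union hE)
    (hU.inter (hG.isClosed.preimage hι.continuous).isOpen_compl) hsub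
  refine ⟨M, hM, subset_union_right.trans hYM, hMc, hMO.trans inter_subset_left,
    disjoint_left.2 fun x hx hxP ↦ ?_⟩
  have hxR : (x : OnePoint X) ∈ F ∪ G :=
    hFG ▸ image_closure_subset_closure_image hι.continuous (mem_image_of_mem _ hxP)
  rcases hxR with hxF | hxG
  · exact hx.2 (hM.interior_eq.symm ▸ hYM (Or.inl hxF))
  · exact (hMO hx.1).2 hxG

lemma IsProperDiskMap.exists_isCompact_disjoint_frontier {g : ℂ → ℂ} {U' U : Set ℂ}
    (H : IsProperDiskMap g U' U)
    (hno : ¬ ContainsContinuumToFrontier (sphereRepClosure g U')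
      ((fun z : ℂ ↦ (z : OnePoint ℂ)) '' U)) :
    ∃ K, IsCompact K ∧ IsConnected K ∧ filling K = K ∧ K ⊆ U ∧ ¬ K ⊆ U' ∧
      filledPostCrit g U' ⊆ interior K ∧ Disjoint (frontier K) (closure (repellingPts g U')) := by
  obtain ⟨q, hqU, hqU'⟩ := H.diff_nonempty
  obtain ⟨E, hEU, hE, hEc, hXE⟩ := exists_isConnected_isCompact_superset H.isOpen_target
    H.isConnected_target (H.isCompact_filledPostCrit.insert q)
    (insert_subset hqU (H.filledPostCrit_subset_source.trans H.subset))
  obtain ⟨M, hM, hEM, hMc, hMU, hMR⟩ :=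
    exists_isOpen_disjoint_frontier_of_not_containsContinuumToFrontier hE H.isOpen_target hEU hno
  have hqE : q ∈ E := hXE (mem_insert q _)
  have hE₁ : E ⊆ connectedComponentIn M q :=
    hEc.isPreconnected.subset_connectedComponentIn hqE hEM
  have hcl : closure (connectedComponentIn M q) ⊆ closure M :=
    closure_mono (connectedComponentIn_subset M q)
  have hc : IsCompact (closure (connectedComponentIn M q)) :=
    hMc.of_isClosed_subset isClosed_closure hcl
  have hint : connectedComponentIn M q ⊆ interior (filling (closure (connectedComponentIn M q))) :=
    interior_maximal (subset_closure.trans (subset_filling _)) hM.connectedComponentIn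
  have hfr : frontier (connectedComponentIn M q) ⊆ frontier M := fun x hx ↦
    ⟨hcl hx.1, hM.interior_eq.symm ▸ frontier_connectedComponentIn_subset hM q hx⟩
  refine ⟨filling (closure (connectedComponentIn M q)), isCompact_filling hc,
    isConnected_filling hc (isConnected_connectedComponentIn_iff.2 (hEM hqE)).closure,
    filling_filling hc.isBounded, H.isFull_target _ (hcl.trans hMU) hc,
    fun h ↦ hqU' (h (interior_subset (hint (hE₁ hqE)))),
    (subset_insert q _).trans (hXE.trans (hE₁.trans hint)), hMR.mono_left ?_⟩
  exact (frontier_filling_subset hc).trans (frontier_closure_subset.trans hfr)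

theorem repelling_continuum_of_no_polyLike_general {g : ℂ → ℂ} {U' U : Set ℂ}
    (H : IsProperDiskMap g U' U) (hno : ¬ HasPolyLikeRestriction g U' U) :
    ContainsContinuumToFrontier (sphereRepClosure g U')
      ((fun z : ℂ ↦ (z : OnePoint ℂ)) '' U) := by
  by_contra hcon
  obtain ⟨K, hK, hKc, hfill, hKU, hKU', hXK, hKR⟩ := H.exists_isCompact_disjoint_frontier hcon
  exact hno (H.hasPolyLikeRestriction_of_disjoint_frontier hK hKc hfill hKU hKU' hXK hKR)

lemma PLSetting.not_injOn {g : ℂ → ℂ} {U' U : Set ℂ} {d : ℕ} (H : PLSetting g U' U d) :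
    ¬ InjOn g U' := by
  obtain ⟨q, hqU, hqU'⟩ : (U \ U').Nonempty :=
    sdiff_nonempty.2 fun h ↦ H.ne (H.subset.antisymm h)
  have hqc : q ∉ g '' critPts g U' := by
    rintro ⟨c, hc, rfl⟩
    exact hqU' (H.crit_orbit c hc 1)
  have hcard := H.deg.2 q hqU hqc
  have htwo : 1 < (U' ∩ g ⁻¹' {q}).ncard := by rw [hcard]; exact H.two_le_d
  obtain ⟨x, y, hx, hy, hxy⟩ :=
    (one_lt_ncard_iff (finite_of_ncard_pos (zero_lt_one.trans htwo))).1 htwo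
  exact fun hinj ↦ hxy (hinj hx.1 hy.1 (hx.2.trans hy.2.symm))

lemma PLSetting.isProperDiskMap {g : ℂ → ℂ} {U' U : Set ℂ} {d : ℕ} (H : PLSetting g U' U d) :
    IsProperDiskMap g U' U where
  isOpen_source := H.disk'.1
  isOpen_target := H.disk.1
  isConnected_source := H.disk'.2.1
  isSimplyConnected_source := H.disk'.2.2
  isConnected_target := H.disk.2.1
  isSimplyConnected_target := H.disk.2.2
  differentiableOn := H.holo
  mapsTo := H.mapsTo
  properOn := H.proper
  subset := H.subset
  ne := H.ne
  not_injOn := H.not_injOn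
  isCompact_postCrit := H.postCrit_compact
  postCrit_subset := H.postCrit_subset

/-- **Corollary.** If `g : U' → U` admits no polynomial-like restriction to a neighborhood
of its postcritical set (no topological disks `V', V ⊆ U` with `P_g ⊆ V'`, `V' = g⁻¹(V)`,
`closure V' ⊆ V`), then `R_g` contains a nontrivial continuum which meets the range `U` as
well as its boundary `∂U` (taken in the Riemann sphere). -/
theorem repelling_continuum_of_no_polyLike {g : ℂ → ℂ} {U' U : Set ℂ} {d : ℕ}
    (H : PLSetting g U' U d)
    (hno : ¬ ∃ V' V : Set ℂ, IsTopDisk V' ∧ IsTopDisk V ∧ V ⊆ U ∧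
      postCrit g U' ⊆ V' ∧ V' = U' ∩ g ⁻¹' V ∧ closure V' ⊆ V) :
    ∃ C : Set (OnePoint ℂ), C ⊆ sphereRepClosure g U' ∧ IsCompact C ∧ IsConnected C ∧
      C.Nontrivial ∧
      (C ∩ (fun z : ℂ => (z : OnePoint ℂ)) '' U).Nonempty ∧
      (C ∩ frontier ((fun z : ℂ => (z : OnePoint ℂ)) '' U)).Nonempty :=
  repelling_continuum_of_no_polyLike_general H.isProperDiskMap hno
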